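/- arXiv:1910.12595 — 6 statements merged into one kernel-verified Lean document; each statement's English description precedes it below -/
import Mathlib

section
/- Let α > 0, let s > 0, and let f : [0,∞) → ℝ be continuous with |f(t)| ≤ C e^(σ t) for some constants C ≥ 0 and 0 ≤ σ < s. Then the Laplace transform of the Riemann–Liouville fractional integral of f satisfies ∫₀^∞ e^(-s t) I^α f(t) dt = s^(-α) ∫₀^∞ e^(-s t) f(t) dt. -/
open MeasureTheory

/-- Riemann–Liouville fractional integral of order `α` with base point `0`:
`I^α f(t) = (1/Γ(α)) ∫₀^t (t-τ)^(α-1) f(τ) dτ`. -/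
noncomputable def rlIntegral (α : ℝ) (f : ℝ → ℝ) (t : ℝ) : ℝ :=
  (1 / Real.Gamma α) * ∫ τ in (0:ℝ)..t, (t - τ) ^ (α - 1) * f τ

/-!
The Riemann–Liouville integral of `f` is the one-sided convolution of `f` with the kernel
`k(t) = t^(α-1) / Γ(α)`. Since `e^(-st) = e^(-sx) e^(-s(t-x))`, Fubini's theorem turns the Laplace
transform of a one-sided convolution into a product, and Euler's integral for `Γ` says that the
Laplace transform of `k` is `s^(-α)`.
-/

section LaplaceTransform

variable {E E' F : Type*} [NormedAddCommGroup E] [NormedSpace ℝ E] [NormedAddCommGroup E']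
  [NormedSpace ℝ E'] [NormedAddCommGroup F] [NormedSpace ℝ F]

/-- Absolute convergence of the one-sided Laplace transform of `f` at the real point `s`. -/
def LaplaceConvergent (f : ℝ → E) (s : ℝ) : Prop :=
  IntegrableOn (fun t => Real.exp (-s * t) • f t) (Set.Ioi 0)

/-- The one-sided Laplace transform of `f` at the real point `s`. It has the junk value `0` unless
`LaplaceConvergent f s`. -/
noncomputable def laplaceTransform (f : ℝ → E) (s : ℝ) : E :=
  ∫ t in Set.Ioi (0 : ℝ), Real.exp (-s * t) • f t

lemma laplaceConvergent_of_norm_le_exp {f : ℝ → E} {C σ s : ℝ}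
    (hf : AEStronglyMeasurable f (volume.restrict (Set.Ioi 0)))
    (hbound : ∀ t > 0, ‖f t‖ ≤ C * Real.exp (σ * t)) (hσs : σ < s) :
    LaplaceConvergent f s := by
  have h_exp : Continuous fun t : ℝ => Real.exp (-s * t) := by fun_prop
  have h_majorant : IntegrableOn (fun t => C * Real.exp (-(s - σ) * t)) (Set.Ioi 0) :=
    (exp_neg_integrableOn_Ioi 0 (sub_pos.2 hσs)).const_mul C
  refine h_majorant.mono' (h_exp.aestronglyMeasurable.smul hf)
    (ae_restrict_of_forall_mem measurableSet_Ioi fun t ht => ?_)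
  calc ‖Real.exp (-s * t) • f t‖ = Real.exp (-s * t) * ‖f t‖ := by
        rw [norm_smul, Real.norm_eq_abs, Real.abs_exp]
    _ ≤ Real.exp (-s * t) * (C * Real.exp (σ * t)) := by
        gcongr
        exact hbound t ht
    _ = C * Real.exp (-(s - σ) * t) := by
        rw [mul_left_comm, ← Real.exp_add]
        ring_nf

lemma posConvolution_exp_smul (f : ℝ → E) (g : ℝ → E') (L : E →L[ℝ] E' →L[ℝ] F)
    (c : ℝ) (ν : Measure ℝ) :
    posConvolution (fun t => Real.exp (c * t) • f t) (fun t => Real.exp (c * t) • g t) L ν =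
      fun t => Real.exp (c * t) • posConvolution f g L ν t := by
  have exp_split (t x : ℝ) : Real.exp (c * (t - x)) * Real.exp (c * x) = Real.exp (c * t) := by
    rw [← Real.exp_add]
    ring_nf
  funext t
  simp only [posConvolution, map_smul, smul_apply, smul_smul, exp_split,
    intervalIntegral.integral_smul, Set.indicator_smul_apply]

theorem laplaceTransform_posConvolution [CompleteSpace E] [CompleteSpace E'] [CompleteSpace F]
    {f : ℝ → E} {g : ℝ → E'} {s : ℝ} (hf : LaplaceConvergent f s) (hg : LaplaceConvergent g s)
    (L : E →L[ℝ] E' →L[ℝ] F) :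
    laplaceTransform (posConvolution f g L) s =
      L (laplaceTransform f s) (laplaceTransform g s) :=
  calc laplaceTransform (posConvolution f g L) s
      = ∫ t in Set.Ioi (0 : ℝ), posConvolution (fun t => Real.exp (-s * t) • f t)
          (fun t => Real.exp (-s * t) • g t) L volume t := by
        rw [posConvolution_exp_smul, laplaceTransform]
    _ = ∫ t in Set.Ioi (0 : ℝ), ∫ x in (0 : ℝ)..t, L (Real.exp (-s * x) • f x)
          (Real.exp (-s * (t - x)) • g (t - x)) :=
        setIntegral_congr_fun measurableSet_Ioi fun t ht => Set.indicator_of_mem ht _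
    _ = L (laplaceTransform f s) (laplaceTransform g s) := integral_posConvolution hf hg L

end LaplaceTransform

section RiemannLiouville

variable {α s : ℝ}

/-- The Riemann–Liouville kernel `t^(α-1) / Γ(α)`, one-sided convolution with which is the
fractional integral of order `α`. Only its values at `t > 0` are meaningful. -/
noncomputable def rlKernel (α t : ℝ) : ℝ :=
  t ^ (α - 1) / Real.Gamma α

lemma rlIntegral_eq_posConvolution (α : ℝ) (f : ℝ → ℝ) {t : ℝ} (ht : 0 < t) :
    rlIntegral α f t = posConvolution f (rlKernel α) (ContinuousLinearMap.mul ℝ ℝ) volume t := by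
  rw [posConvolution, Set.indicator_of_mem (Set.mem_Ioi.2 ht), rlIntegral,
    ← intervalIntegral.integral_const_mul]
  simp only [rlKernel, ContinuousLinearMap.mul_apply']
  congr! 2
  ring

lemma laplaceTransform_rlKernel (hα : 0 < α) (hs : 0 < s) :
    laplaceTransform (rlKernel α) s = s ^ (-α) := by
  have hΓ : Real.Gamma α ≠ 0 := (Real.Gamma_pos_of_pos hα).ne'
  calc laplaceTransform (rlKernel α) s
      = (∫ t in Set.Ioi (0 : ℝ), t ^ (α - 1) * Real.exp (-(s * t))) / Real.Gamma α := by
        rw [laplaceTransform, ← integral_div]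
        simp only [rlKernel, smul_eq_mul, neg_mul, mul_comm (Real.exp _), div_mul_eq_mul_div]
    _ = (1 / s) ^ α * Real.Gamma α / Real.Gamma α := by
        rw [Real.integral_rpow_mul_exp_neg_mul_Ioi hα hs]
    _ = s ^ (-α) := by
        rw [mul_div_cancel_right₀ _ hΓ, one_div, Real.inv_rpow hs.le, Real.rpow_neg hs.le]

lemma laplaceConvergent_rlKernel (hα : 0 < α) (hs : 0 < s) : LaplaceConvergent (rlKernel α) s :=
  .of_integral_ne_zero <| (laplaceTransform_rlKernel hα hs).trans_ne (Real.rpow_pos_of_pos hs _).ne'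

theorem laplace_rl_integral_general (hα : 0 < α) (hs : 0 < s) {f : ℝ → ℝ}
    (hf : LaplaceConvergent f s) :
    laplaceTransform (rlIntegral α f) s = s ^ (-α) * laplaceTransform f s :=
  calc laplaceTransform (rlIntegral α f) s
      = laplaceTransform (posConvolution f (rlKernel α) (ContinuousLinearMap.mul ℝ ℝ)) s :=
        setIntegral_congr_fun measurableSet_Ioi fun t ht =>
          congrArg (Real.exp (-s * t) • ·) (rlIntegral_eq_posConvolution α f ht)
    _ = laplaceTransform f s * laplaceTransform (rlKernel α) s :=
        laplaceTransform_posConvolution hf (laplaceConvergent_rlKernel hα hs) _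
    _ = s ^ (-α) * laplaceTransform f s := by
        rw [laplaceTransform_rlKernel hα hs, mul_comm]

end RiemannLiouville

/-- Laplace transform rule for the Riemann–Liouville fractional integral:
for `α > 0`, `s > 0` and `f` continuous of exponential order `σ < s`,
`∫₀^∞ e^(-st) I^α f(t) dt = s^(-α) ∫₀^∞ e^(-st) f(t) dt`. -/
theorem laplace_rl_integral (α s : ℝ) (hα : 0 < α) (hs : 0 < s)
    (f : ℝ → ℝ) (hf : ContinuousOn f (Set.Ici 0))
    (C σ : ℝ) (hC : 0 ≤ C) (hσ : 0 ≤ σ) (hσs : σ < s)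
    (hbound : ∀ t ≥ (0:ℝ), |f t| ≤ C * Real.exp (σ * t)) :
    ∫ t in Set.Ioi (0:ℝ), Real.exp (-s * t) * rlIntegral α f t
      = s ^ (-α) * ∫ t in Set.Ioi (0:ℝ), Real.exp (-s * t) * f t :=
  laplace_rl_integral_general hα hs <| laplaceConvergent_of_norm_le_exp
    ((hf.mono Set.Ioi_subset_Ici_self).aestronglyMeasurable measurableSet_Ioi)
    (fun t ht => hbound t (le_of_lt ht)) hσs
end

section
/- For every real z, the M-Wright function of order ν = 1/2 reduces to a Gaussian: M_{1/2}(z) = e^(−z²/4) / √π. -/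
/-- The M-Wright function of order `ν ∈ [0,1)`:
`M_ν(z) = Σ_{n=0}^∞ (-z)ⁿ / (n! Γ(-νn + 1 - ν))`. Terms where `Γ` is evaluated at a
nonpositive integer are zero, since `Real.Gamma` vanishes at its poles. -/
noncomputable def mWright (ν z : ℝ) : ℝ :=
  ∑' n : ℕ, (-z) ^ n / (n.factorial * Real.Gamma (-(ν * n) + 1 - ν))

/-!
At `ν = 1/2` the Gamma factor of index `n` is `Γ((1 - n)/2)`. For odd `n` this is a pole, so the
term vanishes. For `n = 2k`, multiplying Legendre's duplication formula by Euler's reflection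
formula gives `(2k)! Γ(1/2 - k) = √π (-4)^k k!`, so the even terms are those of the exponential
series of `-z²/4`, divided by `√π`.
-/

section

open scoped Real Nat

/-- For `s ∈ ℤ` both sides are `0`: `Real.Gamma` vanishes at its poles, and `x / 0 = 0`. -/
theorem gamma_two_mul_mul_gamma_one_sub (s : ℝ) :
    Real.Gamma (2 * s) * Real.Gamma (1 - s) =
      2 ^ (2 * s - 1) * √π * Real.Gamma (s + 1 / 2) / Real.sin (π * s) := by
  have two_rpow_cancel : (2 : ℝ) ^ (2 * s - 1) * 2 ^ (1 - 2 * s) = 1 := by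
    rw [← Real.rpow_add two_pos, sub_add_sub_cancel, sub_self, Real.rpow_zero]
  have sqrt_pi_sq : √π * √π = π := Real.mul_self_sqrt Real.pi_nonneg
  have sqrt_pi_ne_zero : √π ≠ 0 := by positivity
  apply mul_right_cancel₀ sqrt_pi_ne_zero
  calc Real.Gamma (2 * s) * Real.Gamma (1 - s) * √π
      = 2 ^ (2 * s - 1) * (Real.Gamma (2 * s) * 2 ^ (1 - 2 * s) * √π) * Real.Gamma (1 - s) := by
        linear_combination
          -(Real.Gamma (2 * s) * Real.Gamma (1 - s) * √π) * two_rpow_cancel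
    _ = 2 ^ (2 * s - 1) * Real.Gamma (s + 1 / 2) * (Real.Gamma s * Real.Gamma (1 - s)) := by
        rw [← Real.Gamma_mul_Gamma_add_half]
        ring
    _ = 2 ^ (2 * s - 1) * Real.Gamma (s + 1 / 2) * (√π * √π / Real.sin (π * s)) := by
        rw [Real.Gamma_mul_Gamma_one_sub, sqrt_pi_sq]
    _ = 2 ^ (2 * s - 1) * √π * Real.Gamma (s + 1 / 2) / Real.sin (π * s) * √π := by
        ring

theorem factorial_two_mul_mul_gamma_half_sub_nat (k : ℕ) :
    (2 * k)! * Real.Gamma (1 / 2 - k) = √π * (-4) ^ k * k ! := by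
  have sin_eq : Real.sin (π * (k + 1 / 2)) = (-1) ^ k := by
    rw [mul_add, mul_one_div, Real.sin_add_pi_div_two, mul_comm, Real.cos_nat_mul_pi]
  have two_rpow_eq : (2 : ℝ) ^ (2 * (k + 1 / 2 : ℝ) - 1) = 4 ^ k := by
    rw [show 2 * (k + 1 / 2 : ℝ) - 1 = (2 * k : ℕ) by push_cast; ring, Real.rpow_natCast, pow_mul]
    norm_num
  calc (2 * k)! * Real.Gamma (1 / 2 - k)
      = Real.Gamma (2 * (k + 1 / 2)) * Real.Gamma (1 - (k + 1 / 2)) := by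
        rw [← Real.Gamma_nat_eq_factorial]
        congr 2 <;> push_cast <;> ring
    _ = 4 ^ k * √π * k ! / (-1) ^ k := by
        rw [gamma_two_mul_mul_gamma_one_sub, sin_eq, two_rpow_eq, add_assoc, add_halves,
          Real.Gamma_nat_eq_factorial]
    _ = √π * (4 / -1) ^ k * k ! := by
        rw [div_pow]
        ring
    _ = √π * (-4) ^ k * k ! := by
        norm_num

theorem hasSum_pow_two_mul_div_factorial_mul_gamma (z : ℝ) :
    HasSum (fun k : ℕ ↦ z ^ (2 * k) / ((2 * k)! * Real.Gamma (1 / 2 - k)))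
      (Real.exp (-z ^ 2 / 4) / √π) := by
  have exp_series : HasSum (fun k : ℕ ↦ (-z ^ 2 / 4) ^ k / k ! / √π)
      (Real.exp (-z ^ 2 / 4) / √π) := by
    rw [Real.exp_eq_exp_ℝ]
    exact (NormedSpace.expSeries_div_hasSum_exp _).div_const _
  convert exp_series using 2 with k
  rw [factorial_two_mul_mul_gamma_half_sub_nat, pow_mul, neg_div, ← div_neg, div_pow, div_div,
    div_div]
  ring

theorem hasSum_mWright_half (z : ℝ) :
    HasSum (fun n : ℕ ↦ (-z) ^ n / (n ! * Real.Gamma (-(1 / 2 * n) + 1 - 1 / 2)))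
      (Real.exp (-z ^ 2 / 4) / √π) := by
  have even_arg (k : ℕ) : -(1 / 2 * ((2 * k : ℕ) : ℝ)) + 1 - 1 / 2 = 1 / 2 - k := by
    push_cast
    ring
  have odd_arg (k : ℕ) : -(1 / 2 * ((2 * k + 1 : ℕ) : ℝ)) + 1 - 1 / 2 = -k := by
    push_cast
    ring
  rw [← add_zero (Real.exp _ / _)]
  apply HasSum.even_add_odd
  · simpa only [even_arg, neg_sq] using hasSum_pow_two_mul_div_factorial_mul_gamma (-z)
  · simpa only [odd_arg, Real.Gamma_neg_nat_eq_zero, mul_zero, div_zero] using hasSum_zero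

end

/-- For `ν = 1/2` the M-Wright function reduces to a Gaussian:
`M_{1/2}(z) = e^(-z²/4) / √π`. -/
theorem mWright_half (z : ℝ) :
    mWright (1/2) z = Real.exp (-z ^ 2 / 4) / Real.sqrt Real.pi :=
  (hasSum_mWright_half z).tsum_eq
end

section
/- Let 0 < ν < 1 and s ≥ 0. Then the Laplace transform of the M-Wright function is the Mittag-Leffler function: the integral ∫₀^∞ e^(−s z) M_ν(z) dz converges and equals Σ_{n=0}^∞ (−s)^n / Γ(νn + 1). -/
open MeasureTheory

/-!
Hankel's integral represents `1 / Γ(w)` as `∫ W(x) exp((1 - w) ζ(x)) dx`, where `ζ` runs through a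
contour from `+∞ - φ i` to `+∞ + φ i` and the density `W` decays doubly exponentially. With
`w = 1 - ν - ν n`, summing the exponential series under the integral gives
`M_ν(z) = ∫ W exp(ν ζ) exp(-z exp(ν ζ))`. If `π / 2 < φ ≤ π` and `ν φ < π / 2`, then
`Re exp(ν ζ)` is bounded below by a positive constant, which becomes as large as desired when the
contour is moved to the right. Fubini's theorem then turns the Laplace transform into
`∫ W exp(ν ζ) / (s + exp(ν ζ))`, and the coefficients of its expansion as a geometric series in `-s`
are again Hankel integrals, with `w = ν n + 1`.

Hankel's formula itself holds for `Re w < 1` because Cauchy's theorem opens the contour to the lines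
`Im ζ = ±π`, where it becomes Euler's integral for `Γ(1 - w)`; the reflection formula and the
identity theorem do the rest.
-/

section

open Complex Real Filter Set Topology ComplexConjugate

section Superposition

variable {X : Type*} [MeasurableSpace X] {μ : Measure X} {f g : X → ℂ}

theorem hasSum_integral_mul_cexp (hf : AEStronglyMeasurable f μ) (hg : AEStronglyMeasurable g μ)
    {z : ℂ} (hfg : Integrable (fun x ↦ ‖f x‖ * rexp (‖z‖ * ‖g x‖)) μ) :
    HasSum (fun n : ℕ ↦ z ^ n / n.factorial * ∫ x, f x * g x ^ n ∂μ)
      (∫ x, f x * cexp (z * g x) ∂μ) := by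
  simp_rw [← integral_const_mul]
  refine hasSum_integral_of_dominated_convergence
    (fun n x ↦ ‖f x‖ * ((‖z‖ * ‖g x‖) ^ n / n.factorial)) (fun n ↦ by fun_prop)
    (fun n ↦ .of_forall fun x ↦ le_of_eq ?_)
    (.of_forall fun x ↦ (Real.summable_pow_div_factorial _).mul_left _) ?_
    (.of_forall fun x ↦ ?_)
  · simp only [norm_mul, norm_div, norm_pow, Complex.norm_natCast]
    ring
  · simpa only [tsum_mul_left, Real.exp_eq_exp_ℝ, NormedSpace.exp_eq_tsum_div] using hfg
  · have hexp := (NormedSpace.expSeries_div_hasSum_exp (z * g x)).mul_left (f x)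
    rw [← Complex.exp_eq_exp_ℂ] at hexp
    exact hexp.congr_fun fun n ↦ by ring

theorem differentiable_integral_mul_cexp (hf : AEStronglyMeasurable f μ)
    (hg : AEStronglyMeasurable g μ)
    (hfg : ∀ a : ℝ, Integrable (fun x ↦ ‖f x‖ * rexp (a * ‖g x‖)) μ) :
    Differentiable ℂ fun z ↦ ∫ x, f x * cexp (z * g x) ∂μ := by
  have hsum (z : ℂ) := hasSum_integral_mul_cexp hf hg (hfg ‖z‖)
  simp_rw [← fun z ↦ (hsum z).tsum_eq]
  intro z
  have hz : z ∈ Metric.ball (0 : ℂ) (‖z‖ + 1) := by simp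
  refine (differentiableOn_tsum_of_summable_norm (hsum ((‖z‖ + 1 : ℝ) : ℂ)).summable.norm
    (fun n ↦ by fun_prop) Metric.isOpen_ball fun n w hw ↦ ?_).differentiableAt
    (Metric.isOpen_ball.mem_nhds hz)
  rw [mem_ball_zero_iff] at hw
  simp only [norm_mul, norm_div, norm_pow]
  gcongr
  exact hw.le.trans_eq (Complex.norm_of_nonneg (by positivity)).symm

theorem hasSum_integral_geometric (hf : Integrable f μ) (hg : AEStronglyMeasurable g μ)
    {s : ℂ} {δ : ℝ} (hs : ‖s‖ < δ) (hδ : ∀ᵐ x ∂μ, δ ≤ ‖g x‖) :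
    HasSum (fun n : ℕ ↦ (-s) ^ n * ∫ x, f x * (g x)⁻¹ ^ n ∂μ)
      (∫ x, f x * (g x / (s + g x)) ∂μ) := by
  have hδ₀ : 0 < δ := (norm_nonneg s).trans_lt hs
  have hlt : ‖s‖ / δ < 1 := (div_lt_one hδ₀).2 hs
  simp_rw [← integral_const_mul]
  refine hasSum_integral_of_dominated_convergence (fun n x ↦ ‖f x‖ * (‖s‖ / δ) ^ n)
    (fun n ↦ (hf.1.mul (hg.inv₀.pow n)).const_mul _) (fun n ↦ ?_)
    (.of_forall fun x ↦ (summable_geometric_of_lt_one (by positivity) hlt).mul_left _) ?_ ?_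
  · filter_upwards [hδ] with x hx
    calc ‖(-s) ^ n * (f x * (g x)⁻¹ ^ n)‖ = ‖f x‖ * (‖s‖ / ‖g x‖) ^ n := by
          simp only [norm_mul, norm_pow, norm_neg, norm_inv]
          ring
      _ ≤ ‖f x‖ * (‖s‖ / δ) ^ n := by gcongr
  · simpa only [tsum_mul_left] using hf.norm.mul_const _
  · filter_upwards [hδ] with x hx
    have hgx : g x ≠ 0 := norm_pos_iff.1 (hδ₀.trans_le hx)
    have hratio : ‖-s * (g x)⁻¹‖ < 1 := by
      rw [norm_mul, norm_neg, norm_inv, ← div_eq_mul_inv]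
      exact (div_lt_one (hδ₀.trans_le hx)).2 (hs.trans_le hx)
    have hlimit : (1 - -s * (g x)⁻¹)⁻¹ = g x / (s + g x) := by
      rw [show 1 - -s * (g x)⁻¹ = (s + g x) / g x by field_simp; ring, inv_div]
    rw [← hlimit]
    exact ((hasSum_geometric_of_norm_lt_one hratio).mul_left (f x)).congr_fun fun n ↦ by ring

section Laplace

variable {s : ℂ} {δ : ℝ}

theorem cexp_mul_integral_mul_cexp (z : ℂ) :
    cexp (-s * z) * ∫ x, f x * cexp (-z * g x) ∂μ = ∫ x, f x * cexp (-(s + g x) * z) ∂μ := by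
  rw [← integral_const_mul]
  congr with x
  rw [mul_left_comm, ← Complex.exp_add]
  ring_nf

theorem integrable_prod_mul_cexp_neg_add_mul [SFinite μ] (hf : Integrable f μ)
    (hg : AEStronglyMeasurable g μ) (hδ : ∀ᵐ x ∂μ, δ ≤ (g x).re) (hs : 0 < s.re + δ) :
    Integrable (fun p : ℝ × X ↦ f p.2 * cexp (-(s + g p.2) * p.1))
      ((volume.restrict (Ioi 0)).prod μ) := by
  have hdom : Integrable (fun p : ℝ × X ↦ rexp (-(s.re + δ) * p.1) * ‖f p.2‖)
      ((volume.restrict (Ioi 0)).prod μ) :=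
    Integrable.mul_prod (integrableOn_exp_mul_Ioi (neg_neg_of_pos hs) 0) hf.norm
  have hpos : ∀ᵐ p ∂(volume.restrict (Ioi (0 : ℝ))).prod μ, 0 < p.1 :=
    Measure.quasiMeasurePreserving_fst.ae (ae_restrict_mem measurableSet_Ioi)
  have hre : ∀ᵐ p ∂(volume.restrict (Ioi (0 : ℝ))).prod μ, δ ≤ (g p.2).re :=
    Measure.quasiMeasurePreserving_snd.ae hδ
  refine hdom.mono' ?_ ?_
  · exact hf.1.comp_snd.mul (Complex.continuous_exp.comp_aestronglyMeasurable
      ((aestronglyMeasurable_const.add hg.comp_snd).neg.mul (by fun_prop)))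
  · filter_upwards [hpos, hre] with p hp hgp
    rw [norm_mul, Complex.norm_exp, mul_comm, re_mul_ofReal, neg_re, add_re]
    gcongr

theorem integrableOn_cexp_mul_integral [SFinite μ] (hf : Integrable f μ)
    (hg : AEStronglyMeasurable g μ) (hδ : ∀ᵐ x ∂μ, δ ≤ (g x).re) (hs : 0 < s.re + δ) :
    IntegrableOn (fun z : ℝ ↦ cexp (-s * z) * ∫ x, f x * cexp (-z * g x) ∂μ) (Ioi 0) := by
  simp_rw [cexp_mul_integral_mul_cexp]
  exact (integrable_prod_mul_cexp_neg_add_mul hf hg hδ hs).integral_prod_left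

theorem integral_Ioi_cexp_mul_integral [SFinite μ] (hf : Integrable f μ)
    (hg : AEStronglyMeasurable g μ) (hδ : ∀ᵐ x ∂μ, δ ≤ (g x).re) (hs : 0 < s.re + δ) :
    ∫ z in Ioi (0 : ℝ), cexp (-s * z) * ∫ x, f x * cexp (-z * g x) ∂μ =
      ∫ x, f x / (s + g x) ∂μ := by
  simp_rw [cexp_mul_integral_mul_cexp]
  rw [integral_integral_swap (integrable_prod_mul_cexp_neg_add_mul hf hg hδ hs)]
  refine integral_congr_ae ?_
  filter_upwards [hδ] with x hx
  have hneg : (-(s + g x)).re < 0 := by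
    rw [neg_re, add_re]
    linarith
  rw [integral_const_mul, integral_exp_mul_complex_Ioi hneg, ofReal_zero, mul_zero,
    Complex.exp_zero, neg_div_neg_eq, mul_one_div]

end Laplace

end Superposition

section Growth

variable {k ν : ℝ}

theorem tendsto_neg_mul_exp_add_atBot (hk : 0 < k) (hν : ν < 1) (c a : ℝ) :
    Tendsto (fun x : ℝ ↦ -k * rexp x + c * rexp (ν * x) + a * x) atTop atBot := by
  have hexp : Tendsto (fun x : ℝ ↦ rexp (-(1 - ν) * x)) atTop (𝓝 0) :=
    Real.tendsto_exp_atBot.comp (tendsto_id.const_mul_atTop_of_neg (by linarith))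
  have hpow : Tendsto (fun x : ℝ ↦ x * rexp (-x)) atTop (𝓝 0) := by
    simpa using Real.tendsto_pow_mul_exp_neg_atTop_nhds_zero 1
  have hfactor : Tendsto (fun x : ℝ ↦ -k + c * rexp (-(1 - ν) * x) + a * (x * rexp (-x)))
      atTop (𝓝 (-k)) := by
    simpa using (tendsto_const_nhds.add (hexp.const_mul c)).add (hpow.const_mul a)
  refine (Real.tendsto_exp_atTop.atTop_mul_neg (neg_neg_of_pos hk) hfactor).congr fun x ↦ ?_
  have hgrowth : rexp x * rexp (-(1 - ν) * x) = rexp (ν * x) := by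
    rw [← Real.exp_add]
    ring_nf
  have hcancel : rexp x * rexp (-x) = 1 := by rw [← Real.exp_add, add_neg_cancel, Real.exp_zero]
  linear_combination c * hgrowth + a * x * hcancel

theorem exp_neg_mul_exp_add_isBigO (hk : 0 < k) (hν : ν < 1) (c a : ℝ) :
    (fun x : ℝ ↦ rexp (-k * rexp x + c * rexp (ν * x) + a * x)) =O[atTop]
      fun x ↦ rexp (-1 * x) := by
  refine .of_bound 1 ?_
  filter_upwards [(tendsto_neg_mul_exp_add_atBot hk hν c (a + 1)).eventually_le_atBot 0] with x hx
  rw [Real.norm_of_nonneg (Real.exp_pos _).le, Real.norm_of_nonneg (Real.exp_pos _).le, one_mul,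
    Real.exp_le_exp]
  linarith

end Growth

section HalfStrip

variable {f : ℂ → ℂ} {b y₁ y₂ : ℝ}

theorem tendsto_integral_vertical_zero {l : Filter ℝ} {u : ℝ → ℝ} (hu : Tendsto u l (𝓝 0))
    (hfu : ∀ᶠ T : ℝ in l, ∀ y ∈ uIcc y₁ y₂, ‖f (T + y * I)‖ ≤ u T) :
    Tendsto (fun T : ℝ ↦ ∫ y in y₁..y₂, f (T + y * I)) l (𝓝 0) := by
  refine squeeze_zero_norm' ?_ (by simpa using hu.mul_const |y₂ - y₁|)
  filter_upwards [hfu] with T hT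
  exact intervalIntegral.norm_integral_le_of_norm_le_const fun y hy ↦ hT y (uIoc_subset_uIcc hy)

theorem intervalIntegral_sub_eq_vertical_sub (hf : Differentiable ℂ f) (x₁ x₂ y₁ y₂ : ℝ) :
    (∫ x in x₁..x₂, f (x + y₁ * I)) - (∫ x in x₁..x₂, f (x + y₂ * I)) =
      I * (∫ y in y₁..y₂, f (x₁ + y * I)) - I * ∫ y in y₁..y₂, f (x₂ + y * I) := by
  have h := integral_boundary_rect_eq_zero_of_differentiableOn f (x₁ + y₁ * I) (x₂ + y₂ * I)
    hf.differentiableOn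
  simp only [add_re, add_im, ofReal_re, ofReal_im, mul_re, mul_im, I_re, I_im, mul_zero, mul_one,
    sub_zero, add_zero, zero_add, smul_eq_mul] at h
  linear_combination h

theorem integral_Ioi_sub_eq_vertical (hf : Differentiable ℂ f)
    (h₁ : IntegrableOn (fun x : ℝ ↦ f (x + y₁ * I)) (Ioi b))
    (h₂ : IntegrableOn (fun x : ℝ ↦ f (x + y₂ * I)) (Ioi b))
    (hside : Tendsto (fun T : ℝ ↦ ∫ y in y₁..y₂, f (T + y * I)) atTop (𝓝 0)) :
    (∫ x in Ioi b, f (x + y₁ * I)) - (∫ x in Ioi b, f (x + y₂ * I)) =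
      I * ∫ y in y₁..y₂, f (b + y * I) := by
  have hrays := (intervalIntegral_tendsto_integral_Ioi b h₁ tendsto_id).sub
    (intervalIntegral_tendsto_integral_Ioi b h₂ tendsto_id)
  simp_rw [id, fun T ↦ intervalIntegral_sub_eq_vertical_sub hf b T] at hrays
  refine tendsto_nhds_unique hrays ?_
  simpa using (hside.const_mul I).const_sub (I * ∫ y in y₁..y₂, f (b + y * I))

theorem integral_Iic_sub_eq_neg_vertical (hf : Differentiable ℂ f)
    (h₁ : IntegrableOn (fun x : ℝ ↦ f (x + y₁ * I)) (Iic b))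
    (h₂ : IntegrableOn (fun x : ℝ ↦ f (x + y₂ * I)) (Iic b))
    (hside : Tendsto (fun T : ℝ ↦ ∫ y in y₁..y₂, f (T + y * I)) atBot (𝓝 0)) :
    (∫ x in Iic b, f (x + y₁ * I)) - (∫ x in Iic b, f (x + y₂ * I)) =
      -(I * ∫ y in y₁..y₂, f (b + y * I)) := by
  have hrays := (intervalIntegral_tendsto_integral_Iic b h₁ tendsto_id).sub
    (intervalIntegral_tendsto_integral_Iic b h₂ tendsto_id)
  simp_rw [id, fun T ↦ intervalIntegral_sub_eq_vertical_sub hf T b] at hrays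
  refine tendsto_nhds_unique hrays ?_
  simpa using (hside.const_mul I).sub_const (I * ∫ y in y₁..y₂, f (b + y * I))

end HalfStrip

section Hankel

/-- The integrand of Hankel's integral for `1 / Γ(1 - p)` in the logarithmic coordinate `ζ`: the
substitution `t = exp ζ` turns `exp t * t ^ (p - 1) dt` into `exp (exp ζ + p * ζ) dζ` and makes it
entire. -/
noncomputable def hankelIntegrand (p ζ : ℂ) : ℂ :=
  cexp (cexp ζ + p * ζ)

variable {p : ℂ} {b φ : ℝ}

theorem differentiable_hankelIntegrand (p : ℂ) : Differentiable ℂ (hankelIntegrand p) := by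
  unfold hankelIntegrand
  fun_prop

@[fun_prop]
theorem continuous_hankelIntegrand (p : ℂ) : Continuous (hankelIntegrand p) :=
  (differentiable_hankelIntegrand p).continuous

theorem norm_hankelIntegrand (p : ℂ) (x y : ℝ) :
    ‖hankelIntegrand p (x + y * I)‖ =
      rexp (Real.cos y * rexp x + p.re * x - p.im * y) := by
  rw [hankelIntegrand, Complex.norm_exp]
  congr 1
  simp only [add_re, add_im, mul_re, mul_im, ofReal_re, ofReal_im, I_re, I_im, Complex.exp_re]
  ring_nf

theorem norm_hankelIntegrand_le {c x y : ℝ} (hc : Real.cos y ≤ c) (hy : |y| ≤ π) :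
    ‖hankelIntegrand p (x + y * I)‖ ≤ rexp (|p.im| * π) * rexp (c * rexp x + p.re * x) := by
  have him : -(p.im * y) ≤ |p.im| * π := by
    calc -(p.im * y) ≤ |p.im * y| := neg_le_abs _
      _ = |p.im| * |y| := abs_mul _ _
      _ ≤ |p.im| * π := by gcongr
  have hre : Real.cos y * rexp x ≤ c * rexp x := by gcongr
  rw [norm_hankelIntegrand, ← Real.exp_add, Real.exp_le_exp]
  linarith

theorem integrableOn_hankelIntegrand_Ioi (hcos : Real.cos φ < 0) (hφ : |φ| ≤ π) (p : ℂ) (b : ℝ) :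
    IntegrableOn (fun x : ℝ ↦ hankelIntegrand p (x + φ * I)) (Ioi b) := by
  have hO := exp_neg_mul_exp_add_isBigO (neg_pos.2 hcos) zero_lt_one 0 p.re
  have h_int := integrable_of_isBigO_exp_neg (a := b) one_pos (by fun_prop) hO
  refine (h_int.const_mul (rexp (|p.im| * π))).mono' (by fun_prop) (.of_forall fun x ↦ ?_)
  simpa using norm_hankelIntegrand_le (x := x) le_rfl hφ

theorem integral_hankelIntegrand_Ioi_sub {y₁ y₂ : ℝ} (hφ₀ : 0 ≤ φ) (hcos : Real.cos φ < 0)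
    (hy : ∀ y ∈ uIcc y₁ y₂, φ ≤ |y| ∧ |y| ≤ π) (p : ℂ) (b : ℝ) :
    (∫ x in Ioi b, hankelIntegrand p (x + y₁ * I)) -
        (∫ x in Ioi b, hankelIntegrand p (x + y₂ * I)) =
      I * ∫ y in y₁..y₂, hankelIntegrand p (b + y * I) := by
  have hcos_le (y : ℝ) (hy' : y ∈ uIcc y₁ y₂) : Real.cos y ≤ Real.cos φ := by
    rw [← Real.cos_abs y]
    exact Real.cos_le_cos_of_nonneg_of_le_pi hφ₀ (hy y hy').2 (hy y hy').1
  have hray (y : ℝ) (hy' : y ∈ uIcc y₁ y₂) :=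
    integrableOn_hankelIntegrand_Ioi ((hcos_le y hy').trans_lt hcos) (hy y hy').2 p b
  have hdecay := Real.tendsto_exp_atBot.comp
    (tendsto_neg_mul_exp_add_atBot (neg_pos.2 hcos) zero_lt_one 0 p.re)
  refine integral_Ioi_sub_eq_vertical (differentiable_hankelIntegrand p)
    (hray y₁ left_mem_uIcc) (hray y₂ right_mem_uIcc)
    (tendsto_integral_vertical_zero (by simpa using hdecay.const_mul (rexp (|p.im| * π)))
      (.of_forall fun T y hy' ↦ ?_))
  simpa using norm_hankelIntegrand_le (hcos_le y hy') (hy y hy').2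

theorem exp_smul_Gamma_integrand (p : ℂ) (x : ℝ) :
    |rexp x| • (((rexp (-rexp x) : ℝ) : ℂ) * (rexp x : ℂ) ^ (p - 1)) =
      cexp (-cexp x + p * x) := by
  rw [abs_of_pos (Real.exp_pos x), real_smul,
    cpow_def_of_ne_zero (ofReal_ne_zero.2 (Real.exp_ne_zero x)), ← ofReal_log (Real.exp_pos x).le,
    Real.log_exp]
  push_cast
  rw [← Complex.exp_add, ← Complex.exp_add]
  ring_nf

theorem integrable_cexp_neg_cexp_add (hp : 0 < p.re) :
    Integrable fun x : ℝ ↦ cexp (-cexp x + p * x) := by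
  have h := Complex.GammaIntegral_convergent hp
  rw [← Real.range_exp, ← image_univ, integrableOn_image_iff_integrableOn_abs_deriv_smul .univ
    (fun x _ ↦ (Real.hasDerivAt_exp x).hasDerivWithinAt) Real.exp_injective.injOn] at h
  simpa only [exp_smul_Gamma_integrand, integrableOn_univ] using h

theorem integral_cexp_neg_cexp_add (hp : 0 < p.re) :
    ∫ x : ℝ, cexp (-cexp x + p * x) = Complex.Gamma p := by
  rw [Complex.Gamma_eq_integral hp, GammaIntegral, ← Real.range_exp, ← image_univ,
    integral_image_eq_integral_abs_deriv_smul .univ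
      (fun x _ ↦ (Real.hasDerivAt_exp x).hasDerivWithinAt) Real.exp_injective.injOn]
  simp only [exp_smul_Gamma_integrand, setIntegral_univ]

theorem hankelIntegrand_add_of_cexp_eq_neg_one {η : ℂ} (hη : cexp η = -1) (p ζ : ℂ) :
    hankelIntegrand p (ζ + η) = cexp (p * η) * cexp (-cexp ζ + p * ζ) := by
  rw [hankelIntegrand, Complex.exp_add ζ η, hη, ← Complex.exp_add]
  ring_nf

theorem integrable_hankelIntegrand_add_of_cexp_eq_neg_one (hp : 0 < p.re) {η : ℂ}
    (hη : cexp η = -1) : Integrable fun x : ℝ ↦ hankelIntegrand p (x + η) := by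
  simp_rw [hankelIntegrand_add_of_cexp_eq_neg_one hη]
  exact (integrable_cexp_neg_cexp_add hp).const_mul _

theorem cexp_neg_pi_mul_I : cexp ((-π : ℝ) * I) = -1 := by
  rw [ofReal_neg, neg_mul, Complex.exp_neg, Complex.exp_pi_mul_I, inv_neg_one]

theorem integral_hankelIntegrand_Iic_sub (hp : 0 < p.re) (b : ℝ) :
    (∫ x in Iic b, hankelIntegrand p (x + (-π : ℝ) * I)) -
        (∫ x in Iic b, hankelIntegrand p (x + π * I)) =
      -(I * ∫ y in (-π)..π, hankelIntegrand p (b + y * I)) := by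
  have hray {η : ℂ} (hη : cexp η = -1) :=
    (integrable_hankelIntegrand_add_of_cexp_eq_neg_one hp hη).integrableOn (s := Iic b)
  have hdecay : Tendsto (fun T : ℝ ↦ rexp (1 * rexp T + p.re * T)) atBot (𝓝 0) :=
    Real.tendsto_exp_atBot.comp ((Real.tendsto_exp_atBot.const_mul 1).add_atBot
      (tendsto_id.const_mul_atBot hp))
  refine integral_Iic_sub_eq_neg_vertical (differentiable_hankelIntegrand p)
    (hray cexp_neg_pi_mul_I) (hray Complex.exp_pi_mul_I)
    (tendsto_integral_vertical_zero (by simpa using hdecay.const_mul (rexp (|p.im| * π)))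
      (.of_forall fun T y hy ↦ ?_))
  rw [uIcc_of_le (by linarith [Real.pi_pos])] at hy
  simpa using norm_hankelIntegrand_le (x := T) (Real.cos_le_one y) (abs_le.2 hy)

theorem inv_Gamma_one_sub_eq (hp : 0 < p.re) :
    (Complex.Gamma (1 - p))⁻¹ = Complex.Gamma p * (Complex.sin (π * p) / π) := by
  rw [← inv_div, ← Complex.Gamma_mul_Gamma_one_sub, mul_inv,
    mul_inv_cancel_left₀ (Complex.Gamma_ne_zero_of_re_pos hp)]

theorem integral_hankelIntegrand_sub_integral_neg_pi (hp : 0 < p.re) :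
    (∫ x : ℝ, hankelIntegrand p (x + π * I)) - (∫ x : ℝ, hankelIntegrand p (x + (-π : ℝ) * I)) =
      2 * π * I * (Complex.Gamma (1 - p))⁻¹ := by
  have hsin : cexp (p * (π * I)) - cexp (p * ((-π : ℝ) * I)) = 2 * I * Complex.sin (π * p) := by
    rw [Complex.sin, show p * (π * I) = π * p * I by ring,
      show p * ((-π : ℝ) * I) = -(π * p) * I by push_cast; ring]
    linear_combination (cexp (π * p * I) - cexp (-(π * p) * I)) * I_sq
  have hπ : (π : ℂ) ≠ 0 := ofReal_ne_zero.2 Real.pi_ne_zero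
  simp_rw [hankelIntegrand_add_of_cexp_eq_neg_one Complex.exp_pi_mul_I,
    hankelIntegrand_add_of_cexp_eq_neg_one cexp_neg_pi_mul_I, integral_const_mul,
    integral_cexp_neg_cexp_add hp]
  rw [← sub_mul, hsin, inv_Gamma_one_sub_eq hp]
  field_simp

theorem integral_hankelIntegrand_contour (hφ₀ : 0 ≤ φ) (hφπ : φ ≤ π) (hcos : Real.cos φ < 0)
    (hp : 0 < p.re) (b : ℝ) :
    I * (∫ y in (-φ)..φ, hankelIntegrand p (b + y * I)) +
        (∫ x in Ioi b, hankelIntegrand p (x + φ * I)) -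
          ∫ x in Ioi b, hankelIntegrand p (x + (-φ : ℝ) * I) =
      2 * π * I * (Complex.Gamma (1 - p))⁻¹ := by
  have hupper := integral_hankelIntegrand_Ioi_sub (y₁ := φ) (y₂ := π) hφ₀ hcos (fun y hy ↦ by
    rw [uIcc_of_le hφπ] at hy
    rwa [abs_of_nonneg (hφ₀.trans hy.1)]) p b
  have hlower := integral_hankelIntegrand_Ioi_sub (y₁ := -π) (y₂ := -φ) hφ₀ hcos (fun y hy ↦ by
    rw [uIcc_of_le (neg_le_neg hφπ)] at hy
    rw [abs_of_nonpos (by linarith [hy.2])]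
    constructor <;> linarith [hy.1, hy.2]) p b
  have hleft := integral_hankelIntegrand_Iic_sub hp b
  have hvertical (y₁ y₂ : ℝ) :
      IntervalIntegrable (fun y : ℝ ↦ hankelIntegrand p (b + y * I)) volume y₁ y₂ :=
    Continuous.intervalIntegrable (by fun_prop) _ _
  rw [← intervalIntegral.integral_add_adjacent_intervals (hvertical (-π) (-φ)) (hvertical _ π),
    ← intervalIntegral.integral_add_adjacent_intervals (hvertical (-φ) φ) (hvertical φ π)] at hleft
  have hline {η : ℂ} (hη : cexp η = -1) :=
    integrable_hankelIntegrand_add_of_cexp_eq_neg_one hp hη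
  rw [← integral_hankelIntegrand_sub_integral_neg_pi hp,
    ← intervalIntegral.integral_Iic_add_Ioi (b := b) (hline Complex.exp_pi_mul_I).integrableOn
      (hline Complex.exp_pi_mul_I).integrableOn,
    ← intervalIntegral.integral_Iic_add_Ioi (b := b) (hline cexp_neg_pi_mul_I).integrableOn
      (hline cexp_neg_pi_mul_I).integrableOn]
  linear_combination hupper + hlower + hleft

end Hankel

section Contour

/-- The contour of Hankel's integral, parametrized by `ℝ`: in from `+∞ - φ * I` for `x ≤ -b`, up the
segment from `b - φ * I` to `b + φ * I` for `|x| ≤ b`, and out to `+∞ + φ * I` for `b ≤ x`. -/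
noncomputable def hankelPath (b φ x : ℝ) : ℂ :=
  (max b |x| : ℝ) + (φ / b * max (-b) (min b x) : ℝ) * I

/-- The derivative of `hankelPath b φ`, with an arbitrary choice at the two corners. -/
noncomputable def hankelVelocity (b φ x : ℝ) : ℂ :=
  if x ≤ -b then -1 else if x ≤ b then (φ / b : ℝ) * I else 1

/-- The density along `hankelPath b φ` whose exponential moments `∫ x, density x * exp (p * path x)`
are the values of `1 / Γ(1 - p)`. -/
noncomputable def hankelDensity (b φ x : ℝ) : ℂ :=
  (2 * π * I)⁻¹ * (hankelVelocity b φ x * cexp (cexp (hankelPath b φ x)))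

variable {b φ ν : ℝ}

theorem hankelPath_re (b φ x : ℝ) : (hankelPath b φ x).re = max b |x| := by
  simp [hankelPath]

theorem hankelPath_im (b φ x : ℝ) : (hankelPath b φ x).im = φ / b * max (-b) (min b x) := by
  simp [hankelPath]

theorem abs_hankelPath_im_le (hb : 0 < b) (hφ₀ : 0 ≤ φ) (x : ℝ) : |(hankelPath b φ x).im| ≤ φ := by
  have hclamp : |max (-b) (min b x)| ≤ b :=
    abs_le.2 ⟨le_max_left _ _, max_le (by linarith) (min_le_left _ _)⟩
  rw [hankelPath_im, abs_mul, abs_of_nonneg (by positivity)]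
  calc φ / b * |max (-b) (min b x)| ≤ φ / b * b := by gcongr
    _ = φ := div_mul_cancel₀ φ hb.ne'

@[fun_prop]
theorem continuous_hankelPath (b φ : ℝ) : Continuous (hankelPath b φ) := by
  unfold hankelPath
  fun_prop

theorem hankelPath_neg (hb : 0 < b) (φ x : ℝ) :
    hankelPath b φ (-x) = conj (hankelPath b φ x) := by
  have hclamp : max (-b) (min b (-x)) = -max (-b) (min b x) := by
    rw [← min_neg_neg, neg_neg, ← max_neg_neg]
    grind
  apply Complex.ext <;> simp [hankelPath_re, hankelPath_im, hclamp]

theorem hankelPath_of_le (hb : 0 < b) (φ : ℝ) {x : ℝ} (hx : b ≤ x) :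
    hankelPath b φ x = x + φ * I := by
  have habs : max b |x| = x := by rw [abs_of_nonneg (hb.le.trans hx), max_eq_right hx]
  have hclamp : max (-b) (min b x) = b := by rw [min_eq_left hx, max_eq_right (by linarith)]
  rw [hankelPath, habs, hclamp, div_mul_cancel₀ φ hb.ne']

theorem hankelPath_of_le_neg (hb : 0 < b) (φ : ℝ) {x : ℝ} (hx : x ≤ -b) :
    hankelPath b φ x = (-x : ℝ) + (-φ : ℝ) * I := by
  rw [← neg_neg x, hankelPath_neg hb, hankelPath_of_le hb φ (le_neg_of_le_neg hx)]
  simp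

theorem hankelPath_of_mem_Icc (φ : ℝ) {x : ℝ} (hx : x ∈ Icc (-b) b) :
    hankelPath b φ x = b + (φ / b * x : ℝ) * I := by
  rw [hankelPath, max_eq_left (abs_le.2 hx), min_eq_right hx.2, max_eq_right hx.1]

theorem measurable_hankelVelocity (b φ : ℝ) : Measurable (hankelVelocity b φ) :=
  Measurable.ite measurableSet_Iic measurable_const
    (Measurable.ite measurableSet_Iic measurable_const measurable_const)

theorem measurable_hankelDensity (b φ : ℝ) : Measurable (hankelDensity b φ) :=
  ((measurable_hankelVelocity b φ).mul
    (Continuous.measurable (by fun_prop))).const_mul _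

theorem norm_hankelVelocity_le (b φ x : ℝ) : ‖hankelVelocity b φ x‖ ≤ max 1 |φ / b| := by
  unfold hankelVelocity
  split_ifs <;> simp [abs_div]

theorem integral_hankelVelocity_mul (hb : 0 < b) (φ : ℝ) {f : ℂ → ℂ}
    (hf : Integrable fun x ↦ hankelVelocity b φ x * f (hankelPath b φ x)) :
    ∫ x, hankelVelocity b φ x * f (hankelPath b φ x) =
      I * (∫ y in (-φ)..φ, f (b + y * I)) + (∫ x in Ioi b, f (x + φ * I)) -
        ∫ x in Ioi b, f (x + (-φ : ℝ) * I) := by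
  have hin : ∫ x in Iic (-b), hankelVelocity b φ x * f (hankelPath b φ x) =
      -∫ x in Ioi b, f (x + (-φ : ℝ) * I) := by
    have hreflect := integral_comp_neg_Iic (-b) fun x : ℝ ↦ f (x + (-φ : ℝ) * I)
    rw [neg_neg] at hreflect
    rw [← hreflect, ← integral_neg]
    refine setIntegral_congr_fun measurableSet_Iic fun x hx ↦ ?_
    simp only [hankelPath_of_le_neg hb φ hx, hankelVelocity, if_pos (mem_Iic.1 hx), neg_one_mul]
  have hup : ∫ x in (-b)..b, hankelVelocity b φ x * f (hankelPath b φ x) =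
      I * ∫ y in (-φ)..φ, f (b + y * I) := by
    have hscale := intervalIntegral.smul_integral_comp_mul_left (a := -b) (b := b)
      (fun y : ℝ ↦ f (b + y * I)) (φ / b)
    rw [mul_neg, div_mul_cancel₀ φ hb.ne'] at hscale
    rw [← hscale, real_smul, ← mul_assoc, ← intervalIntegral.integral_const_mul]
    refine intervalIntegral.integral_congr_ae (.of_forall fun x hx ↦ ?_)
    rw [uIoc_of_le (by linarith)] at hx
    rw [hankelPath_of_mem_Icc φ (Ioc_subset_Icc_self hx), hankelVelocity, if_neg hx.1.not_ge,
      if_pos hx.2, mul_comm I]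
  have hout : ∫ x in Ioi b, hankelVelocity b φ x * f (hankelPath b φ x) =
      ∫ x in Ioi b, f (x + φ * I) := by
    refine setIntegral_congr_fun measurableSet_Ioi fun x hx ↦ ?_
    simp only [hankelPath_of_le hb φ (mem_Ioi.1 hx).le, hankelVelocity,
      if_neg ((neg_lt_self hb).trans hx).not_ge, if_neg (mem_Ioi.1 hx).not_ge, one_mul]
  rw [← intervalIntegral.integral_Iic_add_Ioi (b := -b) hf.integrableOn hf.integrableOn,
    ← intervalIntegral.integral_interval_add_Ioi (b := b) hf.integrableOn hf.integrableOn,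
    hin, hup, hout]
  ring

theorem integrable_norm_cexp_cexp_hankelPath_mul (hb : 0 < b) (hcos : Real.cos φ < 0)
    (hν : ν < 1) (a c : ℝ) :
    Integrable fun x ↦ ‖cexp (cexp (hankelPath b φ x))‖ *
      rexp (a * ‖hankelPath b φ x‖ + c * ‖cexp (ν * hankelPath b φ x)‖) := by
  have hO := exp_neg_mul_exp_add_isBigO (neg_pos.2 hcos) hν c |a|
  refine (Continuous.locallyIntegrable
    (by fun_prop)).integrable_of_isBigO_atTop_of_norm_isNegInvariant (.of_forall fun x ↦ ?_)
    (Asymptotics.IsBigO.trans (.of_bound (rexp (|a| * |φ|)) ?_) hO)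
    ⟨Ioi b, Ioi_mem_atTop b, exp_neg_integrableOn_Ioi b one_pos⟩
  · simp only [Function.comp_apply, hankelPath_neg hb, Complex.exp_conj, norm_mul, norm_conj,
      Complex.norm_exp (ν * _), re_ofReal_mul, conj_re]
  · filter_upwards [eventually_ge_atTop b] with x hx
    have hlen : a * ‖(x + φ * I : ℂ)‖ ≤ |a| * |φ| + |a| * x := by
      have hnorm : ‖(x + φ * I : ℂ)‖ ≤ x + |φ| := by
        simpa [abs_of_nonneg (hb.le.trans hx)] using norm_add_le (x : ℂ) (φ * I)
      calc a * ‖(x + φ * I : ℂ)‖ ≤ |a| * (x + |φ|) := by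
            gcongr
            exact le_abs_self a
        _ = |a| * |φ| + |a| * x := by ring
    have hre : (cexp (x + φ * I)).re = Real.cos φ * rexp x := by simp [Complex.exp_re, mul_comm]
    have hpow : ‖cexp (ν * (x + φ * I))‖ = rexp (ν * x) := by simp [Complex.norm_exp]
    rw [hankelPath_of_le hb φ hx, Complex.norm_exp, hre, hpow, ← Real.exp_add,
      Real.norm_of_nonneg (Real.exp_pos _).le, Real.norm_of_nonneg (Real.exp_pos _).le,
      ← Real.exp_add, Real.exp_le_exp]
    linarith

theorem integrable_norm_hankelDensity_mul (hb : 0 < b) (hcos : Real.cos φ < 0) (hν : ν < 1)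
    (a c : ℝ) :
    Integrable fun x ↦ ‖hankelDensity b φ x‖ *
      rexp (a * ‖hankelPath b φ x‖ + c * ‖cexp (ν * hankelPath b φ x)‖) := by
  refine ((integrable_norm_cexp_cexp_hankelPath_mul hb hcos hν a c).const_mul
    (‖(2 * π * I)⁻¹‖ * max 1 |φ / b|)).mono' ?_ (.of_forall fun x ↦ ?_)
  · exact (measurable_hankelDensity b φ).norm.aestronglyMeasurable.mul
      (Continuous.aestronglyMeasurable (by fun_prop))
  · rw [norm_mul, norm_norm, Real.norm_of_nonneg (Real.exp_pos _).le, hankelDensity, norm_mul,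
      norm_mul, ← mul_assoc, ← mul_assoc]
    gcongr
    exact norm_hankelVelocity_le b φ x

theorem integrable_norm_hankelDensity_mul_exp_norm (hb : 0 < b) (hcos : Real.cos φ < 0) (a : ℝ) :
    Integrable fun x ↦ ‖hankelDensity b φ x‖ * rexp (a * ‖hankelPath b φ x‖) := by
  simpa using integrable_norm_hankelDensity_mul hb hcos zero_lt_one a 0

theorem integrable_hankelDensity_mul_cexp (hb : 0 < b) (hcos : Real.cos φ < 0) (p : ℂ) :
    Integrable fun x ↦ hankelDensity b φ x * cexp (p * hankelPath b φ x) := by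
  refine (integrable_norm_hankelDensity_mul_exp_norm hb hcos ‖p‖).mono' ?_
    (.of_forall fun x ↦ ?_)
  · exact (measurable_hankelDensity b φ).aestronglyMeasurable.mul
      (Continuous.aestronglyMeasurable (by fun_prop))
  · rw [norm_mul, ← norm_mul p]
    gcongr
    exact Complex.norm_exp_le_exp_norm _

theorem hankelDensity_mul_cexp (b φ x : ℝ) (p : ℂ) :
    hankelDensity b φ x * cexp (p * hankelPath b φ x) =
      (2 * π * I)⁻¹ * (hankelVelocity b φ x * hankelIntegrand p (hankelPath b φ x)) := by
  rw [hankelDensity, hankelIntegrand, Complex.exp_add]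
  ring

theorem inv_Gamma_eq_integral_hankelDensity_of_re_lt_one (hb : 0 < b) (hφ₀ : 0 ≤ φ)
    (hφπ : φ ≤ π) (hcos : Real.cos φ < 0) {w : ℂ} (hw : w.re < 1) :
    (Complex.Gamma w)⁻¹ = ∫ x, hankelDensity b φ x * cexp ((1 - w) * hankelPath b φ x) := by
  have h_int := integrable_hankelDensity_mul_cexp hb hcos (1 - w)
  simp_rw [hankelDensity_mul_cexp] at h_int ⊢
  rw [integrable_const_mul_iff (isUnit_iff_ne_zero.2 (inv_ne_zero two_pi_I_ne_zero))] at h_int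
  rw [integral_const_mul, integral_hankelVelocity_mul hb φ h_int,
    integral_hankelIntegrand_contour hφ₀ hφπ hcos (by simpa using hw) b,
    inv_mul_cancel_left₀ two_pi_I_ne_zero, sub_sub_cancel]

theorem inv_Gamma_eq_integral_hankelDensity (hb : 0 < b) (hφ₀ : 0 ≤ φ) (hφπ : φ ≤ π)
    (hcos : Real.cos φ < 0) (w : ℂ) :
    (Complex.Gamma w)⁻¹ = ∫ x, hankelDensity b φ x * cexp ((1 - w) * hankelPath b φ x) := by
  have hentire : Differentiable ℂ fun w ↦
      ∫ x, hankelDensity b φ x * cexp ((1 - w) * hankelPath b φ x) :=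
    (differentiable_integral_mul_cexp (measurable_hankelDensity b φ).aestronglyMeasurable
      (continuous_hankelPath b φ).aestronglyMeasurable
      (integrable_norm_hankelDensity_mul_exp_norm hb hcos)).comp (differentiable_id.const_sub 1)
  have hnear : (fun w ↦ (Complex.Gamma w)⁻¹) =ᶠ[𝓝 0] fun w ↦
      ∫ x, hankelDensity b φ x * cexp ((1 - w) * hankelPath b φ x) := by
    filter_upwards [(isOpen_lt continuous_re continuous_const).mem_nhds
      (show (0 : ℂ).re < 1 by simp)] with w hw
    exact inv_Gamma_eq_integral_hankelDensity_of_re_lt_one hb hφ₀ hφπ hcos hw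
  exact congrFun (AnalyticOnNhd.eq_of_eventuallyEq
    (Complex.differentiable_one_div_Gamma.differentiableOn.analyticOnNhd isOpen_univ)
    (hentire.differentiableOn.analyticOnNhd isOpen_univ) hnear) w

theorem le_re_cexp_mul_hankelPath (hb : 0 < b) (hφ₀ : 0 ≤ φ) (hν : 0 ≤ ν) (hνφ : ν * φ ≤ π / 2)
    (x : ℝ) :
    rexp (ν * b) * Real.cos (ν * φ) ≤ (cexp (ν * hankelPath b φ x)).re := by
  have hre : b ≤ (hankelPath b φ x).re := (le_max_left b |x|).trans_eq (hankelPath_re b φ x).symm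
  have him : |ν * (hankelPath b φ x).im| ≤ ν * φ := by
    rw [abs_mul, abs_of_nonneg hν]
    exact mul_le_mul_of_nonneg_left (abs_hankelPath_im_le hb hφ₀ x) hν
  have hcos : Real.cos (ν * φ) ≤ Real.cos (ν * (hankelPath b φ x).im) := by
    rw [← Real.cos_abs (ν * (hankelPath b φ x).im)]
    exact Real.cos_le_cos_of_nonneg_of_le_pi (abs_nonneg _) (by linarith [Real.pi_pos]) him
  have hcos₀ : 0 ≤ Real.cos (ν * φ) :=
    Real.cos_nonneg_of_neg_pi_div_two_le_of_le (by linarith [Real.pi_pos, mul_nonneg hν hφ₀]) hνφ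
  rw [Complex.exp_re, re_ofReal_mul, im_ofReal_mul]
  gcongr

end Contour

section MWright

variable {ν b φ : ℝ}

theorem integrable_norm_hankelDensity_mul_cexp_mul_exp (hb : 0 < b) (hcos : Real.cos φ < 0)
    (hν : ν < 1) (a : ℝ) :
    Integrable fun x ↦ ‖hankelDensity b φ x * cexp (ν * hankelPath b φ x)‖ *
      rexp (a * ‖cexp (ν * hankelPath b φ x)‖) := by
  have hmajorant := integrable_norm_hankelDensity_mul hb hcos hν 0 (a + 1)
  simp only [zero_mul, zero_add] at hmajorant
  refine hmajorant.mono' ?_ (.of_forall fun x ↦ ?_)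
  · exact (integrable_hankelDensity_mul_cexp hb hcos ν).aestronglyMeasurable.norm.mul
      (Continuous.aestronglyMeasurable (by fun_prop))
  · have hle (t : ℝ) : t * rexp (a * t) ≤ rexp ((a + 1) * t) := by
      calc t * rexp (a * t) ≤ rexp t * rexp (a * t) := by
            gcongr
            linarith [Real.add_one_le_exp t]
        _ = rexp ((a + 1) * t) := by
            rw [← Real.exp_add]
            ring_nf
    rw [norm_mul, norm_norm, Real.norm_of_nonneg (Real.exp_pos _).le, norm_mul, mul_assoc]
    gcongr
    exact hle _

theorem mWright_eq_integral_hankelDensity (hb : 0 < b) (hφ₀ : 0 ≤ φ) (hφπ : φ ≤ π)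
    (hcos : Real.cos φ < 0) (hν : ν < 1) (z : ℝ) :
    (mWright ν z : ℂ) = ∫ x, hankelDensity b φ x * cexp (ν * hankelPath b φ x) *
      cexp (-z * cexp (ν * hankelPath b φ x)) := by
  have hsum := hasSum_integral_mul_cexp (z := -z)
    (integrable_hankelDensity_mul_cexp hb hcos ν).aestronglyMeasurable
    (Continuous.aestronglyMeasurable (by fun_prop))
    (integrable_norm_hankelDensity_mul_cexp_mul_exp hb hcos hν ‖(-z : ℂ)‖)
  have hmoment (n : ℕ) :
      ∫ x, hankelDensity b φ x * cexp (ν * hankelPath b φ x) * cexp (ν * hankelPath b φ x) ^ n =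
        ((Real.Gamma (-(ν * n) + 1 - ν) : ℝ) : ℂ)⁻¹ := by
    rw [← Complex.Gamma_ofReal, inv_Gamma_eq_integral_hankelDensity hb hφ₀ hφπ hcos]
    congr with x
    rw [mul_assoc, ← Complex.exp_nat_mul, ← Complex.exp_add]
    push_cast
    ring_nf
  rw [← hsum.tsum_eq, mWright, ofReal_tsum]
  congr with n
  rw [hmoment]
  push_cast
  rw [div_mul_eq_div_div, div_eq_mul_inv]

theorem hasSum_mittagLeffler_integral_hankelDensity {s : ℂ} (hb : 0 < b) (hφ₀ : 0 ≤ φ)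
    (hφπ : φ ≤ π) (hcos : Real.cos φ < 0) {δ : ℝ} (hs : ‖s‖ < δ)
    (hδ : ∀ x, δ ≤ ‖cexp (ν * hankelPath b φ x)‖) :
    HasSum (fun n : ℕ ↦ (-s) ^ n / (Real.Gamma (ν * n + 1) : ℂ))
      (∫ x, hankelDensity b φ x * cexp (ν * hankelPath b φ x) /
        (s + cexp (ν * hankelPath b φ x))) := by
  have h_int : Integrable (hankelDensity b φ) := by
    simpa using integrable_hankelDensity_mul_cexp hb hcos 0
  have hmoment (n : ℕ) : ∫ x, hankelDensity b φ x * (cexp (ν * hankelPath b φ x))⁻¹ ^ n =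
      ((Real.Gamma (ν * n + 1) : ℝ) : ℂ)⁻¹ := by
    rw [← Complex.Gamma_ofReal, inv_Gamma_eq_integral_hankelDensity hb hφ₀ hφπ hcos]
    congr with x
    rw [← Complex.exp_neg, ← Complex.exp_nat_mul]
    push_cast
    ring_nf
  have hsum := hasSum_integral_geometric h_int (Continuous.aestronglyMeasurable (by fun_prop)) hs
    (.of_forall hδ)
  simpa only [hmoment, ← div_eq_mul_inv, ← mul_div_assoc] using hsum

theorem exists_hankelPath_parameters (hν₀ : 0 < ν) (hν₁ : ν < 1) (r : ℝ) :
    ∃ b φ, 0 < b ∧ 0 ≤ φ ∧ φ ≤ π ∧ Real.cos φ < 0 ∧ ν * φ ≤ π / 2 ∧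
      r < rexp (ν * b) * Real.cos (ν * φ) := by
  have hπ := Real.pi_pos
  obtain ⟨φ, hφ, hφπ, hνφ⟩ : ∃ φ, π / 2 < φ ∧ φ ≤ π ∧ ν * φ < π / 2 := by
    refine ⟨π / (1 + ν), div_lt_div_of_pos_left hπ (by positivity) (by linarith),
      div_le_self hπ.le (by linarith), ?_⟩
    rw [← mul_div_assoc, div_lt_div_iff₀ (by positivity) two_pos]
    nlinarith
  have hφ₀ : 0 < φ := by linarith
  have hcos : 0 < Real.cos (ν * φ) :=
    Real.cos_pos_of_mem_Ioo ⟨by linarith [mul_pos hν₀ hφ₀], hνφ⟩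
  have hlarge : Tendsto (fun b ↦ rexp (ν * b) * Real.cos (ν * φ)) atTop atTop :=
    (Real.tendsto_exp_atTop.comp (tendsto_id.const_mul_atTop hν₀)).atTop_mul_const hcos
  obtain ⟨b, hr, hb⟩ := ((hlarge.eventually_gt_atTop r).and (eventually_gt_atTop 0)).exists
  exact ⟨b, φ, hb, hφ₀.le, hφπ, Real.cos_neg_of_pi_div_two_lt_of_lt hφ (by linarith), hνφ.le, hr⟩

end MWright

theorem mWright_laplace_mittagLeffler_general (ν : ℝ) (s : ℂ) (hν₀ : 0 < ν) (hν₁ : ν < 1) :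
    IntegrableOn (fun z : ℝ ↦ cexp (-s * z) * mWright ν z) (Ioi 0) ∧
      HasSum (fun n : ℕ ↦ (-s) ^ n / (Real.Gamma (ν * n + 1) : ℂ))
        (∫ z in Ioi (0 : ℝ), cexp (-s * z) * mWright ν z) := by
  obtain ⟨b, φ, hb, hφ₀, hφπ, hcos, hνφ, hs⟩ := exists_hankelPath_parameters hν₀ hν₁ ‖s‖
  have hδ := le_re_cexp_mul_hankelPath hb hφ₀ hν₀.le hνφ
  have h_int := integrable_hankelDensity_mul_cexp hb hcos ν
  have hmeas : AEStronglyMeasurable (fun x ↦ cexp (ν * hankelPath b φ x)) :=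
    Continuous.aestronglyMeasurable (by fun_prop)
  have hre : 0 < s.re + rexp (ν * b) * Real.cos (ν * φ) := by
    linarith [neg_le_of_abs_le (abs_re_le_norm s)]
  simp_rw [mWright_eq_integral_hankelDensity hb hφ₀ hφπ hcos hν₁]
  refine ⟨integrableOn_cexp_mul_integral h_int hmeas (.of_forall hδ) hre, ?_⟩
  rw [integral_Ioi_cexp_mul_integral h_int hmeas (.of_forall hδ) hre]
  exact hasSum_mittagLeffler_integral_hankelDensity hb hφ₀ hφπ hcos hs
    fun x ↦ (hδ x).trans (re_le_norm _)

end

/-- The Laplace transform of the M-Wright function is the Mittag-Leffler function: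
for `0 < ν < 1` and `s ≥ 0`, the integral `∫₀^∞ e^(-sz) M_ν(z) dz` converges and
equals `E_ν(-s) = Σ_{n=0}^∞ (-s)ⁿ / Γ(νn + 1)`. -/
theorem mWright_laplace_mittagLeffler (ν s : ℝ) (hν0 : 0 < ν) (hν1 : ν < 1) (hs : 0 ≤ s) :
    IntegrableOn (fun z => Real.exp (-s * z) * mWright ν z) (Set.Ioi 0) ∧
    ∫ z in Set.Ioi (0:ℝ), Real.exp (-s * z) * mWright ν z
      = ∑' n : ℕ, (-s) ^ n / Real.Gamma (ν * n + 1) := by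
  obtain ⟨h_int, hsum⟩ := mWright_laplace_mittagLeffler_general ν s hν0 hν1
  have hcast (z : ℝ) : Complex.exp (-s * z) * mWright ν z =
      ((Real.exp (-s * z) * mWright ν z : ℝ) : ℂ) := by
    push_cast
    rfl
  simp only [hcast, integral_complex_ofReal] at h_int hsum
  exact ⟨h_int.re, (Complex.hasSum_ofReal.1 (by exact_mod_cast hsum)).tsum_eq.symm⟩
end

section
/- Let 0 < ν < 1. Then the M-Wright function is normalized on the half line: ∫₀^∞ M_ν(z) dz = 1. -/
open MeasureTheory

/-!
Put `ω = exp (iθ)` with `θ = πν / (1 + ν)`. Then `0 < θ < π / 2`, and `θ = ν (π - θ)` says that on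
the ray `σ = -ω̄ r` one has `σ ^ ν = ω r ^ ν`. Turning the Hankel contour of `1 / Γ` onto this ray
makes both `exp σ` and `exp (-z σ ^ ν)` decay, and gives
`M_ν(z) = π⁻¹ Im ∫₀^∞ (exp (-ω̄ r) / r) κ_r(z) dr`, where `κ_r(z) = c exp (-c z)` with `c = ω r ^ ν`
is an exponential density of complex rate `c`, of total mass `1`.

Integrating in `z` under the integral sign is not yet possible, as `exp (-ω̄ r) / r` is not
integrable at `0`. But `exp (-c) κ_r(z) = κ_r(z + 1)` and `∫₀^∞ κ_r(z + 1) / r dr = 1 / (ν (z + 1))`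
is real, so `exp (-ω̄ r)` may be replaced by `exp (-ω̄ r) - exp (-ω r ^ ν)`. Fubini's theorem then
reduces the claim to a Frullani integral:
`Im ∫₀^∞ (exp (-ω̄ r) - exp (-ω r ^ ν)) / r dr = arg ω / ν - arg ω̄ = θ / ν + θ = π`.
-/

open Set Filter Topology
open scoped Complex ComplexConjugate Real

section RightHalfPlane

theorem eqOn_re_pos_of_eqOn_ofReal {E : Type*} [NormedAddCommGroup E] [NormedSpace ℂ E]
    [CompleteSpace E] {f g : ℂ → E} (hf : DifferentiableOn ℂ f {w | 0 < w.re})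
    (hg : DifferentiableOn ℂ g {w | 0 < w.re}) (hfg : ∀ x : ℝ, 0 < x → f x = g x) :
    EqOn f g {w | 0 < w.re} := by
  have hopen : IsOpen {w : ℂ | 0 < w.re} := isOpen_lt continuous_const Complex.continuous_re
  refine (hf.analyticOnNhd hopen).eqOn_of_preconnected_of_frequently_eq (hg.analyticOnNhd hopen)
    (convex_halfSpace_re_gt 0).isPreconnected (z₀ := ((1 : ℝ) : ℂ)) (by simp) ?_
  have hofReal : Tendsto (fun x : ℝ => (x : ℂ)) (𝓝[≠] 1) (𝓝[≠] ((1 : ℝ) : ℂ)) :=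
    Complex.continuous_ofReal.continuousAt.continuousWithinAt.tendsto_nhdsWithin
      fun x hx => by simpa using hx
  refine hofReal.frequently (Eventually.frequently ?_)
  filter_upwards [nhdsWithin_le_nhds (lt_mem_nhds one_pos)] with x hx using hfg x hx

theorem norm_cexp_neg_mul_ofReal (w : ℂ) (u : ℝ) :
    ‖cexp (-(w * u))‖ = rexp (-(w.re * u)) := by
  rw [Complex.norm_exp, Complex.neg_re, Complex.re_mul_ofReal]

theorem differentiableOn_integral_mul_cexp_neg_sub {φ ψ : ℝ → ℂ}
    (hφ : AEStronglyMeasurable φ (volume.restrict (Ioi 0)))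
    (hint : ∀ w : ℂ, 0 < w.re →
      IntegrableOn (fun u : ℝ => φ u * cexp (-(w * u)) - ψ u) (Ioi 0))
    (hderiv : ∀ b : ℝ, 0 < b →
      IntegrableOn (fun u : ℝ => ‖φ u‖ * u * rexp (-(b * u))) (Ioi 0)) :
    DifferentiableOn ℂ
      (fun w : ℂ => ∫ u in Ioi (0 : ℝ), (φ u * cexp (-(w * u)) - ψ u)) {w | 0 < w.re} := by
  intro w (hw : 0 < w.re)
  have hre_ball : ∀ x ∈ Metric.ball w (w.re / 2), w.re / 2 < x.re := fun x hx => by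
    have hdist : ‖x - w‖ < w.re / 2 := by simpa [dist_eq_norm] using hx
    have hre := (abs_le.mp (Complex.abs_re_le_norm (x - w))).1
    rw [Complex.sub_re] at hre
    linarith
  refine (hasDerivAt_integral_of_dominated_loc_of_deriv_le
    (F := fun w u => φ u * cexp (-(w * u)) - ψ u)
    (F' := fun w u => φ u * (cexp (-(w * u)) * -(u : ℂ)))
    (Metric.ball_mem_nhds w (half_pos hw)) ?_ (hint w hw) ?_ ?_
    (hderiv (w.re / 2) (half_pos hw)) ?_).2.differentiableAt.differentiableWithinAt
  · filter_upwards [Metric.ball_mem_nhds w (half_pos hw)] with x hx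
    exact (hint x ((half_pos hw).trans (hre_ball x hx))).aestronglyMeasurable
  · exact hφ.mul (by fun_prop)
  · refine ae_restrict_of_forall_mem measurableSet_Ioi fun u (hu : 0 < u) x hx => ?_
    rw [norm_mul, norm_mul, norm_neg, norm_cexp_neg_mul_ofReal, Complex.norm_real,
      Real.norm_of_nonneg hu.le, mul_comm (Real.exp _), ← mul_assoc]
    gcongr
    exact (hre_ball x hx).le
  · refine ae_of_all _ fun u x _ => ?_
    simpa using ((((hasDerivAt_id x).mul_const (u : ℂ)).neg.cexp).const_mul (φ u)).sub_const (ψ u)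

end RightHalfPlane

section GammaIntegral

theorem integrableOn_rpow_mul_exp_neg_mul {s b : ℝ} (hs : 0 < s) (hb : 0 < b) :
    IntegrableOn (fun r : ℝ => r ^ (s - 1) * rexp (-(b * r))) (Ioi 0) := by
  simpa using integrableOn_rpow_mul_exp_neg_mul_rpow (p := 1) (by linarith : -1 < s - 1) one_pos hb

theorem norm_cpow_sub_one_mul_cexp_neg_mul {r : ℝ} (hr : 0 < r) (s w : ℂ) :
    ‖(r : ℂ) ^ (s - 1) * cexp (-(w * r))‖ = r ^ (s.re - 1) * rexp (-(w.re * r)) := by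
  rw [norm_mul, norm_cexp_neg_mul_ofReal, Complex.norm_cpow_eq_rpow_re_of_pos hr, Complex.sub_re,
    Complex.one_re]

theorem integrableOn_exp_neg_mul {b : ℝ} (hb : 0 < b) :
    IntegrableOn (fun r : ℝ => rexp (-(b * r))) (Ioi 0) := by
  simpa using integrableOn_rpow_mul_exp_neg_mul one_pos hb

theorem aestronglyMeasurable_ofReal_cpow (s : ℂ) {μ : Measure ℝ} :
    AEStronglyMeasurable (fun r : ℝ => (r : ℂ) ^ s) μ :=
  (Complex.measurable_ofReal.pow_const s).aestronglyMeasurable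

theorem integrableOn_cpow_mul_cexp_neg_mul {s w : ℂ} (hs : 0 < s.re) (hw : 0 < w.re) :
    IntegrableOn (fun r : ℝ => (r : ℂ) ^ (s - 1) * cexp (-(w * r))) (Ioi 0) := by
  refine (integrableOn_rpow_mul_exp_neg_mul hs hw).mono'
    ((aestronglyMeasurable_ofReal_cpow _).mul (by fun_prop)) ?_
  exact ae_restrict_of_forall_mem measurableSet_Ioi fun r hr =>
    (norm_cpow_sub_one_mul_cexp_neg_mul hr s w).le

/-- Extends `Complex.integral_cpow_mul_exp_neg_mul_Ioi` from real to complex rates `w`. -/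
theorem integral_cpow_mul_cexp_neg_mul {s w : ℂ} (hs : 0 < s.re) (hw : 0 < w.re) :
    ∫ r in Ioi (0 : ℝ), (r : ℂ) ^ (s - 1) * cexp (-(w * r)) =
      w ^ (-s) * Complex.Gamma s := by
  have hdiff := differentiableOn_integral_mul_cexp_neg_sub (ψ := 0)
    (φ := fun r : ℝ => (r : ℂ) ^ (s - 1)) (aestronglyMeasurable_ofReal_cpow _)
    (fun w hw => by simpa using integrableOn_cpow_mul_cexp_neg_mul hs hw)
    (fun b hb => by
      refine (integrableOn_rpow_mul_exp_neg_mul (by linarith : 0 < s.re + 1) hb).congr_fun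
        (fun r (hr : 0 < r) => ?_) measurableSet_Ioi
      rw [Complex.norm_cpow_eq_rpow_re_of_pos hr, ← Real.rpow_add_one hr.ne']
      simp)
  have hcpow : DifferentiableOn ℂ (fun w : ℂ => w ^ (-s) * Complex.Gamma s) {w | 0 < w.re} :=
    fun w hw => ((differentiableAt_id.cpow_const (Or.inl hw)).mul_const _).differentiableWithinAt
  simp only [Pi.zero_apply, sub_zero] at hdiff
  refine eqOn_re_pos_of_eqOn_ofReal hdiff hcpow (fun x hx => ?_) hw
  rw [Complex.integral_cpow_mul_exp_neg_mul_Ioi hs hx, one_div, Complex.inv_cpow, Complex.cpow_neg]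
  simpa [Complex.arg_ofReal_of_nonneg hx.le] using Real.pi_ne_zero.symm

end GammaIntegral

section Frullani

theorem integrableOn_rpow_smul_comp_rpow {E : Type*} [NormedAddCommGroup E] [NormedSpace ℝ E]
    {f : ℝ → E} (hf : IntegrableOn f (Ioi 0)) {p : ℝ} (hp : 0 < p) :
    IntegrableOn (fun r : ℝ => (p * r ^ (p - 1)) • f (r ^ p)) (Ioi 0) := by
  simpa only [abs_of_pos hp] using (integrableOn_Ioi_comp_rpow_iff f hp.ne').mpr hf

/-- The integrand of the Frullani integral `∫₀^∞ (exp (-a u) - 1_{u < 1}) / u du`, whose cutoff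
plays the role of a second exponential. Cutting off at `1` makes it compatible with the
substitutions `u ↦ u ^ p`. -/
noncomputable def frullaniIntegrand (a : ℂ) (u : ℝ) : ℂ :=
  (cexp (-(a * u)) - if u < 1 then 1 else 0) / u

theorem norm_cexp_sub_one_le_of_re_nonpos {x : ℂ} (hx : x.re ≤ 0) : ‖cexp x - 1‖ ≤ ‖x‖ := by
  have hderiv : ∀ y ∈ {y : ℂ | y.re ≤ 0}, ‖cexp y‖ ≤ 1 := fun y (hy : y.re ≤ 0) => by
    simpa [Complex.norm_exp] using hy
  simpa using (convex_halfSpace_re_le 0).norm_image_sub_le_of_norm_hasDerivWithin_le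
    (fun y _ => (Complex.hasDerivAt_exp y).hasDerivWithinAt) hderiv
    (by simp : (0 : ℂ) ∈ {y : ℂ | y.re ≤ 0}) hx

theorem measurable_frullaniIntegrand (a : ℂ) : Measurable (frullaniIntegrand a) :=
  ((by fun_prop : Measurable fun u : ℝ => cexp (-(a * u))).sub
    (Measurable.ite measurableSet_Iio measurable_const measurable_const)).div (by fun_prop)

theorem norm_frullaniIntegrand_le {a : ℂ} (ha : 0 ≤ a.re) {u : ℝ} (hu : 0 < u) :
    ‖frullaniIntegrand a u‖ ≤ (‖a‖ * rexp a.re + 1) * rexp (-(a.re * u)) := by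
  rw [frullaniIntegrand, norm_div, Complex.norm_real, Real.norm_of_nonneg hu.le, div_le_iff₀ hu]
  split_ifs with h
  · have hexp : 1 ≤ rexp a.re * rexp (-(a.re * u)) := by
      rw [← Real.exp_add]
      exact Real.one_le_exp (by nlinarith)
    calc ‖cexp (-(a * u)) - 1‖ ≤ ‖a‖ * u := by
          simpa [abs_of_pos hu] using norm_cexp_sub_one_le_of_re_nonpos (x := -(a * u))
            (by simpa using mul_nonneg ha hu.le)
      _ ≤ ‖a‖ * u * (rexp a.re * rexp (-(a.re * u))) :=
          le_mul_of_one_le_right (by positivity) hexp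
      _ ≤ ‖a‖ * u * (rexp a.re * rexp (-(a.re * u))) + u * rexp (-(a.re * u)) :=
          le_add_of_nonneg_right (by positivity)
      _ = _ := by ring
  · rw [sub_zero, norm_cexp_neg_mul_ofReal]
    have hone : 1 ≤ (‖a‖ * rexp a.re + 1) * u :=
      one_le_mul_of_one_le_of_one_le (le_add_of_nonneg_left (by positivity)) (not_lt.mp h)
    nlinarith [Real.exp_pos (-(a.re * u))]

theorem integrableOn_frullaniIntegrand {a : ℂ} (ha : 0 < a.re) :
    IntegrableOn (frullaniIntegrand a) (Ioi 0) :=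
  ((integrableOn_exp_neg_mul ha).const_mul _).mono'
    (measurable_frullaniIntegrand a).aestronglyMeasurable
    (ae_restrict_of_forall_mem measurableSet_Ioi fun _ => norm_frullaniIntegrand_le ha.le)

theorem differentiableOn_integral_frullaniIntegrand :
    DifferentiableOn ℂ (fun a => ∫ u in Ioi 0, frullaniIntegrand a u) {a | 0 < a.re} := by
  have hform : ∀ (a : ℂ) (u : ℝ), frullaniIntegrand a u =
      (u : ℂ)⁻¹ * cexp (-(a * u)) - (if u < 1 then 1 else 0) / u := fun a u => by
    rw [frullaniIntegrand, sub_div, div_eq_inv_mul]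
  have hint := @integrableOn_frullaniIntegrand
  simp only [funext₂ hform] at hint ⊢
  refine differentiableOn_integral_mul_cexp_neg_sub (by fun_prop) (fun _ => hint) fun b hb => ?_
  refine (integrableOn_exp_neg_mul hb).congr_fun (fun u (hu : 0 < u) => ?_) measurableSet_Ioi
  simp [abs_of_pos hu, hu.ne']

theorem integral_frullaniIntegrand_ofReal {x : ℝ} (hx : 0 < x) :
    ∫ u in Ioi 0, frullaniIntegrand x u = (∫ u in Ioi 0, frullaniIntegrand 1 u) - Real.log x := by
  have hint1 := integrableOn_frullaniIntegrand (a := 1) (by simp)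
  have hintx := integrableOn_frullaniIntegrand (a := x) (by simpa)
  have hdiff : (fun u => frullaniIntegrand 1 u - frullaniIntegrand x u) = fun u : ℝ =>
      u⁻¹ • (cexp (-((1 * u : ℝ) : ℂ)) - cexp (-((x * u : ℝ) : ℂ))) := by
    funext u
    simp only [frullaniIntegrand, Complex.real_smul, Complex.ofReal_mul, Complex.ofReal_inv,
      Complex.ofReal_one]
    ring
  have hzero : Tendsto (fun u : ℝ => cexp (-(u : ℂ))) (𝓝[>] 0) (𝓝 1) :=
    (Continuous.tendsto' (by fun_prop) 0 1 (by simp)).mono_left nhdsWithin_le_nhds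
  have htop : Tendsto (fun u : ℝ => cexp (-(u : ℂ))) atTop (𝓝 0) :=
    Complex.tendsto_exp_nhds_zero_iff.mpr (by simpa using tendsto_neg_atTop_atBot)
  have hfrullani := Frullani.integral_Ioi_eq (f := fun u : ℝ => cexp (-(u : ℂ)))
    (Continuous.locallyIntegrable (by fun_prop) |>.locallyIntegrableOn _) one_pos hx hzero htop
    (hdiff ▸ hint1.sub hintx)
  rw [← hdiff, integral_sub hint1 hintx] at hfrullani
  rw [sub_eq_iff_eq_add.mp hfrullani]
  simp

theorem integral_frullaniIntegrand {a : ℂ} (ha : 0 < a.re) :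
    ∫ u in Ioi 0, frullaniIntegrand a u = (∫ u in Ioi 0, frullaniIntegrand 1 u) - Complex.log a :=
  eqOn_re_pos_of_eqOn_ofReal differentiableOn_integral_frullaniIntegrand
    (fun _ hw => ((Complex.differentiableAt_log (Or.inl hw)).const_sub _).differentiableWithinAt)
    (fun _ hx => by rw [integral_frullaniIntegrand_ofReal hx, Complex.ofReal_log hx.le]) ha

theorem im_integral_frullaniIntegrand {a : ℂ} (ha : 0 < a.re) :
    (∫ u in Ioi 0, frullaniIntegrand a u).im = -a.arg := by
  have hreal : ∀ u, frullaniIntegrand 1 u =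
      ((rexp (-u) - if u < 1 then 1 else 0) / u : ℝ) := fun u => by
    rw [frullaniIntegrand]
    split_ifs <;> simp
  rw [integral_frullaniIntegrand ha, integral_congr_ae (ae_of_all _ hreal), integral_complex_ofReal,
    Complex.sub_im, Complex.ofReal_im, Complex.log_im, zero_sub]

theorem exp_sub_exp_rpow_div_eq_frullaniIntegrand (a b : ℂ) {p r : ℝ} (hp : 0 < p) (hr : 0 < r) :
    (cexp (-(a * r)) - cexp (-(b * (r ^ p : ℝ)))) / r =
      frullaniIntegrand a r - p⁻¹ • (p * r ^ (p - 1)) • frullaniIntegrand b (r ^ p) := by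
  have hrp : ((r ^ p : ℝ) : ℂ) ≠ 0 := Complex.ofReal_ne_zero.mpr (Real.rpow_pos_of_pos hr p).ne'
  simp only [frullaniIntegrand, Real.rpow_lt_one_iff' hr.le hp]
  rw [smul_smul, inv_mul_cancel_left₀ hp.ne', Real.rpow_sub_one hr.ne', Complex.real_smul,
    Complex.ofReal_div]
  field_simp
  ring

theorem integrableOn_exp_sub_exp_rpow_div {a b : ℂ} (ha : 0 < a.re) (hb : 0 < b.re) {p : ℝ}
    (hp : 0 < p) :
    IntegrableOn (fun r : ℝ => (cexp (-(a * r)) - cexp (-(b * (r ^ p : ℝ)))) / r)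
      (Ioi 0) := by
  have hcomp := integrableOn_rpow_smul_comp_rpow (integrableOn_frullaniIntegrand hb) hp
  exact ((integrableOn_frullaniIntegrand ha).sub (hcomp.smul p⁻¹)).congr_fun
    (fun r hr => (exp_sub_exp_rpow_div_eq_frullaniIntegrand a b hp hr).symm) measurableSet_Ioi

theorem im_integral_exp_sub_exp_rpow_div {a b : ℂ} (ha : 0 < a.re) (hb : 0 < b.re) {p : ℝ}
    (hp : 0 < p) :
    (∫ r in Ioi (0 : ℝ), (cexp (-(a * r)) - cexp (-(b * (r ^ p : ℝ)))) / r).im =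
      b.arg / p - a.arg := by
  have hcomp := integrableOn_rpow_smul_comp_rpow (integrableOn_frullaniIntegrand hb) hp
  rw [setIntegral_congr_fun measurableSet_Ioi fun r hr =>
      exp_sub_exp_rpow_div_eq_frullaniIntegrand a b hp hr,
    integral_sub (integrableOn_frullaniIntegrand ha) (hcomp.fun_smul p⁻¹), integral_smul,
    integral_comp_rpow_Ioi_of_pos hp, Complex.sub_im, Complex.smul_im,
    im_integral_frullaniIntegrand ha, im_integral_frullaniIntegrand hb, smul_eq_mul]
  ring

end Frullani

section ComplexExponentialDensity

/-- The exponential density `z ↦ c exp (-c z)` on the half line, of complex rate `c`. -/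
noncomputable def cexpDensity (c : ℂ) (z : ℝ) : ℂ :=
  c * cexp (-(c * z))

theorem cexp_neg_mul_cexpDensity (c : ℂ) (z : ℝ) :
    cexp (-c) * cexpDensity c z = cexpDensity c (z + 1) := by
  rw [cexpDensity, cexpDensity, mul_left_comm, ← Complex.exp_add]
  congr 2
  push_cast
  ring

theorem norm_cexpDensity (c : ℂ) (z : ℝ) : ‖cexpDensity c z‖ = ‖c‖ * rexp (-(c.re * z)) := by
  rw [cexpDensity, norm_mul, norm_cexp_neg_mul_ofReal]

theorem integrableOn_cexpDensity {c : ℂ} (hc : 0 < c.re) :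
    IntegrableOn (cexpDensity c) (Ioi 0) := by
  have hexp := integrableOn_cpow_mul_cexp_neg_mul (s := 1) (by simp) hc
  simp only [sub_self, Complex.cpow_zero, one_mul] at hexp
  exact hexp.const_mul c

theorem integral_cexpDensity {c : ℂ} (hc : 0 < c.re) : ∫ z in Ioi 0, cexpDensity c z = 1 := by
  have hlaplace := integral_cpow_mul_cexp_neg_mul (s := 1) (by simp) hc
  simp only [sub_self, Complex.cpow_zero, one_mul, Complex.cpow_neg_one, Complex.Gamma_one,
    mul_one] at hlaplace
  simp only [cexpDensity]
  rw [integral_const_mul, hlaplace, mul_inv_cancel₀ (Complex.ne_zero_of_re_pos hc)]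

theorem integral_norm_cexpDensity {c : ℂ} (hc : 0 < c.re) :
    ∫ z in Ioi 0, ‖cexpDensity c z‖ = ‖c‖ / c.re := by
  simp only [norm_cexpDensity, ← neg_mul]
  rw [integral_const_mul, integral_exp_mul_Ioi (neg_lt_zero.mpr hc)]
  simp [div_eq_mul_inv]

variable {α : Type*} [MeasurableSpace α] {μ : Measure α} [SFinite μ] {g c : α → ℂ} {C : ℝ}

theorem integrable_mul_cexpDensity (hg : Integrable g μ) (hc : AEStronglyMeasurable c μ)
    (hre : ∀ᵐ x ∂μ, 0 < (c x).re) (hC : ∀ᵐ x ∂μ, ‖c x‖ ≤ C * (c x).re) :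
    Integrable (Function.uncurry fun z x => g x * cexpDensity (c x) z)
      ((volume.restrict (Ioi 0)).prod μ) := by
  have hmeas : AEStronglyMeasurable (Function.uncurry fun z x => g x * cexpDensity (c x) z)
      ((volume.restrict (Ioi 0)).prod μ) :=
    hg.aestronglyMeasurable.comp_snd.mul (hc.comp_snd.mul (Complex.continuous_exp
      |>.comp_aestronglyMeasurable (hc.comp_snd.mul (by fun_prop)).neg))
  refine (integrable_prod_iff' hmeas).mpr ⟨?_, ?_⟩
  · filter_upwards [hre] with x hx using (integrableOn_cexpDensity hx).const_mul (g x)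
  · refine (hg.norm.mul_const C).mono' hmeas.norm.prod_swap.integral_prod_right' ?_
    filter_upwards [hre, hC] with x hx hCx
    simp only [Function.uncurry_apply_pair, norm_mul]
    rw [integral_const_mul, integral_norm_cexpDensity hx, norm_mul, norm_norm,
      Real.norm_of_nonneg (by positivity)]
    gcongr
    exact (div_le_iff₀ hx).mpr hCx

theorem integral_im_integral_mul_cexpDensity (hg : Integrable g μ) (hc : AEStronglyMeasurable c μ)
    (hre : ∀ᵐ x ∂μ, 0 < (c x).re) (hC : ∀ᵐ x ∂μ, ‖c x‖ ≤ C * (c x).re) :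
    ∫ z in Ioi 0, (∫ x, g x * cexpDensity (c x) z ∂μ).im = (∫ x, g x ∂μ).im := by
  have hint := integrable_mul_cexpDensity hg hc hre hC
  have hmass : ∀ᵐ x ∂μ, ∫ z in Ioi 0, g x * cexpDensity (c x) z = g x := by
    filter_upwards [hre] with x hx
    rw [integral_const_mul, integral_cexpDensity hx, mul_one]
  calc ∫ z in Ioi 0, (∫ x, g x * cexpDensity (c x) z ∂μ).im
      = (∫ z in Ioi 0, ∫ x, g x * cexpDensity (c x) z ∂μ).im :=
        integral_im (𝕜 := ℂ) hint.integral_prod_left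
    _ = (∫ x, g x ∂μ).im := by rw [integral_integral_swap hint, integral_congr_ae hmass]

theorem integral_im_integral_mul_cexpDensity_mul_rpow {g : ℝ → ℂ} (hg : IntegrableOn g (Ioi 0))
    {b : ℂ} (hb : 0 < b.re) (p : ℝ) :
    ∫ z in Ioi 0, (∫ r in Ioi 0, g r * cexpDensity (b * (r ^ p : ℝ)) z).im =
      (∫ r in Ioi 0, g r).im := by
  refine integral_im_integral_mul_cexpDensity (C := ‖b‖ / b.re) hg (by fun_prop)
    (ae_restrict_of_forall_mem measurableSet_Ioi fun r (hr : 0 < r) => ?_)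
    (ae_restrict_of_forall_mem measurableSet_Ioi fun r (hr : 0 < r) => ?_)
  · rw [Complex.re_mul_ofReal]
    positivity
  · rw [norm_mul, Complex.re_mul_ofReal, Complex.norm_real, Real.norm_of_nonneg (by positivity),
      ← mul_assoc, div_mul_cancel₀ _ hb.ne']

theorem cexpDensity_mul_rpow_div (b : ℂ) {p z r : ℝ} (hp : 0 < p) (hz : 0 < z) (hr : 0 < r) :
    cexpDensity (b * (r ^ p : ℝ)) z / r =
      (p * z)⁻¹ • (p * r ^ (p - 1)) • cexpDensity (z * b) (r ^ p) := by
  rw [cexpDensity, cexpDensity, Real.rpow_sub_one hr.ne', show z * b * (r ^ p : ℝ) =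
    b * (r ^ p : ℝ) * z by ring, smul_smul, Complex.real_smul]
  push_cast
  have hp' : (p : ℂ) ≠ 0 := by exact_mod_cast hp.ne'
  have hz' : (z : ℂ) ≠ 0 := by exact_mod_cast hz.ne'
  field_simp

theorem integrableOn_cexpDensity_mul_rpow_div {b : ℂ} (hb : 0 < b.re) {p z : ℝ} (hp : 0 < p)
    (hz : 0 < z) : IntegrableOn (fun r : ℝ => cexpDensity (b * (r ^ p : ℝ)) z / r) (Ioi 0) := by
  have hre : 0 < (z * b).re := by simpa using mul_pos hz hb
  have hcomp := integrableOn_rpow_smul_comp_rpow (integrableOn_cexpDensity hre) hp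
  exact IntegrableOn.congr_fun (hcomp.fun_smul (p * z)⁻¹)
    (fun r hr => (cexpDensity_mul_rpow_div b hp hz hr).symm) measurableSet_Ioi

theorem integral_cexpDensity_mul_rpow_div {b : ℂ} (hb : 0 < b.re) {p z : ℝ} (hp : 0 < p)
    (hz : 0 < z) : ∫ r in Ioi (0 : ℝ), cexpDensity (b * (r ^ p : ℝ)) z / r = ((p * z)⁻¹ : ℝ) := by
  have hre : 0 < (z * b).re := by simpa using mul_pos hz hb
  rw [setIntegral_congr_fun measurableSet_Ioi fun r hr => cexpDensity_mul_rpow_div b hp hz hr,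
    integral_smul, integral_comp_rpow_Ioi_of_pos hp, integral_cexpDensity hre, Complex.real_smul,
    mul_one]

end ComplexExponentialDensity

section LaplaceSeries

theorem exists_mul_rpow_le_add_mul {p b : ℝ} (hp0 : 0 < p) (hp1 : p < 1) (hb : 0 < b) (c : ℝ) :
    ∃ C, ∀ r, 0 ≤ r → c * r ^ p ≤ C + b * r := by
  have hq : 0 < 1 - p := sub_pos.mpr hp1
  have hbp : (b / p) ^ p ≠ 0 := by positivity
  set A := (|c| / (b / p) ^ p) ^ (1 - p)⁻¹
  refine ⟨(1 - p) * A, fun r hr => ?_⟩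
  calc c * r ^ p ≤ |c| * r ^ p := by gcongr; exact le_abs_self c
    _ = A ^ (1 - p) * (b / p * r) ^ p := by
        rw [Real.rpow_inv_rpow (by positivity) hq.ne',
          Real.mul_rpow (by positivity) hr, ← mul_assoc, div_mul_cancel₀ _ hbp]
    _ ≤ (1 - p) * A + p * (b / p * r) :=
        Real.geom_mean_le_arith_mean2_weighted hq.le hp0.le (by positivity) (by positivity)
          (by ring)
    _ = (1 - p) * A + b * r := by field_simp

theorem integrableOn_rpow_mul_exp_neg_mul_mul_exp_rpow {s p b : ℝ} (hs : 0 < s) (hp0 : 0 < p)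
    (hp1 : p < 1) (hb : 0 < b) (c : ℝ) :
    IntegrableOn (fun r : ℝ => r ^ (s - 1) * rexp (-(b * r)) * rexp (c * r ^ p)) (Ioi 0) := by
  obtain ⟨C, hC⟩ := exists_mul_rpow_le_add_mul hp0 hp1 (half_pos hb) c
  refine ((integrableOn_rpow_mul_exp_neg_mul hs (half_pos hb)).const_mul (rexp C)).mono'
    (by fun_prop) (ae_restrict_of_forall_mem measurableSet_Ioi fun r (hr : 0 < r) => ?_)
  rw [Real.norm_of_nonneg (by positivity)]
  calc r ^ (s - 1) * rexp (-(b * r)) * rexp (c * r ^ p)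
      ≤ r ^ (s - 1) * rexp (-(b * r)) * rexp (C + b / 2 * r) := by gcongr; exact hC r hr.le
    _ = rexp C * (r ^ (s - 1) * rexp (-(b / 2 * r))) := by
        rw [mul_assoc, ← Real.exp_add, mul_left_comm, ← Real.exp_add]
        ring_nf

theorem ofReal_cpow_mul_succ_sub_one {r : ℝ} (hr : 0 < r) (p : ℝ) (n : ℕ) :
    (r : ℂ) ^ (((p * (n + 1) : ℝ) : ℂ) - 1) = (r ^ p : ℝ) ^ (n + 1) / r := by
  rw [Complex.cpow_sub _ _ (Complex.ofReal_ne_zero.mpr hr.ne'), Complex.cpow_one,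
    ← Complex.ofReal_cpow hr.le, Real.rpow_mul hr.le]
  norm_cast

theorem hasSum_cexp_neg_mul_div_mul_cexpDensity (a b : ℂ) (z p : ℝ) {r : ℝ} (hr : 0 < r) :
    HasSum (fun n : ℕ => ((-z) ^ n / n.factorial : ℝ) * b ^ (n + 1) *
        ((r : ℂ) ^ (((p * (n + 1) : ℝ) : ℂ) - 1) * cexp (-(a * r))))
      (cexp (-(a * r)) / r * cexpDensity (b * (r ^ p : ℝ)) z) := by
  have hexp := (NormedSpace.expSeries_div_hasSum_exp (-(b * (r ^ p : ℝ) * z))).mul_left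
    (cexp (-(a * r)) / r * (b * (r ^ p : ℝ)))
  rw [← Complex.exp_eq_exp_ℂ, mul_assoc _ _ (cexp _)] at hexp
  refine hexp.congr_fun fun n => ?_
  rw [ofReal_cpow_mul_succ_sub_one hr]
  push_cast
  ring

theorem hasSum_norm_cexp_neg_mul_div_mul_cexpDensity (a b : ℂ) (z p : ℝ) {r : ℝ} (hr : 0 < r) :
    HasSum (fun n : ℕ => ‖((-z) ^ n / n.factorial : ℝ) * b ^ (n + 1) *
        ((r : ℂ) ^ (((p * (n + 1) : ℝ) : ℂ) - 1) * cexp (-(a * r)))‖)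
      (‖b‖ * (r ^ (p - 1) * rexp (-(a.re * r)) * rexp (|z| * ‖b‖ * r ^ p))) := by
  have hexp := (NormedSpace.expSeries_div_hasSum_exp (|z| * ‖b‖ * r ^ p)).mul_left
    (‖b‖ * (r ^ (p - 1) * rexp (-(a.re * r))))
  rw [← Real.exp_eq_exp_ℝ, mul_assoc ‖b‖] at hexp
  refine hexp.congr_fun fun n => ?_
  rw [norm_mul, norm_mul, norm_cpow_sub_one_mul_cexp_neg_mul hr, norm_pow, Complex.norm_real,
    norm_div, norm_pow, norm_neg, Complex.ofReal_re, Real.rpow_sub_one hr.ne',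
    Real.rpow_sub_one hr.ne', Real.rpow_mul hr.le, Real.norm_eq_abs, Real.norm_natCast]
  norm_cast
  ring

theorem hasSum_integral_cexp_neg_mul_div_mul_cexpDensity {a : ℂ} (ha : 0 < a.re) (b : ℂ) (z : ℝ)
    {p : ℝ} (hp0 : 0 < p) (hp1 : p < 1) :
    HasSum (fun n : ℕ => ((-z) ^ n / n.factorial : ℝ) * (b ^ (n + 1) *
        (a ^ (-((p * (n + 1) : ℝ) : ℂ)) * Complex.Gamma (p * (n + 1) : ℝ))))
      (∫ r in Ioi (0 : ℝ), cexp (-(a * r)) / r * cexpDensity (b * (r ^ p : ℝ)) z) := by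
  have hnorm := fun r hr => hasSum_norm_cexp_neg_mul_div_mul_cexpDensity a b z p (r := r) hr
  have hsum := hasSum_integral_of_dominated_convergence (μ := volume.restrict (Ioi (0 : ℝ)))
    (F := fun (n : ℕ) (r : ℝ) => ((-z) ^ n / n.factorial : ℝ) * b ^ (n + 1) *
        ((r : ℂ) ^ (((p * (n + 1) : ℝ) : ℂ) - 1) * cexp (-(a * r)))) _
    (fun n => ((aestronglyMeasurable_ofReal_cpow _).mul (by fun_prop)).const_mul _)
    (fun n => ae_of_all _ fun r => le_rfl)
    (ae_restrict_of_forall_mem measurableSet_Ioi fun r hr => (hnorm r hr).summable)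
    (IntegrableOn.congr_fun
      ((integrableOn_rpow_mul_exp_neg_mul_mul_exp_rpow hp0 hp0 hp1 ha _).const_mul ‖b‖)
      (fun r hr => (hnorm r hr).tsum_eq.symm) measurableSet_Ioi)
    (ae_restrict_of_forall_mem measurableSet_Ioi fun r hr =>
      hasSum_cexp_neg_mul_div_mul_cexpDensity a b z p hr)
  refine hsum.congr_fun fun n => ?_
  rw [integral_const_mul, integral_cpow_mul_cexp_neg_mul _ ha, mul_assoc]
  simpa using by positivity

end LaplaceSeries

theorem sin_pi_mul_mul_Gamma_eq_pi_div {s : ℝ} (hs : ∀ m : ℕ, s ≠ -m) :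
    Real.sin (π * s) * Real.Gamma s = π / Real.Gamma (1 - s) := by
  have hreflection := Real.Gamma_mul_Gamma_one_sub s
  rcases eq_or_ne (Real.sin (π * s)) 0 with hsin | hsin
  · have hpole : Real.Gamma (1 - s) = 0 := by
      simpa [hsin, Real.Gamma_ne_zero hs] using hreflection
    rw [hsin, hpole, zero_mul, div_zero]
  · rw [eq_div_iff hsin] at hreflection
    have hGamma : Real.Gamma (1 - s) ≠ 0 := fun h =>
      Real.pi_ne_zero (by rw [← hreflection, h, mul_zero, zero_mul])
    rw [eq_div_iff hGamma]
    linarith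

section MWright

/-- The angle `θ` solving `ν (π - θ) = θ`: turning the Hankel contour of `1 / Γ` onto the ray
`σ = -exp (-iθ) r` turns `σ ^ ν` into `exp (iθ) r ^ ν`. -/
noncomputable def mWrightAngle (ν : ℝ) : ℝ :=
  π * ν / (1 + ν)

/-- The direction `exp (iθ)` of `σ ^ ν` along the rotated Hankel contour, for `θ = mWrightAngle ν`;
the contour itself has direction `-exp (-iθ)`. -/
noncomputable def mWrightDir (ν : ℝ) : ℂ :=
  cexp (mWrightAngle ν * Complex.I)

variable {ν : ℝ}

theorem mWrightAngle_mem_Ioo (hν0 : 0 < ν) (hν1 : ν < 1) : mWrightAngle ν ∈ Ioo 0 (π / 2) := by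
  refine ⟨by unfold mWrightAngle; positivity, ?_⟩
  rw [mWrightAngle, div_lt_div_iff₀ (by linarith) two_pos]
  nlinarith [Real.pi_pos]

theorem log_mWrightDir (hν0 : 0 < ν) (hν1 : ν < 1) :
    Complex.log (mWrightDir ν) = mWrightAngle ν * Complex.I := by
  obtain ⟨hpos, hlt⟩ := mWrightAngle_mem_Ioo hν0 hν1
  rw [mWrightDir, Complex.log_exp] <;> simp <;> linarith [Real.pi_pos]

theorem arg_mWrightDir (hν0 : 0 < ν) (hν1 : ν < 1) : (mWrightDir ν).arg = mWrightAngle ν := by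
  rw [← Complex.log_im, log_mWrightDir hν0 hν1, Complex.im_ofReal_mul, Complex.I_im, mul_one]

theorem re_mWrightDir_pos (hν0 : 0 < ν) (hν1 : ν < 1) : 0 < (mWrightDir ν).re := by
  obtain ⟨hpos, hlt⟩ := mWrightAngle_mem_Ioo hν0 hν1
  rw [mWrightDir, Complex.exp_ofReal_mul_I_re]
  exact Real.cos_pos_of_mem_Ioo ⟨by linarith, hlt⟩

theorem mWrightDir_pow_mul_conj_cpow (hν0 : 0 < ν) (hν1 : ν < 1) (n : ℕ) :
    mWrightDir ν ^ (n + 1) * conj (mWrightDir ν) ^ (-((ν * (n + 1) : ℝ) : ℂ)) =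
      cexp ((π * (ν * (n + 1)) : ℝ) * Complex.I) := by
  have hre := re_mWrightDir_pos hν0 hν1
  have hangle : (n + 1) * mWrightAngle ν + mWrightAngle ν * (ν * (n + 1)) = π * (ν * (n + 1)) := by
    rw [mWrightAngle]
    field_simp
  rw [Complex.cpow_def_of_ne_zero (by simpa using Complex.ne_zero_of_re_pos hre),
    Complex.log_conj _ (Complex.slitPlane_arg_ne_pi (Or.inl hre)),
    log_mWrightDir hν0 hν1, mWrightDir, ← Complex.exp_nat_mul, ← Complex.exp_add, ← hangle,
    map_mul, Complex.conj_ofReal, Complex.conj_I]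
  congr 1
  push_cast
  ring

theorem im_mWrightDir_pow_mul_Gamma (hν0 : 0 < ν) (hν1 : ν < 1) (n : ℕ) :
    (mWrightDir ν ^ (n + 1) * (conj (mWrightDir ν) ^ (-((ν * (n + 1) : ℝ) : ℂ)) *
      Complex.Gamma (ν * (n + 1) : ℝ))).im = π / Real.Gamma (-(ν * n) + 1 - ν) := by
  have hs : 0 < ν * (n + 1) := by positivity
  rw [← mul_assoc, mWrightDir_pow_mul_conj_cpow hν0 hν1, Complex.Gamma_ofReal,
    Complex.im_mul_ofReal, Complex.exp_ofReal_mul_I_im, sin_pi_mul_mul_Gamma_eq_pi_div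
      fun m => ((neg_nonpos.mpr m.cast_nonneg).trans_lt hs).ne']
  ring_nf

theorem mWright_eq_im_integral (hν0 : 0 < ν) (hν1 : ν < 1) (z : ℝ) :
    mWright ν z = π⁻¹ * (∫ r in Ioi (0 : ℝ), cexp (-(conj (mWrightDir ν) * r)) / r *
      cexpDensity (mWrightDir ν * (r ^ ν : ℝ)) z).im := by
  have hseries := Complex.hasSum_im (hasSum_integral_cexp_neg_mul_div_mul_cexpDensity
    (a := conj (mWrightDir ν)) (by simpa using re_mWrightDir_pos hν0 hν1) (mWrightDir ν) z hν0 hν1)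
  rw [mWright, ← (hseries.mul_left π⁻¹).tsum_eq]
  refine tsum_congr fun n => ?_
  rw [Complex.im_ofReal_mul, im_mWrightDir_pow_mul_Gamma hν0 hν1]
  field_simp

theorem mWright_eq_im_integral_sub (hν0 : 0 < ν) (hν1 : ν < 1) {z : ℝ} (hz : 0 < z) :
    mWright ν z = π⁻¹ * (∫ r in Ioi (0 : ℝ), (cexp (-(conj (mWrightDir ν) * r)) -
      cexp (-(mWrightDir ν * (r ^ ν : ℝ)))) / r *
        cexpDensity (mWrightDir ν * (r ^ ν : ℝ)) z).im := by
  have hre := re_mWrightDir_pos hν0 hν1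
  have hint : IntegrableOn (fun r : ℝ => cexp (-(conj (mWrightDir ν) * r)) *
      (cexpDensity (mWrightDir ν * (r ^ ν : ℝ)) z / r)) (Ioi 0) :=
    (integrableOn_cexpDensity_mul_rpow_div hre hν0 hz).bdd_mul (c := 1) (by fun_prop)
      (ae_restrict_of_forall_mem measurableSet_Ioi fun r (hr : 0 < r) => by
        rw [norm_cexp_neg_mul_ofReal, Complex.conj_re]
        exact Real.exp_le_one_iff.mpr (neg_nonpos.mpr (by positivity)))
  have hshift : ∀ r : ℝ, (cexp (-(conj (mWrightDir ν) * r)) -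
        cexp (-(mWrightDir ν * (r ^ ν : ℝ)))) / r * cexpDensity (mWrightDir ν * (r ^ ν : ℝ)) z =
      cexp (-(conj (mWrightDir ν) * r)) * (cexpDensity (mWrightDir ν * (r ^ ν : ℝ)) z / r) -
        cexpDensity (mWrightDir ν * (r ^ ν : ℝ)) (z + 1) / r := fun r => by
    rw [← cexp_neg_mul_cexpDensity]
    ring
  simp only [hshift]
  rw [integral_sub hint (integrableOn_cexpDensity_mul_rpow_div hre hν0 (by linarith)),
    integral_cexpDensity_mul_rpow_div hre hν0 (by linarith), Complex.sub_im, Complex.ofReal_im,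
    sub_zero, mWright_eq_im_integral hν0 hν1]
  simp only [mul_div_left_comm, div_mul_eq_mul_div, mul_div_assoc]

theorem im_integral_mWrightDir (hν0 : 0 < ν) (hν1 : ν < 1) :
    (∫ r in Ioi (0 : ℝ), (cexp (-(conj (mWrightDir ν) * r)) -
      cexp (-(mWrightDir ν * (r ^ ν : ℝ)))) / r).im = π := by
  have hre := re_mWrightDir_pos hν0 hν1
  rw [im_integral_exp_sub_exp_rpow_div (by simpa) hre hν0, Complex.arg_conj,
    if_neg (Complex.slitPlane_arg_ne_pi (Or.inl hre)), arg_mWrightDir hν0 hν1, mWrightAngle]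
  field_simp
  ring

end MWright

/-- For `0 < ν < 1` the M-Wright function is normalized on the half line:
`∫₀^∞ M_ν(z) dz = 1`. -/
theorem mWright_normalized (ν : ℝ) (hν0 : 0 < ν) (hν1 : ν < 1) :
    ∫ z in Set.Ioi (0:ℝ), mWright ν z = 1 := by
  have hω := re_mWrightDir_pos hν0 hν1
  have hint := integrableOn_exp_sub_exp_rpow_div (a := conj (mWrightDir ν)) (by simpa) hω hν0
  rw [setIntegral_congr_fun measurableSet_Ioi fun z hz => mWright_eq_im_integral_sub hν0 hν1 hz,
    integral_const_mul, integral_im_integral_mul_cexpDensity_mul_rpow hint hω,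
    im_integral_mWrightDir hν0 hν1, inv_mul_cancel₀ Real.pi_ne_zero]
end

section
/- Let 0 < ν < 1. Then the M-Wright function is nonnegative on the half line: M_ν(z) ≥ 0 for every z ≥ 0. Consequently the fundamental solution G_C(x,t;ν) = (1/(2 t^ν)) M_ν(|x|/t^ν) of the Cauchy problem for the time-fractional diffusion-wave equation is a probability density in x for each fixed t > 0. -/
open MeasureTheory

/-!
Let `S_k` be a random walk with `k` independent Sibuya steps, of generating function
`1 - (1 - X)^ν`. Its distribution function `P(S_k ≤ N) = [X^N] (1 - (1 - X)^ν)^k (1 - X)⁻¹` is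
nonnegative and, the steps being positive, decreasing in `k`. Expanding the `k`-th power and using
`[X^N] (1 - X)^(ν j - 1) ~ N^(-ν j) / Γ(1 - ν j)` one sees that for `k = ⌊z N^ν⌋` it tends to
`W(z) = ∑ (-z)^j / (j! Γ(1 - ν j))`, so `W` is nonnegative and decreasing; as `W' = -M_ν`, this is
the nonnegativity of `M_ν`. Evaluating the generating function at `1 - 1 / N` gives
`W(z) ≤ e^(1 - z)`, whence `∫_0^∞ M_ν = W(0) - W(∞) = 1`.
-/

open Filter Finset Topology
open scoped PowerSeries Nat

section NonnegCoeff

/-- The semiring of power series with nonnegative coefficients, bundled as a subsemiring so that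
closure under products and powers is `mul_mem` and `pow_mem`. -/
def nonnegCoeff (R : Type*) [Semiring R] [PartialOrder R] [IsOrderedRing R] :
    Subsemiring R⟦X⟧ where
  carrier := {f | ∀ n, 0 ≤ PowerSeries.coeff n f}
  zero_mem' n := by simp
  one_mem' n := by
    rw [PowerSeries.coeff_one]
    split_ifs <;> simp
  add_mem' hf hg n := by simpa using add_nonneg (hf n) (hg n)
  mul_mem' hf hg n := by
    rw [PowerSeries.coeff_mul]
    exact sum_nonneg fun _ _ ↦ mul_nonneg (hf _) (hg _)

theorem sum_coeff_mul_pow_le {f : ℝ⟦X⟧} (hf : f ∈ nonnegCoeff ℝ) {r a : ℝ} (hr₀ : 0 ≤ r)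
    (hr₁ : r ≤ 1) (ha : HasSum (fun n ↦ PowerSeries.coeff n f * r ^ n) a) (N : ℕ) :
    (∑ n ∈ range (N + 1), PowerSeries.coeff n f) * r ^ N ≤ a := by
  calc (∑ n ∈ range (N + 1), PowerSeries.coeff n f) * r ^ N
      ≤ ∑ n ∈ range (N + 1), PowerSeries.coeff n f * r ^ n := by
        rw [sum_mul]
        exact sum_le_sum fun n hn ↦ mul_le_mul_of_nonneg_left
          (pow_le_pow_of_le_one hr₀ hr₁ (mem_range_succ_iff.1 hn)) (hf n)
    _ ≤ a := sum_le_hasSum _ (fun n _ ↦ mul_nonneg (hf n) (pow_nonneg hr₀ n)) ha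

end NonnegCoeff

section PowerSeriesSum

variable {𝕜 : Type*} [RCLike 𝕜]

theorem hasSum_coeff_one (r : 𝕜) :
    HasSum (fun n ↦ PowerSeries.coeff n (1 : 𝕜⟦X⟧) * r ^ n) 1 := by
  simpa using hasSum_single (f := fun n ↦ PowerSeries.coeff n (1 : 𝕜⟦X⟧) * r ^ n) 0
    fun n hn ↦ by simp [PowerSeries.coeff_one, hn]

theorem hasSum_coeff_mul {f g : 𝕜⟦X⟧} {r a b : 𝕜}
    (hf : HasSum (fun n ↦ PowerSeries.coeff n f * r ^ n) a)
    (hg : HasSum (fun n ↦ PowerSeries.coeff n g * r ^ n) b) :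
    HasSum (fun n ↦ PowerSeries.coeff n (f * g) * r ^ n) (a * b) := by
  have hf' := summable_norm_iff.2 hf.summable
  have hg' := summable_norm_iff.2 hg.summable
  convert! (summable_norm_sum_mul_antidiagonal_of_summable_norm hf' hg').of_norm.hasSum using 1
  · ext n
    rw [PowerSeries.coeff_mul, sum_mul]
    refine sum_congr rfl fun ij hij ↦ ?_
    rw [← mem_antidiagonal.1 hij, pow_add]
    ring
  · rw [← tsum_mul_tsum_eq_tsum_sum_antidiagonal_of_summable_norm hf' hg', hf.tsum_eq, hg.tsum_eq]

theorem hasSum_coeff_pow {f : 𝕜⟦X⟧} {r a : 𝕜}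
    (hf : HasSum (fun n ↦ PowerSeries.coeff n f * r ^ n) a) (k : ℕ) :
    HasSum (fun n ↦ PowerSeries.coeff n (f ^ k) * r ^ n) (a ^ k) := by
  induction k with
  | zero => simpa only [pow_zero] using hasSum_coeff_one r
  | succ k ih => simpa only [pow_succ] using hasSum_coeff_mul ih hf

theorem hasDerivAt_tsum_mul_pow {a : ℕ → 𝕜}
    (ha : ∀ r : ℝ, 0 ≤ r → Summable fun n ↦ ‖a n‖ * r ^ n) (z : 𝕜) :
    HasDerivAt (fun y ↦ ∑' n, a n * y ^ n) (∑' n : ℕ, (n + 1) * a (n + 1) * z ^ n) z := by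
  set R : ℝ := ‖z‖ + 1
  have hR : 0 < R := by positivity
  have hz : z ∈ Metric.ball (0 : 𝕜) R := by simp [R]
  have hs : Summable fun n ↦ ‖a n‖ * (2 * (R + 1)) ^ n := ha _ (by positivity)
  have hbound (n : ℕ) (y : 𝕜) (hy : y ∈ Metric.ball 0 R) :
      ‖a n * (n * y ^ (n - 1))‖ ≤ ‖a n‖ * (2 * (R + 1)) ^ n := by
    have hy' : ‖y‖ ≤ R + 1 := by linarith [mem_ball_zero_iff.1 hy]
    have hn : (n : ℝ) ≤ 2 ^ n := mod_cast n.lt_two_pow_self.le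
    rw [norm_mul, norm_mul, norm_pow, RCLike.norm_natCast, mul_pow]
    gcongr
    calc ‖y‖ ^ (n - 1) ≤ (R + 1) ^ (n - 1) := by gcongr
      _ ≤ (R + 1) ^ n := pow_le_pow_right₀ (by linarith) n.pred_le
  have hsum : Summable fun n : ℕ ↦ a n * (n * z ^ (n - 1)) := .of_norm_bounded hs (hbound · z hz)
  have h0 : Summable fun n ↦ a n * (0 : 𝕜) ^ n :=
    summable_of_ne_finset_zero (s := {0}) fun n hn ↦ by simp_all
  convert! hasDerivAt_tsum_of_isPreconnected hs Metric.isOpen_ball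
    (convex_ball (0 : 𝕜) R).isPreconnected (fun n y _ ↦ (hasDerivAt_pow n y).const_mul (a n))
    hbound (Metric.mem_ball_self hR) h0 hz using 1
  rw [hsum.tsum_eq_zero_add]
  simp only [Nat.cast_zero, zero_mul, mul_zero, zero_add, Nat.cast_add_one, add_tsub_cancel_right]
  exact tsum_congr fun n ↦ by ring

end PowerSeriesSum

section Multichoose

theorem succ_mul_multichoose_succ {K : Type*} [Field K] [CharZero K] (s : K) (n : ℕ) :
    (n + 1) * Ring.multichoose s (n + 1) = (s + n) * Ring.multichoose s n := by
  have h (m : ℕ) : (m ! : K) * Ring.multichoose s m = (ascPochhammer K m).eval s := by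
    rw [← nsmul_eq_mul, Ring.factorial_nsmul_multichoose_eq_ascPochhammer,
      Polynomial.ascPochhammer_smeval_eq_eval]
  have hsucc := h (n + 1)
  rw [ascPochhammer_succ_eval, ← h n, Nat.factorial_succ] at hsucc
  push_cast at hsucc
  refine mul_left_cancel₀ (Nat.cast_ne_zero.2 n.factorial_ne_zero : (n ! : K) ≠ 0) ?_
  linear_combination hsucc

theorem multichoose_eq_prod {K : Type*} [Field K] [CharZero K] (s : K) (n : ℕ) :
    Ring.multichoose s n = ∏ i ∈ range n, (s + i) / (i + 1) := by
  induction n with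
  | zero => simp
  | succ n ih =>
    rw [prod_range_succ, ← ih, mul_div_assoc', eq_div_iff n.cast_add_one_ne_zero]
    linear_combination succ_mul_multichoose_succ s n

theorem multichoose_nonneg {s : ℝ} (hs : 0 ≤ s) (n : ℕ) : 0 ≤ Ring.multichoose s n := by
  rw [multichoose_eq_prod]
  exact prod_nonneg fun i _ ↦ by positivity

theorem multichoose_succ_nonpos {s : ℝ} (hs₁ : -1 ≤ s) (hs₀ : s ≤ 0) (n : ℕ) :
    Ring.multichoose s (n + 1) ≤ 0 := by
  rw [multichoose_eq_prod, prod_range_succ']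
  refine mul_nonpos_of_nonneg_of_nonpos (prod_nonneg fun i _ ↦ ?_) (by simpa using hs₀)
  push_cast
  exact div_nonneg (by linarith [i.cast_nonneg (α := ℝ)]) (by positivity)

theorem abs_multichoose_one_sub_le_exp {a : ℝ} {N : ℕ} (hN : N ≤ a) :
    |Ring.multichoose (1 - a) N| ≤ Real.exp a := by
  have ha : 0 ≤ a := N.cast_nonneg.trans hN
  calc |Ring.multichoose (1 - a) N| ≤ ∏ i ∈ range N, a / (i + 1) := by
        rw [multichoose_eq_prod, abs_prod]
        gcongr with i hi
        have hi : (i : ℝ) + 1 ≤ a := le_trans (mod_cast mem_range.1 hi) hN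
        rw [abs_div, abs_of_nonpos (by linarith : 1 - a + i ≤ 0),
          abs_of_pos (by positivity : (0 : ℝ) < i + 1)]
        gcongr
        linarith [i.cast_nonneg (α := ℝ)]
    _ = a ^ N / N ! := by
        rw [prod_div_distrib, prod_const, card_range, ← prod_range_add_one_eq_factorial]
        push_cast
        rfl
    _ ≤ Real.exp a := Real.pow_div_factorial_le_exp a ha N

theorem abs_multichoose_one_sub_mul_rpow_succ_le {a : ℝ} {N : ℕ} (ha₀ : 0 ≤ a) (ha : a ≤ N + 1) :
    |Ring.multichoose (1 - a) (N + 1)| * ((N + 1 : ℕ) + 1 : ℝ) ^ a ≤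
      |Ring.multichoose (1 - a) N| * (N + 1 : ℝ) ^ a := by
  set x : ℝ := (N + 1 : ℝ)⁻¹
  have hax : a * x ≤ 1 := by rwa [← div_eq_mul_inv, div_le_one (by positivity)]
  have hstep : Ring.multichoose (1 - a) (N + 1) = Ring.multichoose (1 - a) N * (1 - a * x) := by
    simp only [x]
    field_simp
    linear_combination succ_mul_multichoose_succ (1 - a) N
  have hbase : ((N + 1 : ℕ) + 1 : ℝ) = (N + 1) * (1 + x) := by
    simp only [x]
    push_cast
    field_simp
  have hfactor : (1 - a * x) * (1 + x) ^ a ≤ 1 := by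
    calc (1 - a * x) * (1 + x) ^ a ≤ Real.exp (-(a * x)) * Real.exp x ^ a := by
          gcongr
          · exact Real.one_sub_le_exp_neg _
          · linarith [Real.add_one_le_exp x]
      _ = 1 := by rw [← Real.exp_mul, ← Real.exp_add, mul_comm x, neg_add_cancel, Real.exp_zero]
  rw [hstep, abs_mul, abs_of_nonneg (sub_nonneg.2 hax), hbase,
    Real.mul_rpow (by positivity) (by positivity)]
  calc _ = |Ring.multichoose (1 - a) N| * (N + 1 : ℝ) ^ a * ((1 - a * x) * (1 + x) ^ a) := by ring
    _ ≤ _ := mul_le_of_le_one_right (by positivity) hfactor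

theorem abs_multichoose_one_sub_mul_rpow_le {a : ℝ} (ha : 0 ≤ a) (N : ℕ) :
    |Ring.multichoose (1 - a) N| * (N + 1 : ℝ) ^ a ≤ (Real.exp 1 * (a + 1)) ^ a := by
  have hsmall {n : ℕ} (hn : n ≤ a) :
      |Ring.multichoose (1 - a) n| * (n + 1 : ℝ) ^ a ≤ (Real.exp 1 * (a + 1)) ^ a := by
    rw [Real.mul_rpow (by positivity) (by positivity), Real.exp_one_rpow]
    gcongr
    exact abs_multichoose_one_sub_le_exp hn
  induction N with
  | zero => exact hsmall (by simpa using ha)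
  | succ N ih =>
    rcases le_total ((N + 1 : ℕ) : ℝ) a with hN | hN
    · exact hsmall hN
    · exact (abs_multichoose_one_sub_mul_rpow_succ_le ha (by simpa using hN)).trans ih

theorem tendsto_multichoose_mul_rpow (s : ℝ) :
    Tendsto (fun N : ℕ ↦ Ring.multichoose s N * (N : ℝ) ^ (1 - s)) atTop (𝓝 (Real.Gamma s)⁻¹) := by
  by_cases hs : ∃ m : ℕ, s = -m
  · obtain ⟨m, rfl⟩ := hs
    rw [Real.Gamma_neg_nat_eq_zero, inv_zero]
    refine tendsto_const_nhds.congr' ?_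
    filter_upwards [eventually_gt_atTop m] with N hN
    rw [multichoose_eq_prod, prod_eq_zero (mem_range.2 hN) (by simp), zero_mul]
  · push Not at hs
    have h := ((Real.GammaSeq_tendsto_Gamma s).inv₀ (Real.Gamma_ne_zero hs)).mul
      (tendsto_natCast_div_add_atTop s)
    rw [mul_one] at h
    refine h.congr' ?_
    filter_upwards [eventually_gt_atTop 0] with N hN
    have hN : (0 : ℝ) < N := mod_cast hN
    have hsN : s + N ≠ 0 := fun h ↦ hs N (by linarith)
    rw [multichoose_eq_prod, prod_div_distrib, Real.GammaSeq, prod_range_succ, add_comm (N : ℝ) s,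
      Real.rpow_sub hN, Real.rpow_one, ← prod_range_add_one_eq_factorial]
    push_cast
    field_simp

theorem abs_inv_Gamma_one_sub_le {a : ℝ} (ha : 0 ≤ a) :
    |(Real.Gamma (1 - a))⁻¹| ≤ (Real.exp 1 * (a + 1)) ^ a := by
  refine le_of_tendsto' (tendsto_multichoose_mul_rpow (1 - a)).abs fun N ↦ ?_
  rw [sub_sub_cancel, abs_mul, abs_of_nonneg (Real.rpow_nonneg N.cast_nonneg a)]
  refine le_trans ?_ (abs_multichoose_one_sub_mul_rpow_le ha N)
  gcongr
  linarith

end Multichoose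

section NegPowSeries

/-- The formal power series `(1 - X)^(-s)`, with coefficients `s (s + 1) ⋯ (s + n - 1) / n!`; it
extends `PowerSeries.invOneSubPow` to exponents in a binomial ring. -/
noncomputable def negPowSeries {R : Type*} [CommRing R] [BinomialRing R] (s : R) : R⟦X⟧ :=
  PowerSeries.mk (Ring.multichoose s)

variable {R : Type*} [CommRing R] [BinomialRing R]

@[simp]
theorem coeff_negPowSeries (s : R) (n : ℕ) :
    PowerSeries.coeff n (negPowSeries s) = Ring.multichoose s n :=
  PowerSeries.coeff_mk _ _

theorem negPowSeries_eq_rescale_binomialSeries (s : R) :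
    negPowSeries s = PowerSeries.rescale (-1) (PowerSeries.binomialSeries R (-s)) := by
  ext n
  rw [coeff_negPowSeries, PowerSeries.coeff_rescale, PowerSeries.binomialSeries_coeff,
    Ring.choose_neg']
  rcases n.even_or_odd with hn | hn
  · simp [hn.neg_one_pow, Int.negOnePow_even _ ((Int.even_coe_nat n).2 hn)]
  · simp [hn.neg_one_pow, Int.negOnePow_odd _ ((Int.odd_coe_nat n).2 hn)]

theorem negPowSeries_add (s t : R) : negPowSeries (s + t) = negPowSeries s * negPowSeries t := by
  simp only [negPowSeries_eq_rescale_binomialSeries, neg_add, PowerSeries.binomialSeries_add,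
    map_mul]

theorem negPowSeries_zero : negPowSeries (0 : R) = 1 := by
  simp [negPowSeries_eq_rescale_binomialSeries]

theorem negPowSeries_pow (s : R) (k : ℕ) : negPowSeries s ^ k = negPowSeries (k * s) := by
  induction k with
  | zero => simp [negPowSeries_zero]
  | succ k ih => rw [pow_succ, ih, ← negPowSeries_add, Nat.cast_succ, add_one_mul]

theorem coeff_mul_negPowSeries_one (f : R⟦X⟧) (N : ℕ) :
    PowerSeries.coeff N (f * negPowSeries 1) = ∑ n ∈ range (N + 1), PowerSeries.coeff n f := by
  simp only [PowerSeries.coeff_mul, coeff_negPowSeries, Ring.multichoose_one, mul_one]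
  exact Nat.sum_antidiagonal_eq_sum_range_succ (fun n _ ↦ PowerSeries.coeff n f) N

theorem negPowSeries_mem_nonnegCoeff {s : ℝ} (hs : 0 ≤ s) : negPowSeries s ∈ nonnegCoeff ℝ :=
  fun n ↦ by simpa using multichoose_nonneg hs n

theorem hasSum_coeff_negPowSeries (s : ℝ) {r : ℝ} (hr : |r| < 1) :
    HasSum (fun n ↦ PowerSeries.coeff n (negPowSeries s) * r ^ n) ((1 - r) ^ (-s)) := by
  have hball : r ∈ Metric.eball (0 : ℝ) 1 := by
    rw [← ENNReal.ofReal_one, Metric.eball_ofReal]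
    simpa using hr
  have h := (Real.one_div_one_sub_rpow_hasFPowerSeriesOnBall_zero s).hasSum hball
  rw [zero_add, one_div] at h
  convert! h using 1
  · ext n
    rw [coeff_negPowSeries, FormalMultilinearSeries.ofScalars_apply_eq, Ring.multichoose_eq,
      smul_eq_mul]
  · exact Real.rpow_neg (by linarith [le_abs_self r]) s

end NegPowSeries

section Sibuya

/-- The probability generating function `1 - (1 - X)^ν` of the Sibuya distribution with
parameter `ν`. -/
noncomputable def sibuyaGF (ν : ℝ) : ℝ⟦X⟧ := 1 - negPowSeries (-ν)

/-- The distribution function `P(S_k ≤ N)` of the sum `S_k` of `k` independent Sibuya variables,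
defined as the `N`-th coefficient of `(1 - (1 - X)^ν)^k / (1 - X)`. -/
noncomputable def sibuyaCdf (ν : ℝ) (k N : ℕ) : ℝ :=
  PowerSeries.coeff N (sibuyaGF ν ^ k * negPowSeries 1)

variable {ν : ℝ}

theorem sibuyaGF_mem_nonnegCoeff (hν₀ : 0 ≤ ν) (hν₁ : ν ≤ 1) : sibuyaGF ν ∈ nonnegCoeff ℝ
  | 0 => by simp [sibuyaGF, -PowerSeries.coeff_zero_eq_constantCoeff]
  | n + 1 => by
    simpa [sibuyaGF, PowerSeries.coeff_one] using
      multichoose_succ_nonpos (neg_le_neg hν₁) (neg_nonpos.2 hν₀) n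

theorem sibuyaCdf_nonneg (hν₀ : 0 ≤ ν) (hν₁ : ν ≤ 1) (k N : ℕ) : 0 ≤ sibuyaCdf ν k N :=
  mul_mem (pow_mem (sibuyaGF_mem_nonnegCoeff hν₀ hν₁) k) (negPowSeries_mem_nonnegCoeff zero_le_one)
    N

theorem sibuyaCdf_antitone (hν₀ : 0 ≤ ν) (hν₁ : ν ≤ 1) (N : ℕ) :
    Antitone fun k ↦ sibuyaCdf ν k N := by
  refine antitone_nat_of_succ_le fun k ↦ sub_nonneg.1 ?_
  have hdiff : sibuyaGF ν ^ k * negPowSeries 1 - sibuyaGF ν ^ (k + 1) * negPowSeries 1 =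
      sibuyaGF ν ^ k * negPowSeries (1 - ν) := by
    rw [sub_eq_neg_add 1 ν, negPowSeries_add, pow_succ]
    nth_rewrite 3 [sibuyaGF]
    ring
  rw [sibuyaCdf, sibuyaCdf, ← map_sub, hdiff]
  exact mul_mem (pow_mem (sibuyaGF_mem_nonnegCoeff hν₀ hν₁) k)
    (negPowSeries_mem_nonnegCoeff (sub_nonneg.2 hν₁)) N

theorem sibuyaCdf_eq_sum (ν : ℝ) (k N : ℕ) :
    sibuyaCdf ν k N =
      ∑ j ∈ range (k + 1), (-1) ^ j * k.choose j * Ring.multichoose (1 - ν * j) N := by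
  have hterm (j : ℕ) : negPowSeries (-ν) ^ j * negPowSeries 1 = negPowSeries (1 - ν * j) := by
    rw [negPowSeries_pow, ← negPowSeries_add]
    ring_nf
  have hexpand : sibuyaGF ν ^ k * negPowSeries 1 =
      ∑ j ∈ range (k + 1), ((-1 : ℝ) ^ j * k.choose j) • negPowSeries (1 - ν * j) := by
    rw [sibuyaGF, sub_eq_neg_add, add_pow, sum_mul]
    refine sum_congr rfl fun j _ ↦ ?_
    rw [← hterm, neg_pow, one_pow, PowerSeries.smul_eq_C_mul]
    simp only [map_mul, map_pow, map_neg, map_one, map_natCast]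
    ring
  simp only [sibuyaCdf, hexpand, map_sum, PowerSeries.coeff_smul, coeff_negPowSeries,
    smul_eq_mul]

theorem sibuyaCdf_eq_tsum (ν : ℝ) (k N : ℕ) :
    sibuyaCdf ν k N = ∑' j : ℕ, (-1) ^ j * k.choose j * Ring.multichoose (1 - ν * j) N := by
  rw [sibuyaCdf_eq_sum, tsum_eq_sum]
  intro j hj
  rw [Nat.choose_eq_zero_of_lt (by simpa using hj), Nat.cast_zero, mul_zero, zero_mul]

theorem sibuyaCdf_mul_pow_le (hν₀ : 0 ≤ ν) (hν₁ : ν ≤ 1) (k N : ℕ) {r : ℝ} (hr₀ : 0 ≤ r)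
    (hr₁ : r < 1) : sibuyaCdf ν k N * r ^ N ≤ (1 - (1 - r) ^ ν) ^ k := by
  have hGF : HasSum (fun n ↦ PowerSeries.coeff n (sibuyaGF ν) * r ^ n) (1 - (1 - r) ^ ν) := by
    simpa [sibuyaGF, sub_mul] using
      (hasSum_coeff_one r).sub (hasSum_coeff_negPowSeries (-ν) (abs_lt.2 ⟨by linarith, hr₁⟩))
  rw [sibuyaCdf, coeff_mul_negPowSeries_one]
  exact sum_coeff_mul_pow_le (pow_mem (sibuyaGF_mem_nonnegCoeff hν₀ hν₁) k) hr₀ hr₁.le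
    (hasSum_coeff_pow hGF k) N

theorem sibuyaCdf_mul_le_exp (hν₀ : 0 ≤ ν) (hν₁ : ν ≤ 1) (k : ℕ) {N : ℕ} (hN : 1 ≤ N) :
    sibuyaCdf ν k N * (1 - 1 / N) ^ N ≤ Real.exp (-(k / (N : ℝ) ^ ν)) := by
  have hN' : (1 : ℝ) ≤ N := mod_cast hN
  have hinv : 1 / (N : ℝ) ≤ 1 := (div_le_one (by positivity)).2 hN'
  have hpow : 1 / (N : ℝ) ^ ν ≤ 1 :=
    (div_le_one (by positivity)).2 (Real.one_le_rpow hN' hν₀)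
  calc sibuyaCdf ν k N * (1 - 1 / N) ^ N
      ≤ (1 - (1 - (1 - 1 / N)) ^ ν) ^ k :=
        sibuyaCdf_mul_pow_le hν₀ hν₁ k N (sub_nonneg.2 hinv) (sub_lt_self 1 (by positivity))
    _ = (1 - 1 / (N : ℝ) ^ ν) ^ k := by
        rw [sub_sub_cancel, Real.div_rpow zero_le_one (by positivity), Real.one_rpow]
    _ ≤ Real.exp (-(1 / (N : ℝ) ^ ν)) ^ k :=
        pow_le_pow_left₀ (sub_nonneg.2 hpow) (Real.one_sub_le_exp_neg _) k
    _ = Real.exp (-(k / (N : ℝ) ^ ν)) := by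
        rw [← Real.exp_nat_mul, mul_neg, mul_one_div]

end Sibuya

section Asymptotics

theorem tendsto_choose_div_pow {ι : Type*} {l : Filter ι} {k : ι → ℕ} {x : ι → ℝ} {z : ℝ}
    (hx : Tendsto x l atTop) (hk : Tendsto (fun i ↦ k i / x i) l (𝓝 z)) (j : ℕ) :
    Tendsto (fun i ↦ (k i).choose j / x i ^ j) l (𝓝 (z ^ j / j !)) := by
  have hprod : Tendsto (fun i ↦ ∏ m ∈ range j, (k i / x i - m / x i)) l
      (𝓝 (∏ _m ∈ range j, (z - 0))) :=
    tendsto_finsetProd _ fun m _ ↦ hk.sub (hx.const_div_atTop m)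
  simp only [sub_zero, prod_const, card_range] at hprod
  refine (hprod.div_const (j ! : ℝ)).congr fun i ↦ ?_
  simp only [← sub_div]
  rw [prod_div_distrib, prod_const, card_range, Nat.cast_choose_eq_descPochhammer_div,
    descPochhammer_eval_eq_prod_range, div_right_comm]

theorem tendsto_natCast_rpow_atTop {ν : ℝ} (hν : 0 < ν) :
    Tendsto (fun N : ℕ ↦ (N : ℝ) ^ ν) atTop atTop :=
  (tendsto_rpow_atTop hν).comp tendsto_natCast_atTop_atTop

theorem tendsto_floor_mul_rpow_div_rpow {ν z : ℝ} (hν : 0 < ν) (hz : 0 ≤ z) :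
    Tendsto (fun N : ℕ ↦ (⌊z * (N : ℝ) ^ ν⌋₊ : ℝ) / (N : ℝ) ^ ν) atTop (𝓝 z) :=
  (tendsto_nat_floor_mul_div_atTop hz).comp (tendsto_natCast_rpow_atTop hν)

theorem summable_pow_self_of_tendsto_zero {b : ℕ → ℝ} (hb : Tendsto b atTop (𝓝 0)) :
    Summable fun n ↦ b n ^ n := by
  refine .of_norm_bounded_eventually_nat summable_geometric_two ?_
  filter_upwards [hb.norm.eventually_le_const (by norm_num : ‖(0 : ℝ)‖ < 1 / 2)] with n hn
  rw [norm_pow]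
  exact pow_le_pow_left₀ (norm_nonneg _) hn n

theorem inv_factorial_le (n : ℕ) : (n ! : ℝ)⁻¹ ≤ Real.exp 1 * (Real.exp 1 / (n + 1)) ^ n := by
  have h := Real.pow_div_factorial_le_exp (n + 1) (by positivity) n
  rw [Real.exp_add, ← Real.exp_one_pow n, div_eq_inv_mul, ← le_div_iff₀ (by positivity)] at h
  rwa [div_pow, mul_div_assoc', mul_comm (Real.exp 1)]

theorem summable_pow_div_factorial_mul_rpow {ν : ℝ} (hν₀ : 0 ≤ ν) (hν₁ : ν < 1) {z : ℝ}
    (hz : 0 ≤ z) :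
    Summable fun j : ℕ ↦ z ^ j / j ! * (Real.exp 1 * (ν * j + 1)) ^ (ν * j) := by
  set b : ℕ → ℝ := fun j ↦ z * Real.exp 1 * Real.exp 1 ^ ν * ((j + 1 : ℕ) : ℝ) ^ (-(1 - ν))
  have hb : Tendsto b atTop (𝓝 0) := by
    have h := (tendsto_rpow_neg_atTop (sub_pos.2 hν₁)).comp
      (tendsto_natCast_atTop_atTop.comp (tendsto_add_atTop_nat 1))
    simpa [b] using h.const_mul (z * Real.exp 1 * Real.exp 1 ^ ν)
  refine .of_nonneg_of_le (fun j ↦ by positivity) (fun j ↦ ?_)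
    ((summable_pow_self_of_tendsto_zero hb).mul_left (Real.exp 1))
  have hj : (0 : ℝ) < j + 1 := by positivity
  have hrpow : (Real.exp 1 * (ν * j + 1)) ^ (ν * j) ≤ (Real.exp 1 ^ ν * (j + 1 : ℝ) ^ ν) ^ j := by
    rw [← Real.mul_rpow (by positivity) hj.le, ← Real.rpow_natCast, ← Real.rpow_mul (by positivity)]
    gcongr
    exact mul_le_of_le_one_left j.cast_nonneg hν₁.le
  calc z ^ j / j ! * (Real.exp 1 * (ν * j + 1)) ^ (ν * j)
      = z ^ j * (j ! : ℝ)⁻¹ * (Real.exp 1 * (ν * j + 1)) ^ (ν * j) := by rw [div_eq_mul_inv]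
    _ ≤ z ^ j * (Real.exp 1 * (Real.exp 1 / (j + 1)) ^ j) *
          (Real.exp 1 ^ ν * (j + 1 : ℝ) ^ ν) ^ j := by
        gcongr
        exact inv_factorial_le j
    _ = Real.exp 1 * (z * (Real.exp 1 / (j + 1)) * (Real.exp 1 ^ ν * (j + 1 : ℝ) ^ ν)) ^ j := by
        ring
    _ = Real.exp 1 * b j ^ j := by
        simp only [b]
        push_cast
        rw [neg_sub, Real.rpow_sub_one hj.ne']
        ring

end Asymptotics

section Tail

/-- The Wright function `φ(-ν, 1; -z) = ∑ (-z)^n / (n! Γ(1 - ν n))`, which turns out to be the tail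
`∫_z^∞ M_ν` of the M-Wright function. As in `mWright`, terms with `Γ` at a pole vanish. -/
noncomputable def mWrightTail (ν z : ℝ) : ℝ :=
  ∑' n : ℕ, (-z) ^ n / (n ! * Real.Gamma (1 - ν * n))

variable {ν z : ℝ}

theorem mWrightTail_zero (ν : ℝ) : mWrightTail ν 0 = 1 := by
  rw [mWrightTail, tsum_eq_single 0 fun n hn ↦ by simp [hn]]
  simp

theorem hasDerivAt_mWrightTail (hν₀ : 0 ≤ ν) (hν₁ : ν < 1) (z : ℝ) :
    HasDerivAt (mWrightTail ν) (-mWright ν z) z := by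
  set a : ℕ → ℝ := fun n ↦ (n ! * Real.Gamma (1 - ν * n))⁻¹
  have hsum (r : ℝ) (hr : 0 ≤ r) : Summable fun n ↦ ‖a n‖ * r ^ n := by
    refine .of_nonneg_of_le (fun n ↦ by positivity) (fun n ↦ ?_)
      (summable_pow_div_factorial_mul_rpow hν₀ hν₁ hr)
    calc ‖a n‖ * r ^ n = r ^ n / n ! * |(Real.Gamma (1 - ν * n))⁻¹| := by
          simp only [a]
          rw [Real.norm_eq_abs, mul_inv, abs_mul, abs_inv, Nat.abs_cast]
          ring
      _ ≤ r ^ n / n ! * (Real.exp 1 * (ν * n + 1)) ^ (ν * n) := by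
          gcongr
          exact abs_inv_Gamma_one_sub_le (by positivity)
  have hderiv := (hasDerivAt_tsum_mul_pow hsum (-z)).comp z (hasDerivAt_neg z)
  convert! hderiv using 1
  · ext y
    exact tsum_congr fun n ↦ div_eq_inv_mul _ _
  · rw [mul_neg_one, mWright]
    refine congrArg Neg.neg (tsum_congr fun n ↦ ?_)
    have harg : 1 - ν * (n + 1 : ℕ) = -(ν * n) + 1 - ν := by
      push_cast
      ring
    simp only [a, harg, Nat.factorial_succ]
    push_cast
    rw [mul_assoc, mul_inv]
    field_simp

theorem abs_choose_mul_multichoose_le {k N : ℕ} (hν₀ : 0 ≤ ν) (hz : 0 ≤ z)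
    (hk : k ≤ z * (N : ℝ) ^ ν) (j : ℕ) :
    |(-1) ^ j * k.choose j * Ring.multichoose (1 - ν * j) N| ≤
      z ^ j / j ! * (Real.exp 1 * (ν * j + 1)) ^ (ν * j) := by
  have hchoose : (k.choose j : ℝ) ≤ z ^ j / j ! * (N + 1 : ℝ) ^ (ν * j) := by
    calc (k.choose j : ℝ) ≤ (k : ℝ) ^ j / j ! := Nat.choose_le_pow_div j k
      _ ≤ (z * (N : ℝ) ^ ν) ^ j / j ! := by gcongr
      _ = z ^ j / j ! * (N : ℝ) ^ (ν * j) := by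
          rw [mul_pow, Real.rpow_mul_natCast N.cast_nonneg, mul_div_right_comm]
      _ ≤ z ^ j / j ! * (N + 1 : ℝ) ^ (ν * j) := by
          gcongr
          exact le_add_of_nonneg_right zero_le_one
  rw [abs_mul, abs_mul, abs_pow, abs_neg, abs_one, one_pow, one_mul, Nat.abs_cast]
  calc k.choose j * |Ring.multichoose (1 - ν * j) N|
      ≤ z ^ j / j ! * (N + 1 : ℝ) ^ (ν * j) * |Ring.multichoose (1 - ν * j) N| := by gcongr
    _ = z ^ j / j ! * (|Ring.multichoose (1 - ν * j) N| * (N + 1 : ℝ) ^ (ν * j)) := by ring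
    _ ≤ z ^ j / j ! * (Real.exp 1 * (ν * j + 1)) ^ (ν * j) := by
        gcongr
        exact abs_multichoose_one_sub_mul_rpow_le (by positivity) N

theorem tendsto_sibuyaCdf (hν₀ : 0 < ν) (hν₁ : ν < 1) (hz : 0 ≤ z) :
    Tendsto (fun N : ℕ ↦ sibuyaCdf ν ⌊z * (N : ℝ) ^ ν⌋₊ N) atTop (𝓝 (mWrightTail ν z)) := by
  simp only [sibuyaCdf_eq_tsum]
  refine tendsto_tsum_of_dominated_convergence
    (summable_pow_div_factorial_mul_rpow hν₀.le hν₁ hz) (fun j ↦ ?_)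
    (.of_forall fun N j ↦ abs_choose_mul_multichoose_le hν₀.le hz
      (Nat.floor_le (by positivity)) j)
  have hlim := ((tendsto_choose_div_pow (tendsto_natCast_rpow_atTop hν₀)
    (tendsto_floor_mul_rpow_div_rpow hν₀ hz) j).mul
      (tendsto_multichoose_mul_rpow (1 - ν * j))).const_mul ((-1 : ℝ) ^ j)
  have hval : (-1 : ℝ) ^ j * (z ^ j / j ! * (Real.Gamma (1 - ν * j))⁻¹) =
      (-z) ^ j / (j ! * Real.Gamma (1 - ν * j)) := by
    rw [neg_pow z, ← div_eq_mul_inv, div_div, mul_div_assoc]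
  rw [hval] at hlim
  refine hlim.congr' ?_
  filter_upwards [eventually_gt_atTop 0] with N hN
  have hN' : (0 : ℝ) < N := mod_cast hN
  rw [sub_sub_cancel, Real.rpow_mul hN'.le, Real.rpow_natCast]
  field_simp

theorem mWrightTail_nonneg (hν₀ : 0 < ν) (hν₁ : ν < 1) (hz : 0 ≤ z) : 0 ≤ mWrightTail ν z :=
  ge_of_tendsto' (tendsto_sibuyaCdf hν₀ hν₁ hz) fun N ↦ sibuyaCdf_nonneg hν₀.le hν₁.le _ N

theorem antitoneOn_mWrightTail (hν₀ : 0 < ν) (hν₁ : ν < 1) :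
    AntitoneOn (mWrightTail ν) (Set.Ici 0) := by
  intro y hy z hz hyz
  refine le_of_tendsto_of_tendsto' (tendsto_sibuyaCdf hν₀ hν₁ hz) (tendsto_sibuyaCdf hν₀ hν₁ hy)
    fun N ↦ sibuyaCdf_antitone hν₀.le hν₁.le N ?_
  gcongr

theorem mWrightTail_mul_exp_neg_one_le (hν₀ : 0 < ν) (hν₁ : ν < 1) (hz : 0 ≤ z) :
    mWrightTail ν z * Real.exp (-1) ≤ Real.exp (-z) := by
  have hleft := (tendsto_sibuyaCdf hν₀ hν₁ hz).mul (Real.tendsto_one_add_div_pow_exp (-1))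
  have hright := (Real.continuous_exp.tendsto _).comp
    (tendsto_floor_mul_rpow_div_rpow hν₀ hz).neg
  refine le_of_tendsto_of_tendsto hleft hright ?_
  filter_upwards [eventually_ge_atTop 1] with N hN
  rw [neg_div, ← sub_eq_add_neg]
  exact sibuyaCdf_mul_le_exp hν₀.le hν₁.le _ hN

theorem tendsto_mWrightTail_atTop (hν₀ : 0 < ν) (hν₁ : ν < 1) :
    Tendsto (mWrightTail ν) atTop (𝓝 0) := by
  have hexp : Tendsto (fun z ↦ Real.exp (-z) * Real.exp 1) atTop (𝓝 0) := by
    simpa using Real.tendsto_exp_neg_atTop_nhds_zero.mul_const (Real.exp 1)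
  refine tendsto_of_tendsto_of_tendsto_of_le_of_le' tendsto_const_nhds hexp ?_ ?_ <;>
    filter_upwards [eventually_ge_atTop 0] with z hz
  · exact mWrightTail_nonneg hν₀ hν₁ hz
  · have h := mWrightTail_mul_exp_neg_one_le hν₀ hν₁ hz
    rwa [Real.exp_neg 1, ← div_eq_mul_inv, div_le_iff₀ (Real.exp_pos 1)] at h

end Tail

section MWright

variable {ν : ℝ}

theorem mWright_nonneg (hν₀ : 0 < ν) (hν₁ : ν < 1) {z : ℝ} (hz : 0 ≤ z) : 0 ≤ mWright ν z := by
  have hderiv := (hasDerivAt_mWrightTail hν₀.le hν₁ z).hasDerivWithinAt (s := Set.Ici 0)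
  have hnonpos := (antitoneOn_mWrightTail hν₀ hν₁).derivWithin_nonpos (x := z)
  rw [hderiv.derivWithin (uniqueDiffOn_Ici 0 z hz)] at hnonpos
  exact neg_nonpos.1 hnonpos

theorem integral_mWright (hν₀ : 0 < ν) (hν₁ : ν < 1) : ∫ z in Set.Ioi 0, mWright ν z = 1 := by
  have h := integral_Ioi_of_hasDerivAt_of_nonpos'
    (fun z _ ↦ hasDerivAt_mWrightTail hν₀.le hν₁ z)
    (fun z hz ↦ neg_nonpos.2 (mWright_nonneg hν₀ hν₁ (le_of_lt hz)))
    (tendsto_mWrightTail_atTop hν₀ hν₁)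
  rwa [integral_neg, mWrightTail_zero, zero_sub, neg_inj] at h

theorem integral_const_mul_comp_abs_div (f : ℝ → ℝ) {c : ℝ} (hc : 0 < c) :
    ∫ x : ℝ, 1 / (2 * c) * f (|x| / c) = ∫ y in Set.Ioi 0, f y := by
  have hscale := integral_comp_mul_right_Ioi f 0 (inv_pos.2 hc)
  rw [zero_mul, inv_inv, smul_eq_mul] at hscale
  rw [integral_const_mul, integral_comp_abs (f := fun y ↦ f (y / c))]
  simp only [div_eq_mul_inv _ c, hscale]
  field_simp

end MWright

/-- For `0 < ν < 1` the M-Wright function is nonnegative on the half line, and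
consequently the fundamental solution `G_C(x,t;ν) = (1/(2 t^ν)) M_ν(|x|/t^ν)` of the
Cauchy problem for the time-fractional diffusion-wave equation is a probability
density in `x` for each fixed `t > 0`. -/
theorem mWright_nonneg_and_pdf (ν : ℝ) (hν0 : 0 < ν) (hν1 : ν < 1) :
    (∀ z ≥ (0:ℝ), 0 ≤ mWright ν z) ∧
    ∀ t : ℝ, 0 < t →
      (∀ x : ℝ, 0 ≤ 1 / (2 * t ^ ν) * mWright ν (|x| / t ^ ν)) ∧
      ∫ x : ℝ, 1 / (2 * t ^ ν) * mWright ν (|x| / t ^ ν) = 1 := by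
  refine ⟨fun z hz ↦ mWright_nonneg hν0 hν1 hz, fun t ht ↦ ?_⟩
  have htν : 0 < t ^ ν := Real.rpow_pos_of_pos ht ν
  refine ⟨fun x ↦ mul_nonneg (by positivity) (mWright_nonneg hν0 hν1 (by positivity)), ?_⟩
  rw [integral_const_mul_comp_abs_div (mWright ν) htν, integral_mWright hν0 hν1]
end

section
/- Let 0 < α < 1 and set ν = α/2. Then the fundamental solution of the Cauchy problem for the time-fractional diffusion equation, u(x,t) = (1/(2 t^ν)) M_ν(x/t^ν), satisfies for every x > 0 and t > 0 the time-fractional diffusion equation with Caputo derivative: (1/Γ(1−α)) ∫₀^t (∂u/∂τ)(x,τ) (t−τ)^(−α) dτ = (∂²u/∂x²)(x,t). -/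
open MeasureTheory

/-!
Write `ω = exp (iπν)`. Euler's reflection formula turns the coefficients `1 / Γ(1 - ν - νn)` into
`Γ(ν + νn) * sin (π (ν + νn)) / π`, and summing under the Gamma integrals gives
`u(x, t) = (1 / 2π) Im (ω ∫₀^∞ r^(ν - 1) exp (-x ω r^ν - t r) dr)`, so derivatives of `u` are
integrals of the same type with other powers of `r`. The Caputo integral replaces the factor
`exp (-t r)` by the Abel integral `∫₀ᵗ exp (-τ r) (t - τ)^(-α) dτ`. To compare the two, put
`K(w) = Γ(1 - α) exp (t e^w - (1 - α) w) - ∫₀ᵗ exp (τ e^w) (t - τ)^(-α) dτ`, which is entire, real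
on `ℝ`, and bounded as `Re w → ∞` in the strip `0 ≤ Im w ≤ π`. Hence
`∫ exp (a w - x e^(νw)) K(w) dw` takes the same, real, value over `ℝ` and over `ℝ + iπ`; on the
second line `w = log r + iπ`, and the vanishing of the imaginary part for `a = ν + 1`, `α = 2ν` is
the equation.
-/

section Integration

open Set Filter Topology Complex
open scoped Interval

theorem integral_add_mul_I_eq_of_norm_le {E : Type*} [NormedAddCommGroup E] [NormedSpace ℂ E]
    {f : ℂ → E} {B : ℝ → ℝ} {a b : ℝ} (hf : DifferentiableOn ℂ f (univ ×ℂ [[a, b]]))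
    (hB : Integrable B) (hB₀ : Tendsto B (cocompact ℝ) (𝓝 0))
    (hfB : ∀ x : ℝ, ∀ y ∈ [[a, b]], ‖f (x + y * I)‖ ≤ B x) :
    ∫ x : ℝ, f (x + a * I) = ∫ x : ℝ, f (x + b * I) := by
  by_cases hE : CompleteSpace E
  swap
  · simp [integral, hE]
  have integrable_line (y : ℝ) (hy : y ∈ [[a, b]]) : Integrable fun x : ℝ => f (x + y * I) := by
    have hcont : Continuous fun x : ℝ => f (x + y * I) :=
      hf.continuousOn.comp_continuous (by fun_prop) fun x => by simpa [mem_reProdIm] using hy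
    exact hB.mono' hcont.aestronglyMeasurable (ae_of_all _ fun x => hfB x y hy)
  have side_tendsto {u : ℝ → ℝ} (hu : Tendsto u atTop (cocompact ℝ)) :
      Tendsto (fun R => ∫ y in a..b, f (u R + y * I)) atTop (𝓝 0) := by
    refine squeeze_zero_norm (fun R => intervalIntegral.norm_integral_le_of_norm_le_const
      fun y hy => hfB (u R) y (uIoc_subset_uIcc hy)) ?_
    simpa using (hB₀.comp hu).mul_const |b - a|
  have rectangle (R : ℝ) :
      ((∫ x in (-R)..R, f (x + a * I)) - ∫ x in (-R)..R, f (x + b * I)) =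
        I • (∫ y in a..b, f ((-R : ℝ) + y * I)) - I • ∫ y in a..b, f (R + y * I) := by
    have hdiff : DifferentiableOn ℂ f ([[-R, R]] ×ℂ [[a, b]]) :=
      hf.mono (reProdIm_subset_iff.2 (prod_mono (subset_univ _) subset_rfl))
    have := Complex.integral_boundary_rect_eq_zero_of_differentiableOn f
      (((-R : ℝ) : ℂ) + a * I) (R + b * I) (by simpa using hdiff)
    simp only [add_re, ofReal_re, mul_re, I_re, mul_zero, ofReal_im, I_im, mul_one, sub_self,
      add_zero, add_im, mul_im, zero_add] at this
    rw [← sub_eq_zero, ← this]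
    abel
  have hleft := side_tendsto
    (tendsto_neg_atTop_atBot.mono_right (cocompact_eq_atBot_atTop (α := ℝ) ▸ le_sup_left))
  have hright := side_tendsto
    (tendsto_id.mono_right (cocompact_eq_atBot_atTop (α := ℝ) ▸ le_sup_right))
  have hbottom := intervalIntegral_tendsto_integral (integrable_line a left_mem_uIcc)
    tendsto_neg_atTop_atBot tendsto_id
  have htop := intervalIntegral_tendsto_integral (integrable_line b right_mem_uIcc)
    tendsto_neg_atTop_atBot tendsto_id
  refine sub_eq_zero.1 (tendsto_nhds_unique (hbottom.sub htop) ?_)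
  simp only [id_eq, rectangle]
  simpa using (hleft.const_smul I).sub (hright.const_smul I)

theorem integral_comp_exp {E : Type*} [NormedAddCommGroup E] [NormedSpace ℝ E]
    (g : ℝ → E) : ∫ l, Real.exp l • g (Real.exp l) = ∫ r in Ioi 0, g r := by
  have := integral_image_eq_integral_abs_deriv_smul MeasurableSet.univ
    (fun l _ => (Real.hasDerivAt_exp l).hasDerivWithinAt) Real.exp_injective.injOn g
  simpa [Real.range_exp] using this.symm

theorem integrable_comp_exp_iff {E : Type*} [NormedAddCommGroup E] [NormedSpace ℝ E]
    (g : ℝ → E) :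
    Integrable (fun l => Real.exp l • g (Real.exp l)) ↔ IntegrableOn g (Ioi 0) := by
  have := integrableOn_image_iff_integrableOn_abs_deriv_smul MeasurableSet.univ
    (fun l _ => (Real.hasDerivAt_exp l).hasDerivWithinAt) Real.exp_injective.injOn g
  simpa [Real.range_exp] using this.symm

theorem hasDerivAt_integral_cexp_neg_mul {X : Type*} [MeasurableSpace X] {μ : Measure X}
    {φ : X → ℝ} {g : X → ℂ} {c : ℝ} {z₀ : ℂ} (hφ : AEMeasurable φ μ) (hφ₀ : ∀ᵐ x ∂μ, 0 ≤ φ x)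
    (hg : AEStronglyMeasurable g μ) (hint : Integrable (fun x => Real.exp (-(c * φ x)) * g x) μ)
    (hc : c < z₀.re) :
    HasDerivAt (fun z : ℂ => ∫ x, cexp (-(z * φ x)) * g x ∂μ)
      (∫ x, -(cexp (-(z₀ * φ x)) * (φ x * g x)) ∂μ) z₀ := by
  obtain ⟨d, hcd, hdz⟩ := exists_between hc
  have hφc : AEStronglyMeasurable (fun x => (φ x : ℂ)) μ :=
    (measurable_ofReal.comp_aemeasurable hφ).aestronglyMeasurable
  have hexp (z : ℂ) : AEStronglyMeasurable (fun x => cexp (-(z * φ x))) μ :=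
    continuous_exp.comp_aestronglyMeasurable (hφc.const_mul z).neg
  have norm_cexp (z : ℂ) (x : X) : ‖cexp (-(z * φ x))‖ = Real.exp (-(z.re * φ x)) := by
    simp [norm_exp]
  have deriv_bound : ∀ᵐ x ∂μ, ∀ z ∈ {z : ℂ | d < z.re},
      ‖-(cexp (-(z * φ x)) * (φ x * g x))‖ ≤ (d - c)⁻¹ * ‖(Real.exp (-(c * φ x)) * g x : ℂ)‖ := by
    filter_upwards [hφ₀] with x hx z hz
    have : d < z.re := hz
    have linear_le_exp : (d - c) * φ x ≤ Real.exp ((d - c) * φ x) :=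
      (by linarith : (d - c) * φ x ≤ (d - c) * φ x + 1).trans (Real.add_one_le_exp _)
    simp only [norm_neg, norm_mul, norm_cexp, norm_real, Real.norm_eq_abs, Real.abs_exp,
      abs_of_nonneg hx]
    rw [← mul_assoc, ← mul_assoc, ← div_eq_inv_mul]
    gcongr
    rw [le_div_iff₀ (sub_pos.2 hcd)]
    calc Real.exp (-(z.re * φ x)) * φ x * (d - c)
        ≤ Real.exp (-(d * φ x)) * Real.exp ((d - c) * φ x) := by
          rw [mul_assoc, mul_comm (φ x)]; gcongr
      _ = Real.exp (-(c * φ x)) := by rw [← Real.exp_add]; ring_nf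
  have integrable_z₀ : Integrable (fun x => cexp (-(z₀ * φ x)) * g x) μ := by
    refine hint.mono ((hexp z₀).mul hg) ?_
    filter_upwards [hφ₀] with x hx
    simp only [norm_mul, norm_cexp, norm_real, Real.norm_eq_abs, Real.abs_exp]
    gcongr
  exact (hasDerivAt_integral_of_dominated_loc_of_deriv_le
    ((isOpen_lt continuous_const continuous_re).mem_nhds hdz)
    (Eventually.of_forall fun z => (hexp z).mul hg) integrable_z₀
    ((hexp z₀).mul (hφc.mul hg)).neg deriv_bound (hint.norm.const_mul _)
    (ae_of_all _ fun x z _ => by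
      have := (((hasDerivAt_id z).mul_const (φ x : ℂ)).neg.cexp).mul_const (g x)
      exact this.congr_deriv (by simp only [id, Pi.neg_apply]; ring))).2

end Integration

section ExpOfExp

open Filter Topology

variable {a b c t ν : ℝ}

theorem integrable_exp_mul_sub_mul_exp (ha : 0 < a) (hb : 0 < b) (hν : 0 < ν) :
    Integrable fun l : ℝ => Real.exp (a * l - b * Real.exp (ν * l)) := by
  have := (integrable_comp_exp_iff _).2
    (integrableOn_rpow_mul_exp_neg_mul_rpow (s := a - 1) (by linarith) hν hb)
  refine this.congr (ae_of_all _ fun l => ?_)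
  simp only [smul_eq_mul, ← Real.exp_mul, ← Real.exp_add]
  ring_nf

theorem tendsto_exp_mul_sub_mul_exp_cocompact (ha : 0 < a) (hb : 0 < b) (hν : 0 < ν) :
    Tendsto (fun l : ℝ => Real.exp (a * l - b * Real.exp (ν * l))) (cocompact ℝ) (𝓝 0) := by
  rw [cocompact_eq_atBot_atTop]
  refine Tendsto.sup ?_ ?_
  · refine squeeze_zero (fun l => (Real.exp_pos _).le) (fun l => Real.exp_le_exp.2 ?_)
      (Real.tendsto_exp_atBot.comp (tendsto_id.const_mul_atBot ha))
    simpa using (mul_pos hb (Real.exp_pos (ν * l))).le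
  · have exp_tendsto : Tendsto (fun l : ℝ => Real.exp (ν * l)) atTop atTop :=
      Real.tendsto_exp_atTop.comp (tendsto_id.const_mul_atTop hν)
    refine ((tendsto_rpow_mul_exp_neg_mul_atTop_nhds_zero (a / ν) b hb).comp exp_tendsto).congr
      fun l => ?_
    simp only [Function.comp_apply, ← Real.exp_mul, ← Real.exp_add]
    congr 1
    field_simp
    ring

theorem integral_exp_mul_sub_mul_exp (ha : 0 < a) (ht : 0 < t) :
    ∫ l : ℝ, Real.exp (a * l - t * Real.exp l) = (1 / t) ^ a * Real.Gamma a := by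
  rw [← Real.integral_rpow_mul_exp_neg_mul_Ioi ha ht, ← integral_comp_exp]
  refine integral_congr_ae (ae_of_all _ fun l => ?_)
  simp only [smul_eq_mul, ← Real.exp_mul, ← Real.exp_add]
  ring_nf

theorem exists_mul_exp_le (c : ℝ) (hν₀ : 0 ≤ ν) (hν₁ : ν < 1) (ht : 0 < t) :
    ∃ C : ℝ, ∀ l : ℝ, c * Real.exp (ν * l) ≤ C + t * Real.exp l := by
  have decay : Tendsto (fun l : ℝ => |c| * Real.exp ((ν - 1) * l)) atTop (𝓝 0) := by
    simpa using (Real.tendsto_exp_atBot.comp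
      (tendsto_id.const_mul_atTop_of_neg (sub_neg.2 hν₁))).const_mul |c|
  obtain ⟨L, hL⟩ := eventually_atTop.1 (decay.eventually_le_const ht)
  refine ⟨|c| * Real.exp (ν * L), fun l => ?_⟩
  refine (mul_le_mul_of_nonneg_right (le_abs_self c) (Real.exp_pos _).le).trans ?_
  rcases le_total l L with h | h
  · have : |c| * Real.exp (ν * l) ≤ |c| * Real.exp (ν * L) := by gcongr
    linarith [mul_pos ht (Real.exp_pos l)]
  · calc |c| * Real.exp (ν * l) = |c| * Real.exp ((ν - 1) * l) * Real.exp l := by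
          rw [mul_assoc, ← Real.exp_add]; ring_nf
      _ ≤ t * Real.exp l := by gcongr; exact hL l h
      _ ≤ |c| * Real.exp (ν * L) + t * Real.exp l := le_add_of_nonneg_left (by positivity)

theorem integrable_exp_mul_add_mul_exp_sub_mul_exp (ha : 0 < a) (hν₀ : 0 ≤ ν) (hν₁ : ν < 1)
    (ht : 0 < t) :
    Integrable fun l : ℝ => Real.exp (a * l + c * Real.exp (ν * l) - t * Real.exp l) := by
  obtain ⟨C, hC⟩ := exists_mul_exp_le c hν₀ hν₁ (half_pos ht)
  refine ((integrable_exp_mul_sub_mul_exp ha (half_pos ht) one_pos).const_mul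
    (Real.exp C)).mono' (by fun_prop) (ae_of_all _ fun l => ?_)
  rw [Real.norm_eq_abs, Real.abs_exp, ← Real.exp_add, one_mul]
  exact Real.exp_le_exp.2 (by linarith [hC l])

end ExpOfExp

section RayIntegral

open Complex

/-- `∫₀^∞ r ^ (a - 1) * exp (-z * r ^ ν - s * r) dr`, written in the variable `l = log r`: the
integrand becomes entire in `l`, and rotating the ray of integration becomes a translation. -/
noncomputable def rayIntegral (ν a : ℝ) (z s : ℂ) : ℂ :=
  ∫ l : ℝ, cexp (a * l - z * cexp (ν * l) - s * cexp l)

variable {a ν : ℝ} {z s : ℂ}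

theorem norm_cexp_rayIntegral (ν a l : ℝ) (z s : ℂ) :
    ‖cexp (a * l - z * cexp (ν * l) - s * cexp l)‖ =
      Real.exp (a * l - z.re * Real.exp (ν * l) - s.re * Real.exp l) := by
  rw [norm_exp, ← ofReal_mul a, ← ofReal_mul ν, ← ofReal_exp, ← ofReal_exp]
  simp only [sub_re, ofReal_re, re_mul_ofReal]

theorem integrable_rayIntegral (ha : 0 < a) (hν₀ : 0 ≤ ν) (hν₁ : ν < 1) (hs : 0 < s.re) :
    Integrable fun l : ℝ => cexp (a * l - z * cexp (ν * l) - s * cexp l) := by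
  refine (integrable_exp_mul_add_mul_exp_sub_mul_exp (c := -z.re) ha hν₀ hν₁ hs).mono'
    (by fun_prop) (ae_of_all _ fun l => le_of_eq ?_)
  rw [norm_cexp_rayIntegral, neg_mul, ← sub_eq_add_neg]

theorem hasDerivAt_rayIntegral_left (ha : 0 < a) (hν₀ : 0 ≤ ν) (hν₁ : ν < 1) (hs : 0 < s.re) :
    HasDerivAt (fun z => rayIntegral ν a z s) (-rayIntegral ν (a + ν) z s) z := by
  have split (z : ℂ) (l : ℝ) : cexp (a * l - z * cexp (ν * l) - s * cexp l) =
      cexp (-(z * Real.exp (ν * l))) * cexp (a * l - s * cexp l) := by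
    rw [← exp_add]; push_cast; ring_nf
  simp only [rayIntegral, split, ← integral_neg]
  refine (hasDerivAt_integral_cexp_neg_mul (φ := fun l => Real.exp (ν * l)) (c := z.re - 1)
    (by fun_prop) (ae_of_all _ fun l => (Real.exp_pos _).le) (by fun_prop) ?_
    (by linarith)).congr_deriv ?_
  · refine (integrable_rayIntegral (z := ↑(z.re - 1)) ha hν₀ hν₁ hs).congr (ae_of_all _ fun l => ?_)
    simp only [split]
    push_cast
    rfl
  · refine integral_congr_ae (ae_of_all _ fun l => ?_)
    simp only [ofReal_exp, ← exp_add]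
    push_cast
    ring_nf

theorem hasDerivAt_rayIntegral_right (ha : 0 < a) (hν₀ : 0 ≤ ν) (hν₁ : ν < 1) (hs : 0 < s.re) :
    HasDerivAt (fun s => rayIntegral ν a z s) (-rayIntegral ν (a + 1) z s) s := by
  have split (s : ℂ) (l : ℝ) : cexp (a * l - z * cexp (ν * l) - s * cexp l) =
      cexp (-(s * Real.exp l)) * cexp (a * l - z * cexp (ν * l)) := by
    rw [← exp_add]; push_cast; ring_nf
  simp only [rayIntegral, split, ← integral_neg]
  refine (hasDerivAt_integral_cexp_neg_mul (φ := Real.exp) (c := s.re / 2)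
    (by fun_prop) (ae_of_all _ fun l => (Real.exp_pos _).le) (by fun_prop) ?_
    (by linarith)).congr_deriv ?_
  · refine (integrable_rayIntegral (z := z) (s := ↑(s.re / 2)) ha hν₀ hν₁ (by simpa using hs)).congr
      (ae_of_all _ fun l => ?_)
    simp only [split]
    push_cast
    rfl
  · refine integral_congr_ae (ae_of_all _ fun l => ?_)
    simp only [ofReal_exp, ← exp_add]
    push_cast
    ring_nf

open Nat in
theorem hasSum_pow_div_factorial_mul_cexp (a ν l : ℝ) (z s : ℂ) :
    HasSum (fun n : ℕ => (-z) ^ n / n ! * cexp ((a + ν * n) * l - s * cexp l))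
      (cexp (a * l - z * cexp (ν * l) - s * cexp l)) := by
  have term_eq (n : ℕ) : (-z) ^ n / n ! * cexp ((a + ν * n) * l - s * cexp l) =
      (-z * cexp (ν * l)) ^ n / n ! * cexp (a * l - s * cexp l) := by
    rw [mul_pow, ← exp_nat_mul, mul_div_right_comm, mul_assoc, ← exp_add]
    ring_nf
  have exponent : a * l - z * cexp (ν * l) - s * cexp l =
      -z * cexp (ν * l) + (a * l - s * cexp l) := by ring
  have := (NormedSpace.expSeries_div_hasSum_exp (-z * cexp (ν * l))).mul_right
    (cexp (a * l - s * cexp l))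
  rw [← exp_eq_exp_ℂ, ← exp_add, ← exponent] at this
  simpa only [term_eq] using this

open Nat in
theorem hasSum_rayIntegral {t : ℝ} (ha : 0 < a) (hν₀ : 0 ≤ ν) (hν₁ : ν < 1) (ht : 0 < t) :
    HasSum (fun n : ℕ => (-z) ^ n / n ! * ((1 / t) ^ (a + ν * n) * Real.Gamma (a + ν * n) : ℝ))
      (rayIntegral ν a z t) := by
  have integral_term (n : ℕ) :
      ∫ l : ℝ, (-z) ^ n / n ! * cexp ((a + ν * n) * l - t * cexp l) =
        (-z) ^ n / n ! * ((1 / t) ^ (a + ν * n) * Real.Gamma (a + ν * n) : ℝ) := by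
    rw [integral_const_mul, ← integral_exp_mul_sub_mul_exp (by positivity) ht,
      ← integral_complex_ofReal]
    push_cast
    rfl
  have hasSum_norm (l : ℝ) :
      HasSum (fun n : ℕ => ‖(-z) ^ n / n ! * cexp ((a + ν * n) * l - t * cexp l)‖)
        (Real.exp (a * l + ‖z‖ * Real.exp (ν * l) - t * Real.exp l)) := by
    have norm_term (n : ℕ) : ‖(-z) ^ n / n ! * cexp ((a + ν * n) * l - t * cexp l)‖ =
        ‖z‖ ^ n / n ! * Real.exp ((a + ν * n) * l - t * Real.exp l) := by
      rw [norm_mul, norm_div, norm_pow, norm_neg, RCLike.norm_natCast, norm_exp, ← ofReal_exp,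
        ← ofReal_natCast, ← ofReal_mul, ← ofReal_add, ← ofReal_mul, ← ofReal_mul, ← ofReal_sub,
        ofReal_re]
    have := hasSum_pow_div_factorial_mul_cexp a ν l (-‖z‖) t
    rw [← hasSum_ofReal]
    simp only [norm_term]
    push_cast
    simpa only [neg_neg, neg_mul, sub_neg_eq_add] using this
  simp only [← integral_term]
  refine hasSum_integral_of_dominated_convergence _ (fun n => by fun_prop)
    (fun n => ae_of_all _ fun l => le_rfl) (ae_of_all _ fun l => (hasSum_norm l).summable) ?_
    (ae_of_all _ fun l => hasSum_pow_div_factorial_mul_cexp a ν l z t)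
  simp only [(hasSum_norm _).tsum_eq]
  exact integrable_exp_mul_add_mul_exp_sub_mul_exp ha hν₀ hν₁ ht

end RayIntegral

section FundamentalSolution

open Set Filter Topology Complex
open scoped Real

theorem inv_Gamma_one_sub {s : ℝ} (hs : Real.Gamma s ≠ 0) :
    (Real.Gamma (1 - s))⁻¹ = Real.Gamma s * Real.sin (π * s) / π := by
  rw [mul_div_assoc, ← inv_div, ← Real.Gamma_mul_Gamma_one_sub, mul_inv, mul_inv_cancel_left₀ hs]

/-- The fundamental solution `u(x, t)` of the Cauchy problem for the time-fractional diffusion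
equation of order `α = 2 * ν`. -/
noncomputable def fundamentalSolution (ν x t : ℝ) : ℝ :=
  1 / (2 * t ^ ν) * mWright ν (x / t ^ ν)

variable {a ν t : ℝ}

theorem fundamentalSolution_eq_im_rayIntegral (hν₀ : 0 < ν) (hν₁ : ν < 1) (ht : 0 < t) (x : ℝ) :
    fundamentalSolution ν x t =
      1 / (2 * π) * (cexp (π * ν * I) * rayIntegral ν ν (x * cexp (π * ν * I)) t).im := by
  have hsum := imCLM.hasSum ((hasSum_rayIntegral (z := x * cexp (π * ν * I)) hν₀ hν₀.le hν₁
    ht).mul_left (cexp (π * ν * I)))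
  rw [← imCLM_apply, ← hsum.tsum_eq, fundamentalSolution, mWright, ← tsum_mul_left,
    ← tsum_mul_left]
  refine tsum_congr fun n => ?_
  set s := ν + ν * n with hs
  have phase : cexp (π * ν * I) * (-(x * cexp (π * ν * I))) ^ n =
      ((-x) ^ n : ℝ) * cexp ((π * s : ℝ) * I) := by
    rw [← neg_mul, mul_pow, ← exp_nat_mul, mul_left_comm, ← exp_add, hs]
    push_cast
    ring_nf
  have im_term : (cexp (π * ν * I) * ((-(x * cexp (π * ν * I))) ^ n / n.factorial *
      ((1 / t) ^ s * Real.Gamma s : ℝ))).im =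
      (-x) ^ n / n.factorial * ((1 / t) ^ s * Real.Gamma s) * Real.sin (π * s) := by
    rw [← mul_assoc, ← mul_div_assoc, phase, im_mul_ofReal, div_natCast_im, im_ofReal_mul,
      exp_ofReal_mul_I_im]
    ring
  have rpow_s : (1 / t) ^ s = (t ^ ν)⁻¹ * ((t ^ ν)⁻¹) ^ n := by
    rw [one_div, hs, Real.rpow_add (by positivity), Real.rpow_mul (by positivity),
      Real.rpow_natCast, Real.inv_rpow ht.le]
  have hΓ := inv_Gamma_one_sub (Real.Gamma_pos_of_pos (by positivity : 0 < s)).ne'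
  rw [imCLM_apply, im_term, show -(ν * n) + 1 - ν = 1 - s by rw [hs]; ring,
    div_mul_eq_div_div ((-(x / _)) ^ n), div_eq_mul_inv _ (Real.Gamma _), hΓ, rpow_s,
    neg_div', div_pow, inv_pow]
  field_simp

theorem hasDerivAt_im_rayIntegral_space (c ω : ℂ) (ha : 0 < a) (hν₀ : 0 ≤ ν) (hν₁ : ν < 1)
    (ht : 0 < t) (x : ℝ) :
    HasDerivAt (fun x : ℝ => (c * rayIntegral ν a (x * ω) t).im)
      (-(c * ω * rayIntegral ν (a + ν) (x * ω) t).im) x := by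
  have hray : HasDerivAt (fun x : ℝ => c * rayIntegral ν a (x * ω) t)
      (c * (-rayIntegral ν (a + ν) (x * ω) t * ω)) x :=
    (((hasDerivAt_rayIntegral_left ha hν₀ hν₁ (by simpa using ht)).comp (x : ℂ)
      (hasDerivAt_mul_const ω)).comp_ofReal).const_mul c
  refine (imCLM.hasFDerivAt.comp_hasDerivAt x hray).congr_deriv ?_
  rw [imCLM_apply, ← neg_im]
  ring_nf

theorem hasDerivAt_im_rayIntegral_time (c z : ℂ) (ha : 0 < a) (hν₀ : 0 ≤ ν) (hν₁ : ν < 1)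
    (ht : 0 < t) :
    HasDerivAt (fun t : ℝ => (c * rayIntegral ν a z t).im)
      (-(c * rayIntegral ν (a + 1) z t).im) t := by
  have hray : HasDerivAt (fun t : ℝ => c * rayIntegral ν a z t)
      (c * -rayIntegral ν (a + 1) z t) t :=
    (hasDerivAt_rayIntegral_right ha hν₀ hν₁ (by simpa using ht)).comp_ofReal.const_mul c
  refine (imCLM.hasFDerivAt.comp_hasDerivAt t hray).congr_deriv ?_
  rw [imCLM_apply, ← neg_im, mul_neg]

theorem deriv_fundamentalSolution_time (hν₀ : 0 < ν) (hν₁ : ν < 1) (ht : 0 < t) (x : ℝ) :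
    deriv (fundamentalSolution ν x) t =
      -(1 / (2 * π) * (cexp (π * ν * I) * rayIntegral ν (ν + 1) (x * cexp (π * ν * I)) t).im) := by
  have heq : fundamentalSolution ν x =ᶠ[𝓝 t] fun t =>
      1 / (2 * π) * (cexp (π * ν * I) * rayIntegral ν ν (x * cexp (π * ν * I)) t).im := by
    filter_upwards [Ioi_mem_nhds ht] with τ hτ
    exact fundamentalSolution_eq_im_rayIntegral hν₀ hν₁ hτ x
  rw [heq.deriv_eq, ((hasDerivAt_im_rayIntegral_time _ _ hν₀ hν₀.le hν₁ ht).const_mul _).deriv,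
    mul_neg]

theorem deriv_deriv_fundamentalSolution_space (hν₀ : 0 < ν) (hν₁ : ν < 1) (ht : 0 < t) (x : ℝ) :
    deriv (deriv fun x => fundamentalSolution ν x t) x =
      1 / (2 * π) *
        (cexp (π * ν * I) ^ 3 * rayIntegral ν (3 * ν) (x * cexp (π * ν * I)) t).im := by
  set ω := cexp (π * ν * I)
  have first : deriv (fun x => fundamentalSolution ν x t) = fun x : ℝ =>
      -(1 / (2 * π)) * (ω * ω * rayIntegral ν (ν + ν) (x * ω) t).im := by
    funext y
    simp only [fundamentalSolution_eq_im_rayIntegral hν₀ hν₁ ht]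
    rw [((hasDerivAt_im_rayIntegral_space ω ω hν₀ hν₀.le hν₁ ht y).const_mul _).deriv, neg_mul,
      mul_neg]
  rw [first, ((hasDerivAt_im_rayIntegral_space (ω * ω) ω (add_pos hν₀ hν₀) hν₀.le hν₁ ht
    x).const_mul _).deriv, neg_mul_neg]
  ring_nf

end FundamentalSolution

section Rotation

open Complex
open scoped Interval Real

variable {a ν x θ : ℝ}

theorem norm_cexp_mul_sub_mul_cexp (a ν x : ℝ) (w : ℂ) :
    ‖cexp (a * w - x * cexp (ν * w))‖ =
      Real.exp (a * w.re - x * Real.cos (ν * w.im) * Real.exp (ν * w.re)) := by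
  rw [norm_exp, sub_re, re_ofReal_mul, re_ofReal_mul, exp_re, re_ofReal_mul, im_ofReal_mul]
  ring_nf

theorem integral_cexp_mul_sub_mul_cexp_rotate {K : ℂ → ℂ} {δ C : ℝ} (hK : Differentiable ℂ K)
    (hKC : ∀ w : ℂ, w.im ∈ [[0, θ]] → ‖K w‖ ≤ C * (1 + Real.exp (-δ * w.re)))
    (ha : 0 < a) (hδ : δ < a) (hν : 0 < ν) (hθ : |ν * θ| < π / 2) (hx : 0 < x) :
    ∫ l : ℝ, cexp (a * l - x * cexp (ν * l)) * K l =
      ∫ l : ℝ, cexp (a * (l + θ * I) - x * cexp (ν * (l + θ * I))) * K (l + θ * I) := by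
  set b := x * Real.cos (ν * θ)
  have hb : 0 < b := mul_pos hx (Real.cos_pos_of_mem_Ioo (abs_lt.1 hθ))
  have cos_le (y : ℝ) (hy : y ∈ [[0, θ]]) : Real.cos (ν * θ) ≤ Real.cos (ν * y) := by
    rw [← Real.cos_abs, ← Real.cos_abs (ν * y)]
    refine Real.cos_le_cos_of_nonneg_of_le_pi (abs_nonneg _) (by linarith [Real.pi_pos]) ?_
    rw [abs_mul, abs_mul]
    refine mul_le_mul_of_nonneg_left ?_ (abs_nonneg ν)
    simpa only [sub_zero] using Set.abs_sub_left_of_mem_uIcc hy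
  have bound (l y : ℝ) (hy : y ∈ [[0, θ]]) :
      ‖cexp (a * (l + y * I) - x * cexp (ν * (l + y * I))) * K (l + y * I)‖ ≤
        C * (Real.exp (a * l - b * Real.exp (ν * l)) +
          Real.exp ((a - δ) * l - b * Real.exp (ν * l))) := by
    have hKl : ‖K (l + y * I)‖ ≤ C * (1 + Real.exp (-δ * l)) := by
      simpa using hKC (l + y * I) (by simpa using hy)
    have hl : ‖cexp (a * (l + y * I) - x * cexp (ν * (l + y * I)))‖ ≤
        Real.exp (a * l - b * Real.exp (ν * l)) := by
      rw [norm_cexp_mul_sub_mul_cexp, show (l + y * I : ℂ).re = l by simp,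
        show (l + y * I : ℂ).im = y by simp]
      gcongr
      exact mul_le_mul_of_nonneg_left (cos_le y hy) hx.le
    calc _ ≤ Real.exp (a * l - b * Real.exp (ν * l)) * (C * (1 + Real.exp (-δ * l))) := by
          rw [norm_mul]; gcongr
      _ = _ := by
          rw [show (a - δ) * l - b * Real.exp (ν * l) =
            a * l - b * Real.exp (ν * l) + -δ * l by ring, Real.exp_add]
          ring
  have := integral_add_mul_I_eq_of_norm_le (E := ℂ) (a := 0) (b := θ)
    (f := fun w => cexp (a * w - x * cexp (ν * w)) * K w) (by fun_prop)
    (((integrable_exp_mul_sub_mul_exp ha hb hν).add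
      (integrable_exp_mul_sub_mul_exp (sub_pos.2 hδ) hb hν)).const_mul C)
    (by simpa using ((tendsto_exp_mul_sub_mul_exp_cocompact ha hb hν).add
      (tendsto_exp_mul_sub_mul_exp_cocompact (sub_pos.2 hδ) hb hν)).const_mul C) bound
  simpa using this

theorem integral_cexp_mul_sub_cexp_mul_cexp (ha : 0 < a) {w : ℂ} (hw : |w.im| < π / 2) :
    ∫ l : ℝ, cexp (a * l - cexp w * cexp l) = Real.Gamma a * cexp (-(a * w)) := by
  have gamma : ∫ l : ℝ, cexp (a * l - cexp l) = Real.Gamma a := by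
    have := integral_exp_mul_sub_mul_exp ha one_pos
    simp only [one_mul, div_one, Real.one_rpow] at this
    rw [← this, ← integral_complex_ofReal]
    push_cast
    rfl
  have rotate : ∫ l : ℝ, cexp (a * l - cexp l) =
      ∫ l : ℝ, cexp (a * (l + w.im * I) - cexp (l + w.im * I)) := by
    simpa using integral_cexp_mul_sub_mul_cexp_rotate (K := fun _ => 1) (δ := 0) (C := 1) (x := 1)
      (ν := 1) (by fun_prop) (fun _ _ => by norm_num) ha ha one_pos (by simpa using hw) one_pos
  have translate : ∫ l : ℝ, cexp (a * (l + w.im * I) - cexp (l + w.im * I)) =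
      cexp (a * w) * ∫ l : ℝ, cexp (a * l - cexp w * cexp l) := by
    rw [← integral_add_right_eq_self _ w.re, ← integral_const_mul]
    refine integral_congr_ae (ae_of_all _ fun l => ?_)
    simp only [ofReal_add, add_assoc, re_add_im, ← exp_add]
    ring_nf
  rw [← gamma, rotate, translate, mul_comm, ← mul_assoc, ← exp_add, neg_add_cancel, exp_zero,
    one_mul]

end Rotation

section AbelExp

open Set Complex
open scoped Real

/-- The Abel integral `∫₀ᵗ exp (s * τ) * (t - τ) ^ (-α) dτ` of an exponential, as a function of
its complex rate `s`; for `α < 1` the kernel is that of the Caputo derivative of order `α`. -/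
noncomputable def abelExp (α t : ℝ) (s : ℂ) : ℂ :=
  ∫ τ in (0 : ℝ)..t, cexp (s * τ) * ((t - τ) ^ (-α) : ℝ)

/-- The analytic continuation of `w ↦ ∫ σ in Ioi t, exp (e ^ w * (t - σ)) * σ ^ (-α)` from the
strip `|w.im| < π / 2` to the plane. -/
noncomputable def abelTail (α t : ℝ) (w : ℂ) : ℂ :=
  Real.Gamma (1 - α) * cexp (t * cexp w - (1 - α) * w) - abelExp α t (cexp w)

variable {α t : ℝ}

theorem intervalIntegrable_sub_rpow_neg (hα : α < 1) (t : ℝ) :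
    IntervalIntegrable (fun τ => (t - τ) ^ (-α)) volume 0 t := by
  simpa using ((intervalIntegral.intervalIntegrable_rpow' (a := 0) (b := t)
    (neg_lt_neg hα)).comp_sub_left t).symm

theorem integral_sub_rpow_neg (hα : α < 1) (t : ℝ) :
    ∫ τ in (0 : ℝ)..t, (t - τ) ^ (-α) = t ^ (1 - α) / (1 - α) := by
  rw [intervalIntegral.integral_comp_sub_left (fun σ => σ ^ (-α)), sub_self, sub_zero,
    integral_rpow (Or.inl (neg_lt_neg hα)), neg_add_eq_sub, Real.zero_rpow (by linarith), sub_zero]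

theorem differentiable_abelExp (hα : α < 1) (ht : 0 ≤ t) : Differentiable ℂ (abelExp α t) := by
  intro s
  have hint : IntervalIntegrable (fun τ => (Real.exp (-((-s.re - 1) * τ)) : ℂ) *
      ((t - τ) ^ (-α) : ℝ)) volume 0 t :=
    IntervalIntegrable.continuousOn_mul ⟨(intervalIntegrable_sub_rpow_neg hα t).1.ofReal,
      (intervalIntegrable_sub_rpow_neg hα t).2.ofReal⟩ (by fun_prop)
  rw [intervalIntegrable_iff_integrableOn_Ioc_of_le ht] at hint
  have hderiv := hasDerivAt_integral_cexp_neg_mul (z₀ := -s) (φ := fun τ => τ) (by fun_prop)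
    ((ae_restrict_iff' measurableSet_Ioc).2 (ae_of_all _ fun τ hτ => hτ.1.le))
    (Measurable.aestronglyMeasurable (by fun_prop)) hint (by simp)
  have abelExp_eq : abelExp α t = fun s =>
      ∫ τ in Ioc 0 t, cexp (-(-s * τ)) * ((t - τ) ^ (-α) : ℝ) := by
    funext s
    rw [abelExp, intervalIntegral.integral_of_le ht]
    simp only [neg_mul, neg_neg]
  rw [abelExp_eq]
  exact hderiv.differentiableAt.comp s differentiableAt_id.neg

theorem norm_abelExp_le {c : ℝ} {s : ℂ} (hα : α < 1) (ht : 0 ≤ t) (hc : 0 ≤ c) (hs : s.re ≤ c) :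
    ‖abelExp α t s‖ ≤ Real.exp (c * t) * (t ^ (1 - α) / (1 - α)) := by
  rw [← integral_sub_rpow_neg hα, ← intervalIntegral.integral_const_mul]
  refine intervalIntegral.norm_integral_le_of_norm_le ht (ae_of_all _ fun τ hτ => ?_)
    ((intervalIntegrable_sub_rpow_neg hα t).const_mul _)
  have hτt : 0 ≤ t - τ := sub_nonneg.2 hτ.2
  have exponent : s.re * τ ≤ c * t :=
    (mul_le_mul_of_nonneg_right hs hτ.1.le).trans (mul_le_mul_of_nonneg_left hτ.2 hc)
  rw [norm_mul, norm_exp, re_mul_ofReal, norm_real, Real.norm_of_nonneg (by positivity)]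
  gcongr

theorem im_abelExp_ofReal (α t s : ℝ) : (abelExp α t s).im = 0 := by
  have : abelExp α t s = (∫ τ in (0 : ℝ)..t, Real.exp (s * τ) * (t - τ) ^ (-α) : ℝ) := by
    rw [abelExp, ← intervalIntegral.integral_ofReal]
    push_cast
    rfl
  rw [this, ofReal_im]

theorem integral_cexp_mul_sub_mul_rpow_neg {w : ℂ} (hα : α < 1) (hw : |w.im| < π / 2) (t : ℝ) :
    ∫ σ in Ioi (0 : ℝ), cexp (cexp w * (t - σ)) * (σ ^ (-α) : ℝ) =
      Real.Gamma (1 - α) * cexp (t * cexp w - (1 - α) * w) := by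
  have gamma := integral_cexp_mul_sub_cexp_mul_cexp (sub_pos.2 hα) hw
  rw [sub_eq_add_neg (t * cexp w), exp_add, mul_left_comm]
  push_cast at gamma
  rw [← gamma, ← integral_const_mul, ← integral_comp_exp]
  refine integral_congr_ae (ae_of_all _ fun l => ?_)
  simp only [real_smul, ← Real.exp_mul, ofReal_exp, ← exp_add]
  rw [exp_add w]
  push_cast
  ring_nf

theorem integrableOn_cexp_mul_sub_mul_rpow_neg {s : ℂ} (hα : α < 1) (hs : 0 < s.re) (t : ℝ) :
    IntegrableOn (fun σ : ℝ => cexp (s * (t - σ)) * (σ ^ (-α) : ℝ)) (Ioi 0) := by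
  refine ((integrableOn_rpow_mul_exp_neg_mul_rpow (neg_lt_neg hα) one_pos hs).const_mul
    (Real.exp (s.re * t))).mono' (Measurable.aestronglyMeasurable (by fun_prop))
    ((ae_restrict_iff' measurableSet_Ioi).2 (ae_of_all _ fun σ hσ => le_of_eq ?_))
  have hσ : 0 < σ := hσ
  rw [norm_mul, norm_exp, ← ofReal_sub, re_mul_ofReal, norm_real,
    Real.norm_of_nonneg (by positivity), Real.rpow_one, mul_left_comm, ← Real.exp_add, mul_comm]
  ring_nf

theorem abelTail_eq_integral_Ioi {w : ℂ} (hα : α < 1) (ht : 0 ≤ t) (hw : |w.im| < π / 2) :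
    abelTail α t w = ∫ σ in Ioi t, cexp (cexp w * (t - σ)) * (σ ^ (-α) : ℝ) := by
  have hre : 0 < (cexp w).re := by
    rw [exp_re]
    exact mul_pos (Real.exp_pos _) (Real.cos_pos_of_mem_Ioo (abs_lt.1 hw))
  have hint := integrableOn_cexp_mul_sub_mul_rpow_neg hα hre t
  have hhead : abelExp α t (cexp w) =
      ∫ σ in (0 : ℝ)..t, cexp (cexp w * (t - σ)) * (σ ^ (-α) : ℝ) := by
    have := intervalIntegral.integral_comp_sub_left (a := 0) (b := t)
      (fun σ : ℝ => cexp (cexp w * (t - σ)) * (σ ^ (-α) : ℝ)) t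
    simpa [abelExp] using this
  rw [abelTail, ← integral_cexp_mul_sub_mul_rpow_neg hα hw, hhead,
    ← intervalIntegral.integral_interval_add_Ioi hint (hint.mono_set (Ioi_subset_Ioi ht)),
    add_sub_cancel_left]

theorem norm_integral_Ioi_cexp_mul_rpow_neg_le {s : ℂ} (hα : α < 1) (ht : 0 ≤ t) (hs : 1 ≤ s.re) :
    ‖∫ σ in Ioi t, cexp (s * (t - σ)) * (σ ^ (-α) : ℝ)‖ ≤ Real.exp t * Real.Gamma (1 - α) := by
  have hint : IntegrableOn (fun σ => Real.exp t * (Real.exp (-σ) * σ ^ (1 - α - 1))) (Ioi 0) :=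
    (Real.GammaIntegral_convergent (sub_pos.2 hα)).const_mul (Real.exp t)
  rw [Real.Gamma_eq_integral (sub_pos.2 hα), ← integral_const_mul]
  calc _ ≤ ∫ σ in Ioi t, Real.exp t * (Real.exp (-σ) * σ ^ (1 - α - 1)) := by
        refine norm_integral_le_of_norm_le (hint.mono_set (Ioi_subset_Ioi ht))
          ((ae_restrict_iff' measurableSet_Ioi).2 (ae_of_all _ fun σ hσ => ?_))
        have hσ : t < σ := hσ
        have hσ₀ : 0 < σ := ht.trans_lt hσ
        rw [norm_mul, norm_exp, ← ofReal_sub, re_mul_ofReal, norm_real,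
          Real.norm_of_nonneg (by positivity), sub_sub_cancel_left, ← mul_assoc, ← Real.exp_add]
        gcongr
        nlinarith
    _ ≤ _ := by
        refine setIntegral_mono_set hint ?_ (ae_of_all _ (Ioi_subset_Ioi ht))
        filter_upwards [ae_restrict_mem measurableSet_Ioi] with σ hσ
        have hσ : 0 < σ := hσ
        exact mul_nonneg (Real.exp_pos _).le (by positivity)

theorem norm_abelTail_le {w : ℂ} (hα : α < 1) (ht : 0 ≤ t) (hw : |w.im| ≤ π) :
    ‖abelTail α t w‖ ≤ Real.exp t * (Real.Gamma (1 - α) + t ^ (1 - α) / (1 - α)) *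
      (1 + Real.exp (-(1 - α) * w.re)) := by
  have hα' : 0 < 1 - α := sub_pos.2 hα
  have hΓ : 0 < Real.Gamma (1 - α) := Real.Gamma_pos_of_pos hα'
  set E := Real.exp (-(1 - α) * w.re)
  set T := t ^ (1 - α) / (1 - α)
  have : 0 ≤ T := by positivity
  have : 0 < E := Real.exp_pos _
  -- Each term of `abelTail` may grow like `exp (t * (cexp w).re)`; the two cancel, and this is
  -- visible only in the integral representation.
  rcases le_or_gt (cexp w).re 1 with hre | hre
  · have gamma_term : ‖Real.Gamma (1 - α) * cexp (t * cexp w - (1 - α) * w)‖ ≤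
        Real.Gamma (1 - α) * (Real.exp t * E) := by
      rw [norm_mul, norm_real, Real.norm_of_nonneg hΓ.le, norm_exp, ← Real.exp_add, sub_re,
        re_ofReal_mul, ← ofReal_one, ← ofReal_sub, re_ofReal_mul]
      gcongr
      linarith [mul_le_mul_of_nonneg_left hre ht]
    have head_term : ‖abelExp α t (cexp w)‖ ≤ Real.exp t * T := by
      simpa using norm_abelExp_le hα ht zero_le_one hre
    calc _ ≤ Real.Gamma (1 - α) * (Real.exp t * E) + Real.exp t * T :=
          (norm_sub_le _ _).trans (add_le_add gamma_term head_term)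
      _ ≤ Real.Gamma (1 - α) * (Real.exp t * E) + Real.exp t * T +
          Real.exp t * (Real.Gamma (1 - α) + T * E) := le_add_of_nonneg_right (by positivity)
      _ = _ := by ring
  · have him : |w.im| < π / 2 := by
      by_contra! h
      rw [exp_re, ← Real.cos_abs] at hre
      have := Real.cos_nonpos_of_pi_div_two_le_of_le h (by linarith)
      linarith [mul_nonpos_of_nonneg_of_nonpos (Real.exp_pos w.re).le this]
    rw [abelTail_eq_integral_Ioi hα ht him]
    calc _ ≤ Real.exp t * Real.Gamma (1 - α) := norm_integral_Ioi_cexp_mul_rpow_neg_le hα ht hre.le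
      _ ≤ Real.exp t * Real.Gamma (1 - α) +
          Real.exp t * (T + (Real.Gamma (1 - α) + T) * E) := le_add_of_nonneg_right (by positivity)
      _ = _ := by ring

theorem differentiable_abelTail (hα : α < 1) (ht : 0 ≤ t) : Differentiable ℂ (abelTail α t) := by
  have := (differentiable_abelExp hα ht).comp differentiable_exp
  unfold abelTail
  fun_prop

theorem im_abelTail_ofReal (α t l : ℝ) : (abelTail α t l).im = 0 := by
  rw [abelTail, sub_im, im_ofReal_mul, ← ofReal_exp l, im_abelExp_ofReal]
  norm_cast
  simp

theorem abelTail_add_pi_mul_I (α t : ℝ) (l : ℂ) :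
    abelTail α t (l + π * I) =
      Real.Gamma (1 - α) * cexp (-(t * cexp l) - (1 - α) * (l + π * I)) -
        abelExp α t (-cexp l) := by
  rw [abelTail, exp_add l, exp_pi_mul_I, mul_neg_one, mul_neg]

end AbelExp

section AbelRay

open Set Complex
open scoped Real

variable {a α ν t x : ℝ} {z : ℂ}

theorem integrable_prod_rayIntegral_mul_sub_rpow_neg (ha : 0 < a) (hα : α < 1) (hν : 0 < ν)
    (hz : 0 < z.re) (ht : 0 ≤ t) :
    Integrable (Function.uncurry fun τ l : ℝ =>
        cexp (a * l - z * cexp (ν * l) - τ * cexp l) * ((t - τ) ^ (-α) : ℝ))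
      ((volume.restrict (uIoc 0 t)).prod volume) := by
  rw [uIoc_of_le ht]
  have hkernel : IntegrableOn (fun τ => (t - τ) ^ (-α)) (Ioc 0 t) :=
    (intervalIntegrable_sub_rpow_neg hα t).1
  refine (hkernel.mul_prod (integrable_exp_mul_sub_mul_exp ha hz hν)).mono'
    (Measurable.aestronglyMeasurable (by fun_prop)) ?_
  filter_upwards [Measure.quasiMeasurePreserving_fst.ae (ae_restrict_mem measurableSet_Ioc)]
    with ⟨τ, l⟩ (hτ : τ ∈ Ioc 0 t)
  have hτt : 0 ≤ t - τ := sub_nonneg.2 hτ.2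
  have hτl : 0 ≤ τ * Real.exp l := mul_nonneg hτ.1.le (Real.exp_pos l).le
  rw [Function.uncurry_apply_pair, norm_mul, norm_cexp_rayIntegral, norm_real,
    Real.norm_of_nonneg (by positivity), mul_comm, ofReal_re]
  exact mul_le_mul_of_nonneg_left (Real.exp_le_exp.2 (sub_le_self _ hτl))
    (Real.rpow_nonneg hτt _)

theorem intervalIntegrable_rayIntegral_mul_sub_rpow_neg (ha : 0 < a) (hα : α < 1) (hν : 0 < ν)
    (hz : 0 < z.re) (ht : 0 ≤ t) :
    IntervalIntegrable (fun τ : ℝ => rayIntegral ν a z τ * ((t - τ) ^ (-α) : ℝ)) volume 0 t := by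
  have := (integrable_prod_rayIntegral_mul_sub_rpow_neg ha hα hν hz ht).integral_prod_left
  simp only [Function.uncurry_apply_pair, integral_mul_const] at this
  exact intervalIntegrable_iff.2 this

theorem integral_rayIntegral_mul_sub_rpow_neg (ha : 0 < a) (hα : α < 1) (hν : 0 < ν)
    (hz : 0 < z.re) (ht : 0 ≤ t) :
    ∫ τ in (0 : ℝ)..t, rayIntegral ν a z τ * ((t - τ) ^ (-α) : ℝ) =
      ∫ l : ℝ, cexp (a * l - z * cexp (ν * l)) * abelExp α t (-cexp l) := by
  have swap := intervalIntegral_integral_swap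
    (integrable_prod_rayIntegral_mul_sub_rpow_neg ha hα hν hz ht)
  simp only [integral_mul_const] at swap
  refine swap.trans (integral_congr_ae (ae_of_all _ fun l => ?_))
  simp only [abelExp, ← intervalIntegral.integral_const_mul, ← mul_assoc, ← exp_add]
  refine intervalIntegral.integral_congr fun τ _ => ?_
  ring_nf

theorem integrable_cexp_mul_abelExp_neg_cexp (ha : 0 < a) (hα : α < 1) (hν : 0 < ν)
    (hz : 0 < z.re) (ht : 0 ≤ t) :
    Integrable fun l : ℝ => cexp (a * l - z * cexp (ν * l)) * abelExp α t (-cexp l) := by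
  have hcont := (differentiable_abelExp hα ht).continuous
  refine ((integrable_exp_mul_sub_mul_exp ha hz hν).mul_const (t ^ (1 - α) / (1 - α))).mono'
    (by fun_prop) (ae_of_all _ fun l => ?_)
  have hnorm := norm_cexp_rayIntegral ν a l z 0
  have habel : ‖abelExp α t (-cexp l)‖ ≤ t ^ (1 - α) / (1 - α) := by
    simpa using norm_abelExp_le hα ht le_rfl (s := -cexp l) (by
      rw [← ofReal_exp, neg_re, ofReal_re]; exact neg_nonpos.2 (Real.exp_pos l).le)
  simp only [zero_mul, sub_zero, zero_re] at hnorm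
  rw [norm_mul, hnorm]
  gcongr

theorem re_mul_cexp_pi_mul_I_pos (hν₀ : 0 < ν) (hν₁ : ν < 1 / 2) (hx : 0 < x) :
    0 < (x * cexp (π * ν * I)).re := by
  rw [re_ofReal_mul, ← ofReal_mul, exp_ofReal_mul_I_re]
  refine mul_pos hx (Real.cos_pos_of_mem_Ioo ⟨?_, ?_⟩) <;> nlinarith [Real.pi_pos]

theorem cexp_mul_abelTail_add_pi_mul_I (a α ν t x : ℝ) (l : ℂ) :
    cexp (a * (l + π * I) - x * cexp (ν * (l + π * I))) * abelTail α t (l + π * I) =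
      Real.Gamma (1 - α) * (cexp (π * (a + α - 1) * I) *
        cexp ((a + α - 1) * l - x * cexp (π * ν * I) * cexp (ν * l) - t * cexp l)) -
      cexp (π * a * I) *
        (cexp (a * l - x * cexp (π * ν * I) * cexp (ν * l)) * abelExp α t (-cexp l)) := by
  rw [abelTail_add_pi_mul_I, mul_sub, mul_left_comm, ← exp_add, ← exp_add, ← mul_assoc, ← exp_add,
    mul_assoc (x : ℂ), ← exp_add]
  ring_nf

theorem Gamma_mul_im_rayIntegral (hα : α < 1) (ha : 1 - α < a) (hν₀ : 0 < ν) (hν₁ : ν < 1 / 2)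
    (hx : 0 < x) (ht : 0 < t) :
    Real.Gamma (1 - α) *
        (cexp (π * (a + α - 1) * I) * rayIntegral ν (a + α - 1) (x * cexp (π * ν * I)) t).im =
      (cexp (π * a * I) * ∫ τ in (0 : ℝ)..t,
        rayIntegral ν a (x * cexp (π * ν * I)) τ * ((t - τ) ^ (-α) : ℝ)).im := by
  have ha₀ : 0 < a := (sub_pos.2 hα).trans ha
  have hνπ : |ν * π| < π / 2 := by
    rw [abs_of_pos (by positivity)]
    nlinarith [Real.pi_pos]
  have hre : 0 < (x * cexp (π * ν * I)).re := re_mul_cexp_pi_mul_I_pos hν₀ hν₁ hx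
  have integral_real : (∫ l : ℝ, cexp (a * l - x * cexp (ν * l)) * abelTail α t l).im = 0 := by
    have integrand_real (l : ℝ) : cexp (a * l - x * cexp (ν * l)) * abelTail α t l =
        (Real.exp (a * l - x * Real.exp (ν * l)) * (abelTail α t l).re : ℝ) := by
      rw [ofReal_mul, ← conj_eq_iff_re.1 (conj_eq_iff_im.2 (im_abelTail_ofReal α t l))]
      push_cast
      simp
    rw [integral_congr_ae (ae_of_all _ integrand_real), integral_complex_ofReal, ofReal_im]
  have hray := integrable_rayIntegral (a := a + α - 1) (z := x * cexp (π * ν * I)) (s := t)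
    (by linarith) hν₀.le (by linarith) (by simpa using ht)
  have habel := integrable_cexp_mul_abelExp_neg_cexp ha₀ hα hν₀ hre ht.le
  rw [integral_cexp_mul_sub_mul_cexp_rotate (differentiable_abelTail hα ht.le)
    (fun w hw => norm_abelTail_le hα ht.le (by
      simpa [abs_of_pos Real.pi_pos] using abs_sub_left_of_mem_uIcc hw)) ha₀ ha hν₀ hνπ hx]
    at integral_real
  simp only [cexp_mul_abelTail_add_pi_mul_I] at integral_real
  push_cast at hray
  rw [integral_sub ((hray.const_mul _).const_mul _) (habel.const_mul _), integral_const_mul,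
    integral_const_mul, integral_const_mul, ← integral_rayIntegral_mul_sub_rpow_neg ha₀ hα hν₀ hre
    ht.le, sub_im, im_ofReal_mul, sub_eq_zero] at integral_real
  rw [← integral_real, rayIntegral]
  push_cast
  rfl

theorem integral_deriv_fundamentalSolution_mul_sub_rpow_neg (hν₀ : 0 < ν) (hν₁ : ν < 1 / 2)
    (hα : α < 1) (hx : 0 < x) (ht : 0 ≤ t) :
    ∫ τ in (0 : ℝ)..t, deriv (fundamentalSolution ν x) τ * (t - τ) ^ (-α) =
      -(1 / (2 * π) * (cexp (π * ν * I) * ∫ τ in (0 : ℝ)..t,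
        rayIntegral ν (ν + 1) (x * cexp (π * ν * I)) τ * ((t - τ) ^ (-α) : ℝ)).im) := by
  set ω := cexp (π * ν * I) with hω
  have hint : IntervalIntegrable (fun τ : ℝ =>
      ω * (rayIntegral ν (ν + 1) (x * ω) τ * ((t - τ) ^ (-α) : ℝ))) volume 0 t :=
    (intervalIntegrable_rayIntegral_mul_sub_rpow_neg (by linarith) hα hν₀
      (re_mul_cexp_pi_mul_I_pos hν₀ hν₁ hx) ht).const_mul ω
  rw [← intervalIntegral.integral_const_mul, ← imCLM_apply,
    ← imCLM.intervalIntegral_comp_comm hint, ← intervalIntegral.integral_const_mul,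
    ← intervalIntegral.integral_neg]
  refine intervalIntegral.integral_congr_ae (ae_of_all _ fun τ hτ => ?_)
  rw [uIoc_of_le ht] at hτ
  rw [deriv_fundamentalSolution_time hν₀ (by linarith) hτ.1, ← hω, imCLM_apply, ← mul_assoc ω,
    im_mul_ofReal]
  ring

theorem caputo_fundamentalSolution (hν₀ : 0 < ν) (hν₁ : ν < 1 / 2) (hx : 0 < x) (ht : 0 < t) :
    1 / Real.Gamma (1 - 2 * ν) *
        ∫ τ in (0 : ℝ)..t, deriv (fundamentalSolution ν x) τ * (t - τ) ^ (-(2 * ν)) =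
      deriv (deriv fun x => fundamentalSolution ν x t) x := by
  set ω := cexp (π * ν * I)
  have hΓ : Real.Gamma (1 - 2 * ν) ≠ 0 := (Real.Gamma_pos_of_pos (by linarith)).ne'
  have phase_left : cexp (π * (ν + 1 + 2 * ν - 1) * I) = ω ^ 3 := by
    rw [← exp_nat_mul]
    push_cast
    ring_nf
  have phase_right : cexp (π * (ν + 1) * I) = -ω := by
    rw [mul_add, mul_one, add_mul, exp_add, exp_pi_mul_I, mul_neg_one]
  have abel := Gamma_mul_im_rayIntegral (a := ν + 1) (α := 2 * ν) (by linarith) (by linarith)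
    hν₀ hν₁ hx ht
  push_cast at abel
  rw [phase_left, phase_right, show ν + 1 + 2 * ν - 1 = 3 * ν by ring, neg_mul, neg_im] at abel
  rw [integral_deriv_fundamentalSolution_mul_sub_rpow_neg hν₀ hν₁ (by linarith) hx ht.le,
    deriv_deriv_fundamentalSolution_space hν₀ (by linarith) ht, one_div, inv_mul_eq_iff_eq_mul₀ hΓ,
    ← mul_neg, ← abel, mul_left_comm]

end AbelRay

/-- For `0 < α < 1` and `ν = α/2`, the fundamental solution
`u(x,t) = (1/(2 t^ν)) M_ν(x/t^ν)` of the Cauchy problem satisfies, for `x > 0` and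
`t > 0`, the time-fractional diffusion equation with Caputo time derivative:
`(1/Γ(1-α)) ∫₀^t u_τ(x,τ) (t-τ)^(-α) dτ = u_xx(x,t)`. -/
theorem fractional_diffusion_fundamental_solution
    (α : ℝ) (hα0 : 0 < α) (hα1 : α < 1) (x t : ℝ) (hx : 0 < x) (ht : 0 < t) :
    (1 / Real.Gamma (1 - α)) *
        ∫ τ in (0:ℝ)..t,
          deriv (fun s : ℝ => 1 / (2 * s ^ (α/2)) * mWright (α/2) (x / s ^ (α/2))) τ
            * (t - τ) ^ (-α)
      = deriv
          (deriv (fun y : ℝ => 1 / (2 * t ^ (α/2)) * mWright (α/2) (y / t ^ (α/2)))) x := by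
  have hν₁ : α / 2 < 1 / 2 := by linarith
  have := caputo_fundamentalSolution (half_pos hα0) hν₁ hx ht
  rwa [mul_div_cancel₀ α two_ne_zero] at this
end
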